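/- Let ℓ be an integer with ⌊(ℓ−1)/3⌋ ≥ 1, and let c,σ,σ'>0 with σ<σ' and c > 1/⌊(ℓ−1)/3⌋. Let K'>0 be an integer and λ'>0. Then there exist λ>0 and integers N,K>0 with the following property: for every graph G with |G|≥N and every blockade A in G of length K, with linkage at most λ and shrinkage at most σ, such that A is not (|G|^{−c}, |G|^{−c})-divergent, there is an A-rainbow bi-grading (L, M, B) with height ℓ, such that B has length K', linkage at most λ' and shrinkage at most σ'. -/

import Mathlib

noncomputable section

namespace PurePairs

open SimpleGraph

variable {V W : Type*}

/-- A pure pair in `G`: a pair of disjoint vertex sets that are complete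
or anticomplete to each other. -/
def PurePair (G : SimpleGraph V) (A B : Set V) : Prop :=
  Disjoint A B ∧
    ((∀ a ∈ A, ∀ b ∈ B, G.Adj a b) ∨ (∀ a ∈ A, ∀ b ∈ B, ¬ G.Adj a b))

/-- `G` contains `H`: some induced subgraph of `G` is isomorphic to `H`. -/
def Contains (G : SimpleGraph V) (H : SimpleGraph W) : Prop :=
  Nonempty (H ↪g G)

/-- The congestion of a graph `H`: the maximum (here: supremum, together with `0`)
of `1 - (|J|-1)/|E(J)|` over all subgraphs `J` of `H` with at least one edge.
If `H` has no edges this is `0`. -/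
def congestion (H : SimpleGraph V) : ℝ :=
  sSup ({0} ∪ {x : ℝ | ∃ J : H.Subgraph, J.edgeSet.Nonempty ∧
    x = 1 - ((J.verts.ncard : ℝ) - 1) / (J.edgeSet.ncard : ℝ)})

/-- `A` is anticomplete to `B`: no edges between them. -/
def Anticomplete (G : SimpleGraph V) (A B : Set V) : Prop :=
  ∀ a ∈ A, ∀ b ∈ B, ¬ G.Adj a b

/-- `A` covers `B`: every vertex of `B` has a neighbour in `A`. -/
def Covers (G : SimpleGraph V) (A B : Set V) : Prop :=
  ∀ b ∈ B, ∃ a ∈ A, G.Adj a b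

/-- `G` is `ε`-sparse: every vertex has degree less than `ε|G|`. -/
def EpsSparse (G : SimpleGraph V) [Fintype V] (ε : ℝ) : Prop :=
  ∀ v : V, ((G.neighborSet v).ncard : ℝ) < ε * (Fintype.card V : ℝ)

/-- `G` is `(γ,δ)`-coherent: there is no pair of disjoint anticomplete sets `A`, `B`
with `|A| ≥ γ` and `|B| ≥ δ`. -/
def Coherent (G : SimpleGraph V) (γ δ : ℝ) : Prop :=
  ¬ ∃ A B : Set V, Disjoint A B ∧ Anticomplete G A B ∧
      γ ≤ (A.ncard : ℝ) ∧ δ ≤ (B.ncard : ℝ)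

/-- `N(X)`: the set of vertices with a neighbour in `X`. -/
def nbhd (G : SimpleGraph V) (X : Set V) : Set V :=
  {v | ∃ x ∈ X, G.Adj x v}

/-- A blockade: a family of nonempty pairwise disjoint vertex sets indexed by a
finite set of integers. -/
def IsBlockade (I : Finset ℤ) (A : ℤ → Set V) : Prop :=
  (∀ i ∈ I, (A i).Nonempty) ∧
    ∀ i ∈ I, ∀ j ∈ I, i ≠ j → Disjoint (A i) (A j)

/-- The blockade `(A i : i ∈ I)` is `(γ,δ)`-divergent. -/
def Divergent (G : SimpleGraph V) (I : Finset ℤ) (A : ℤ → Set V) (γ δ : ℝ) : Prop :=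
  ∃ i ∈ I, ∃ j ∈ I, i ≠ j ∧ ∃ X ⊆ A i, ∃ Y ⊆ A j,
    γ * ((A i).ncard : ℝ) ≤ (X.ncard : ℝ) ∧ δ * ((A j).ncard : ℝ) ≤ (Y.ncard : ℝ) ∧
    Anticomplete G X Y

/-- The blockade `(A i : i ∈ I)` is `τ`-expanding. -/
def Expanding (G : SimpleGraph V) (I : Finset ℤ) (A : ℤ → Set V) (τ : ℝ) : Prop :=
  ∀ i ∈ I, ∀ j ∈ I, i ≠ j → ∀ X ⊆ A i,
    min (τ * (X.ncard : ℝ) / ((A i).ncard : ℝ)) (1/4)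
      ≤ (((nbhd G X) ∩ A j).ncard : ℝ) / ((A j).ncard : ℝ)

/-- The linkage of the blockade `(A i : i ∈ I)` is at most `lam`. -/
def LinkageLE (G : SimpleGraph V) (I : Finset ℤ) (A : ℤ → Set V) (lam : ℝ) : Prop :=
  ∀ i ∈ I, ∀ j ∈ I, i ≠ j → ∀ v ∈ A i,
    ((G.neighborSet v ∩ A j).ncard : ℝ) ≤ lam * ((A j).ncard : ℝ)

/-- The shrinkage of the blockade `(A i : i ∈ I)` is at most `σ`, i.e. its width is at
least `|G|^{1-σ}`. -/
def ShrinkageLE [Fintype V] (I : Finset ℤ) (A : ℤ → Set V) (σ : ℝ) : Prop :=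
  ∀ i ∈ I, (Fintype.card V : ℝ) ^ (1 - σ) ≤ ((A i).ncard : ℝ)

/-- `(L 0, …, L k)` is a levelling in `G`. -/
def IsLevelling (G : SimpleGraph V) (L : ℕ → Set V) (k : ℕ) : Prop :=
  1 ≤ k ∧ (L 0).ncard = 1 ∧
  (∀ i ≤ k, ∀ j ≤ k, i ≠ j → Disjoint (L i) (L j)) ∧
  (∀ i, 1 ≤ i → i ≤ k → Covers G (L (i-1)) (L i)) ∧
  (∀ i, 2 ≤ i → i ≤ k → ∀ h, h + 2 ≤ i → Anticomplete G (L h) (L i))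

/-- The levelling `(L 0, …, L k)` reaches `C`, i.e. `(L 0, …, L k, C)` is a levelling. -/
def Reaches (G : SimpleGraph V) (L : ℕ → Set V) (k : ℕ) (C : Set V) : Prop :=
  IsLevelling G (fun i => if i = k + 1 then C else L i) (k + 1)

/-- The levelling `(L 0, …, L k)` is `(B i : i ∈ I)`-rainbow. -/
def RainbowLevelling (I : Finset ℤ) (B : ℤ → Set V) (L : ℕ → Set V) (k : ℕ) : Prop :=
  ∃ q : ℕ → ℤ, (∀ i ≤ k, q i ∈ I ∧ L i ⊆ B (q i)) ∧
    ∀ i ≤ k, ∀ j ≤ k, q i = q j → i = j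

/-- The levelling `(L 0, …, L k)` grades the blockade `(C j : j ∈ J)` (in some order). -/
def Grades (G : SimpleGraph V) (L : ℕ → Set V) (k : ℕ) (J : Finset ℤ) (C : ℤ → Set V) :
    Prop :=
  Reaches G L k (⋃ j ∈ J, C j) ∧
  ∃ e : ℕ → ℤ, (∀ g < J.card, e g ∈ J) ∧
    (∀ g < J.card, ∀ h < J.card, e g = e h → g = h) ∧
    ∀ g < J.card, ∃ Y ⊆ L k,
      (∀ h, g ≤ h → h < J.card → Covers G Y (C (e h))) ∧
      (∀ h, h < g → Anticomplete G Y (C (e h)))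

/-- The levelling `(L 0, …, L k)` grades the blockade `(C j : j ∈ J)` forwards. -/
def GradesFwd (G : SimpleGraph V) (L : ℕ → Set V) (k : ℕ) (J : Finset ℤ) (C : ℤ → Set V) :
    Prop :=
  Reaches G L k (⋃ j ∈ J, C j) ∧
  ∀ j ∈ J, ∃ Y ⊆ L k,
    (∀ i ∈ J, j ≤ i → Covers G Y (C i)) ∧
    (∀ i ∈ J, i < j → Anticomplete G Y (C i))

/-- The levelling `(L 0, …, L k)` grades the blockade `(C j : j ∈ J)` backwards. -/
def GradesBwd (G : SimpleGraph V) (L : ℕ → Set V) (k : ℕ) (J : Finset ℤ) (C : ℤ → Set V) :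
    Prop :=
  Reaches G L k (⋃ j ∈ J, C j) ∧
  ∀ j ∈ J, ∃ Y ⊆ L k,
    (∀ i ∈ J, i ≤ j → Covers G Y (C i)) ∧
    (∀ i ∈ J, j < i → Anticomplete G Y (C i))

/-- Two levellings are parallel. -/
def Parallel (G : SimpleGraph V) (L : ℕ → Set V) (k : ℕ) (M : ℕ → Set V) (m : ℕ) : Prop :=
  L 0 = M 0 ∧
  Disjoint (⋃ j ∈ Finset.Icc 1 m, M j) (⋃ i ∈ Finset.Icc 1 k, L i) ∧
  Anticomplete G (⋃ j ∈ Finset.Icc 1 m, M j) (⋃ i ∈ Finset.Icc 1 k, L i)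

/-- `(L, M, C)` is a bi-levelling, where `L` has height `k` and `M` has height `m`:
`C` is a blockade, `L, M` are parallel levellings both reaching the union of the
blocks of `C`, and `L` grades `C` forwards. Its height is `k + m` and its length is
the length of `C`. -/
def IsBiLevelling (G : SimpleGraph V) (L : ℕ → Set V) (k : ℕ) (M : ℕ → Set V) (m : ℕ)
    (J : Finset ℤ) (C : ℤ → Set V) : Prop :=
  IsBlockade J C ∧ IsLevelling G L k ∧ IsLevelling G M m ∧ Parallel G L k M m ∧
    Reaches G M m (⋃ j ∈ J, C j) ∧ GradesFwd G L k J C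

/-- A bi-grading: a bi-levelling in which `M` also grades `C` backwards. -/
def IsBiGrading (G : SimpleGraph V) (L : ℕ → Set V) (k : ℕ) (M : ℕ → Set V) (m : ℕ)
    (J : Finset ℤ) (C : ℤ → Set V) : Prop :=
  IsBiLevelling G L k M m J C ∧ GradesBwd G M m J C

/-- The bi-levelling `(L, M, C)` is `(A i : i ∈ I)`-rainbow: each block of `C`, each
level of `L`, and each level of `M` other than `M 0 = L 0` is included in a block of
`A`, and distinct such sets lie in distinct blocks. -/
def RainbowBiLevelling (I : Finset ℤ) (A : ℤ → Set V)
    (L : ℕ → Set V) (k : ℕ) (M : ℕ → Set V) (m : ℕ)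
    (J : Finset ℤ) (C : ℤ → Set V) : Prop :=
  ∃ (qc : ℤ → ℤ) (ql qm : ℕ → ℤ),
    (∀ j ∈ J, qc j ∈ I ∧ C j ⊆ A (qc j)) ∧
    (∀ i ≤ k, ql i ∈ I ∧ L i ⊆ A (ql i)) ∧
    (∀ i, 1 ≤ i → i ≤ m → qm i ∈ I ∧ M i ⊆ A (qm i)) ∧
    (∀ j ∈ J, ∀ j' ∈ J, qc j = qc j' → j = j') ∧
    (∀ i ≤ k, ∀ i' ≤ k, ql i = ql i' → i = i') ∧
    (∀ i, 1 ≤ i → i ≤ m → ∀ i', 1 ≤ i' → i' ≤ m → qm i = qm i' → i = i') ∧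
    (∀ j ∈ J, ∀ i ≤ k, qc j ≠ ql i) ∧
    (∀ j ∈ J, ∀ i, 1 ≤ i → i ≤ m → qc j ≠ qm i) ∧
    (∀ i ≤ k, ∀ i', 1 ≤ i' → i' ≤ m → ql i ≠ qm i')

/-- Each block of `(C j : j ∈ J)` lies in a block of `(A i : i ∈ I)`; the `A`-size of
`C` is at least `η` when every block of `C` has size at least `η` times the size of the
block of `A` containing it. -/
def SizeGE (I : Finset ℤ) (A : ℤ → Set V) (J : Finset ℤ) (C : ℤ → Set V) (η : ℝ) : Prop :=
  ∀ j ∈ J, ∀ i ∈ I, C j ⊆ A i → η * ((A i).ncard : ℝ) ≤ ((C j).ncard : ℝ)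

/-- A `(B i : i ∈ I)`-rainbow induced path `p 0 - p 1 - ⋯ - p n` in `G`. -/
def RainbowPath (G : SimpleGraph V) (I : Finset ℤ) (B : ℤ → Set V)
    (n : ℕ) (p : ℕ → V) : Prop :=
  (∀ i ≤ n, ∀ j ≤ n, p i = p j → i = j) ∧
  (∀ i < n, G.Adj (p i) (p (i+1))) ∧
  (∀ i j, i + 1 < j → j ≤ n → ¬ G.Adj (p i) (p j)) ∧
  ∃ q : ℕ → ℤ, (∀ i ≤ n, q i ∈ I ∧ p i ∈ B (q i)) ∧
    ∀ i ≤ n, ∀ j ≤ n, q i = q j → i = j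

/-- A `(B i : i ∈ I)`-rainbow copy of `H` in `G`: an induced copy of `H` with each
vertex in a different block. -/
def RainbowCopy (G : SimpleGraph V) (I : Finset ℤ) (B : ℤ → Set V)
    (H : SimpleGraph W) : Prop :=
  ∃ (f : H ↪g G) (q : W → ℤ), Function.Injective q ∧ ∀ w : W, q w ∈ I ∧ f w ∈ B (q w)

/-- `(N,K,σ,lam,c)` forces `H`. -/
def Forces (H : SimpleGraph W) (N K : ℕ) (σ lam c : ℝ) : Prop :=
  ∀ {V : Type} [Fintype V] (G : SimpleGraph V),
    Coherent G ((Fintype.card V : ℝ) ^ (1 - c)) ((Fintype.card V : ℝ) ^ (1 - c)) →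
    N ≤ Fintype.card V →
    ∀ (I : Finset ℤ) (A : ℤ → Set V), IsBlockade I A → I.card = K →
      ShrinkageLE I A σ → LinkageLE G I A lam →
      RainbowCopy G I A H

/-- `p 0 - ⋯ - p n` is a handle of length `n` that can be added to (the graph induced
on) `S` inside the ambient graph `H`: an induced path of `H[S ∪ p]` of length at least
two whose ends lie in `S`, whose internal vertices avoid `S` and have degree two in
`H[S ∪ p]`. -/
def IsHandle (H : SimpleGraph V) (S : Set V) (n : ℕ) (p : ℕ → V) : Prop :=
  2 ≤ n ∧
  (∀ i ≤ n, ∀ j ≤ n, p i = p j → i = j) ∧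
  p 0 ∈ S ∧ p n ∈ S ∧
  (∀ i, 0 < i → i < n → p i ∉ S) ∧
  (∀ i < n, H.Adj (p i) (p (i+1))) ∧
  (∀ i j, i + 1 < j → j ≤ n → ¬ H.Adj (p i) (p j)) ∧
  (∀ i, 0 < i → i < n → ∀ w, (w ∈ S ∨ ∃ j ≤ n, w = p j) → H.Adj (p i) w →
    w = p (i-1) ∨ w = p (i+1))

/-- The vertex sets `S` such that the induced subgraph `H[S]` can be built, starting
from the two-vertex graph with no edges, by repeatedly adding handles of length at
least `β`. -/
inductive BuildableOn (H : SimpleGraph V) (β : ℕ) : Set V → Prop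
  | base (u v : V) (huv : u ≠ v) (hadj : ¬ H.Adj u v) : BuildableOn H β {u, v}
  | handle (S : Set V) (n : ℕ) (p : ℕ → V) (hS : BuildableOn H β S)
      (hh : IsHandle H S n p) (hn : β ≤ n) :
      BuildableOn H β (S ∪ {w | ∃ j ≤ n, w = p j})

/-- `H` is `β`-buildable. -/
def Buildable [Fintype V] (H : SimpleGraph V) (β : ℕ) : Prop :=
  BuildableOn H β Set.univ

/-- The vertex sets `S` such that the induced subgraph `H[S]` can be built, starting
from the null graph, by repeatedly adding a subleaf or a handle of length at least
`β`. -/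
inductive WeaklyBuildableOn (H : SimpleGraph V) (β : ℕ) : Set V → Prop
  | empty : WeaklyBuildableOn H β ∅
  | subleaf (S : Set V) (v : V) (hv : v ∉ S) (hdeg : (S ∩ H.neighborSet v).ncard ≤ 1)
      (hS : WeaklyBuildableOn H β S) : WeaklyBuildableOn H β (insert v S)
  | handle (S : Set V) (n : ℕ) (p : ℕ → V) (hS : WeaklyBuildableOn H β S)
      (hh : IsHandle H S n p) (hn : β ≤ n) :
      WeaklyBuildableOn H β (S ∪ {w | ∃ j ≤ n, w = p j})

/-- `H` is weakly `β`-buildable. -/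
def WeaklyBuildable [Fintype V] (H : SimpleGraph V) (β : ℕ) : Prop :=
  WeaklyBuildableOn H β Set.univ

/-!
Fix a vertex `z` of the least block, and suppose that large parts of the blocks expand into each
other by a factor `|G| ^ a`, where `1 / s < a < c` and `s = ⌊(ℓ - 1) / 3⌋`; non-divergence provides
such parts. Grow levels from `z`, each inside a new block, and always pass to parts of the remaining
blocks that are anticomplete to all levels but the last. While the last level covers only a small
fraction of every remaining block, this fraction gains a factor of about `|G| ^ a` with each level.
It starts at `1 / |G|` or more, so after `s` steps the last level covers half of every remaining
block, and it grades large parts of these blocks in some order.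

Growing again from `z`, now inside the graded parts, yields an induced path `z = p₀, …, p_{s + 1}`.
One levelling of the bi-grading starts at `p_{s + 1}`, walks back along this path, and leaves it at
the last possible vertex for the levels of the first growth, which it enters as late as possible;
it ends in the sets that grade forwards, and its height is at most `2 s + 1`. The other levelling is
grown from `p_{s + 1}` inside the blocks graded forwards. It may take any number of levels from `s`
on, so the two heights can be made to add up to `ℓ ≥ 3 s + 1`, and its last level grades large parts
of the remaining blocks backwards.

Up to constants, a block loses only a factor `|G| ^ (2 / r)` in all, and `r` may be chosen so large
that `σ' - σ` absorbs this loss.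
-/

local notation "♯" S:max => (Set.ncard S : ℝ)

section Basics

section Size

lemma cast_ncard_union_le (S T : Set V) : ♯(S ∪ T) ≤ ♯S + ♯T := by
  exact_mod_cast Set.ncard_union_le S T

lemma cast_ncard_biUnion_le {ι : Type*} (s : Finset ι) (f : ι → Set V) :
    ♯(⋃ i ∈ s, f i) ≤ ∑ i ∈ s, ♯(f i) := by
  exact_mod_cast Finset.set_ncard_biUnion_le s f

variable [Finite V] {S T : Set V}

lemma cast_ncard_mono (h : S ⊆ T) : ♯S ≤ ♯T := by
  exact_mod_cast Set.ncard_le_ncard h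

lemma cast_ncard_inter_add_sdiff (S T : Set V) : ♯(T ∩ S) + ♯(S \ T) = ♯S := by
  rw [Set.inter_comm]
  exact_mod_cast Set.ncard_inter_add_ncard_sdiff_eq_ncard S T

lemma cast_ncard_pos : 0 < ♯S ↔ S.Nonempty := by
  rw [Nat.cast_pos, Set.ncard_pos]

lemma one_le_cast_ncard (h : S.Nonempty) : 1 ≤ ♯S := by
  exact_mod_cast (Set.ncard_pos (Set.toFinite S)).2 h

lemma cast_ncard_le_card (S : Set V) : ♯S ≤ Nat.card V := by
  rw [← Set.ncard_univ]
  exact cast_ncard_mono S.subset_univ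

lemma nonempty_of_mul_le {C x : ℝ} (hx : 0 < x) (h : x ≤ C * ♯S) : S.Nonempty := by
  rw [← cast_ncard_pos]
  refine (Nat.cast_nonneg _).lt_of_ne fun h0 => ?_
  rw [← h0, mul_zero] at h
  exact absurd h hx.not_ge

end Size

variable {G : SimpleGraph V} {S T S' T' : Set V}

lemma mem_nbhd_singleton {u v : V} : v ∈ nbhd G {u} ↔ G.Adj u v := by
  simp only [nbhd, Set.mem_singleton_iff, exists_eq_left, Set.mem_ofPred_eq]

lemma nbhd_singleton (v : V) : nbhd G {v} = G.neighborSet v :=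
  Set.ext fun _ => mem_nbhd_singleton

lemma nbhd_union (S T : Set V) : nbhd G (S ∪ T) = nbhd G S ∪ nbhd G T := by
  ext v
  simp only [nbhd, Set.mem_union, Set.mem_ofPred_eq, or_and_right, exists_or]

@[simp] lemma nbhd_empty : nbhd G ∅ = ∅ := by
  ext v
  simp [nbhd]

lemma covers_iff : Covers G S T ↔ T ⊆ nbhd G S := Iff.rfl

lemma anticomplete_iff : Anticomplete G S T ↔ Disjoint (nbhd G S) T := by
  rw [Set.disjoint_left]
  exact ⟨fun h v ⟨x, hx, hxv⟩ hv => h x hx v hv hxv, fun h x hx v hv hxv => h ⟨x, hx, hxv⟩ hv⟩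

lemma Covers.mono (h : Covers G S T) (hS : S ⊆ S') (hT : T' ⊆ T) : Covers G S' T' :=
  fun v hv => let ⟨u, hu, huv⟩ := h v (hT hv); ⟨u, hS hu, huv⟩

lemma Anticomplete.mono (h : Anticomplete G S T) (hS : S' ⊆ S) (hT : T' ⊆ T) :
    Anticomplete G S' T' := fun u hu v hv => h u (hS hu) v (hT hv)

lemma Anticomplete.symm (h : Anticomplete G S T) : Anticomplete G T S :=
  fun u hu v hv huv => h v hv u hu huv.symm

lemma anticomplete_sdiff_nbhd (S T : Set V) : Anticomplete G S (T \ nbhd G S) :=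
  anticomplete_iff.2 Set.disjoint_sdiff_right

end Basics

/-- The one-sided form of non-divergence for a single pair of sets: every `ν`-fraction of `X`
covers all but a `ν`-fraction of `Y`. -/
def NonDivergentPair (G : SimpleGraph V) (ν : ℝ) (X Y : Set V) : Prop :=
  ∀ S ⊆ X, ν * ♯X ≤ ♯S → ♯(Y \ nbhd G S) < ν * ♯Y

/-- The `τ`-expansion condition of `Expanding` for a single pair of sets, with the denominator
`|Y|` cleared. -/
def ExpandsInto (G : SimpleGraph V) (τ : ℝ) (X Y : Set V) : Prop :=
  ∀ S ⊆ X, min (τ * ♯S / ♯X) (1 / 4) * ♯Y ≤ ♯(nbhd G S ∩ Y)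

/-- The linkage condition of `LinkageLE` for a single pair of sets. -/
def LinkedLE (G : SimpleGraph V) (lam : ℝ) (X Y : Set V) : Prop :=
  ∀ v ∈ X, ♯(G.neighborSet v ∩ Y) ≤ lam * ♯Y

section Pairs
variable {G : SimpleGraph V} {X Y X' Y' : Set V} {ν ν' lam lam' κ : ℝ}

lemma NonDivergentPair.mono (h : NonDivergentPair G ν X Y) (hν : ν ≤ ν') :
    NonDivergentPair G ν' X Y := fun S hS hcard =>
  (h S hS (le_trans (by gcongr) hcard)).trans_le (by gcongr)

lemma LinkedLE.mono (h : LinkedLE G lam X Y) (hl : lam ≤ lam') (hX : X' ⊆ X) :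
    LinkedLE G lam' X' Y := fun v hv => (h v (hX hv)).trans (by gcongr)

lemma mul_ncard_le_div_mul (hν : 0 ≤ ν) (hκ : 0 < κ) (h : κ * ♯X ≤ ♯X') :
    ν * ♯X ≤ ν / κ * ♯X' := by
  calc ν * ♯X = ν / κ * (κ * ♯X) := by field_simp
    _ ≤ ν / κ * ♯X' := by gcongr

variable [Finite V]

lemma NonDivergentPair.sub (h : NonDivergentPair G ν X Y) (hν : 0 ≤ ν) (hκ : 0 < κ)
    (hX : X' ⊆ X) (hY : Y' ⊆ Y) (hX' : κ * ♯X ≤ ♯X') (hY' : κ * ♯Y ≤ ♯Y') :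
    NonDivergentPair G (ν / κ) X' Y' := fun S hS hcard =>
  calc ♯(Y' \ nbhd G S) ≤ ♯(Y \ nbhd G S) := cast_ncard_mono (Set.sdiff_subset_sdiff_left hY)
    _ < ν * ♯Y := h S (hS.trans hX) ((mul_ncard_le_div_mul hν hκ hX').trans hcard)
    _ ≤ ν / κ * ♯Y' := mul_ncard_le_div_mul hν hκ hY'

lemma LinkedLE.sub (h : LinkedLE G lam X Y) (hl : 0 ≤ lam) (hκ : 0 < κ)
    (hX : X' ⊆ X) (hY : Y' ⊆ Y) (hY' : κ * ♯Y ≤ ♯Y') : LinkedLE G (lam / κ) X' Y' := fun v hv =>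
  calc ♯(G.neighborSet v ∩ Y') ≤ ♯(G.neighborSet v ∩ Y) :=
        cast_ncard_mono (Set.inter_subset_inter_right _ hY)
    _ ≤ lam * ♯Y := h v (hX hv)
    _ ≤ lam / κ * ♯Y' := mul_ncard_le_div_mul hl hκ hY'

end Pairs

section Cleaning
variable {ι : Type*} [DecidableEq ι] {G : SimpleGraph V} {J : Finset ι} {X : ι → Set V}
  {D : ι → ι → Set V} {γ τ : ℝ} {i j : ι} {S : Set V}

/-- What is left of the block `X j` once the sets `D j k` have been removed from it. -/
def residue (J : Finset ι) (X : ι → Set V) (D : ι → ι → Set V) (j : ι) : Set V :=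
  X j \ ⋃ k ∈ J.erase j, D j k

/-- `D i j` is a small subset of `X i` that expands poorly into the residue of `X j`. Residues of a
maximal such system are pairwise expanding. -/
def IsPoorSystem (G : SimpleGraph V) (γ τ : ℝ) (J : Finset ι) (X : ι → Set V)
    (D : ι → ι → Set V) : Prop :=
  ∀ i ∈ J, ∀ j ∈ J, i ≠ j → D i j ⊆ X i ∧ ♯(D i j) ≤ γ * ♯(X i) ∧
    ♯(nbhd G (D i j) ∩ residue J X D j) ≤ 2 * τ * ♯(D i j) * (♯(X j) / ♯(X i))

lemma residue_subset : residue J X D j ⊆ X j := Set.sdiff_subset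

lemma residue_anti {D' : ι → ι → Set V} (h : ∀ i j, D i j ⊆ D' i j) :
    residue J X D' j ⊆ residue J X D j :=
  Set.sdiff_subset_sdiff_right (Set.iUnion₂_mono fun k _ => h j k)

lemma disjoint_of_subset_residue (hj : j ∈ J) (hij : i ≠ j) (hS : S ⊆ residue J X D i) :
    Disjoint (D i j) S :=
  (Set.disjoint_sdiff_right.mono_right hS).mono_left
    (Set.subset_biUnion_of_mem (u := D i) (Finset.mem_coe.2 (Finset.mem_erase.2 ⟨hij.symm, hj⟩)))

variable [Finite V]

lemma IsPoorSystem.half_le_residue (hD : IsPoorSystem G γ τ J X D) (hγ : 0 ≤ γ)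
    (hJ : J.card * γ ≤ 1 / 2) (hj : j ∈ J) : 1 / 2 * ♯(X j) ≤ ♯(residue J X D j) := by
  have hremoved : ♯((⋃ k ∈ J.erase j, D j k) ∩ X j) ≤ 1 / 2 * ♯(X j) :=
    calc ♯((⋃ k ∈ J.erase j, D j k) ∩ X j) ≤ ∑ k ∈ J.erase j, ♯(D j k) :=
          (cast_ncard_mono Set.inter_subset_left).trans (cast_ncard_biUnion_le _ _)
      _ ≤ ∑ _ ∈ J.erase j, γ * ♯(X j) := Finset.sum_le_sum fun _ hk =>
          (hD j hj _ (Finset.mem_of_mem_erase hk) (Finset.ne_of_mem_erase hk).symm).2.1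
      _ ≤ J.card * γ * ♯(X j) := by
          rw [Finset.sum_const, nsmul_eq_mul, ← mul_assoc]
          gcongr
          exact Finset.erase_subset _ _
      _ ≤ 1 / 2 * ♯(X j) := by gcongr
  have hsplit := cast_ncard_inter_add_sdiff (X j) (⋃ k ∈ J.erase j, D j k)
  unfold residue
  linarith

lemma IsPoorSystem.update (hD : IsPoorSystem G γ τ J X D) (hi : i ∈ J) (hj : j ∈ J) (hij : i ≠ j)
    (hS : S ⊆ residue J X D i) (hsmall : ♯(D i j ∪ S) ≤ γ * ♯(X i))
    (hpoor : ♯(nbhd G S ∩ residue J X D j) ≤ 2 * τ * ♯S * (♯(X j) / ♯(X i))) :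
    IsPoorSystem G γ τ J X (fun a b => if a = i ∧ b = j then D i j ∪ S else D a b) := by
  set D' : ι → ι → Set V := fun a b => if a = i ∧ b = j then D i j ∪ S else D a b with hD'
  have hanti (b) : residue J X D' b ⊆ residue J X D b := residue_anti fun a b => by
    simp only [hD']
    split_ifs with h
    · exact h.1 ▸ h.2 ▸ Set.subset_union_left
    · exact subset_rfl
  intro a ha b hb hab
  by_cases h : a = i ∧ b = j
  · obtain ⟨rfl, rfl⟩ := h
    obtain ⟨hsub, -, hexp⟩ := hD a ha b hb hab
    have hDab : D' a b = D a b ∪ S := if_pos ⟨rfl, rfl⟩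
    rw [hDab]
    refine ⟨Set.union_subset hsub (hS.trans residue_subset), hsmall, ?_⟩
    calc ♯(nbhd G (D a b ∪ S) ∩ residue J X D' b)
        ≤ ♯((nbhd G (D a b) ∩ residue J X D b) ∪ (nbhd G S ∩ residue J X D b)) := by
          rw [← Set.union_inter_distrib_right, ← nbhd_union]
          exact cast_ncard_mono (Set.inter_subset_inter_right _ (hanti b))
      _ ≤ 2 * τ * ♯(D a b) * (♯(X b) / ♯(X a)) + 2 * τ * ♯S * (♯(X b) / ♯(X a)) :=
          (cast_ncard_union_le _ _).trans (add_le_add hexp hpoor)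
      _ = 2 * τ * ♯(D a b ∪ S) * (♯(X b) / ♯(X a)) := by
          rw [Set.ncard_union_eq (disjoint_of_subset_residue hb hab hS)]
          push_cast
          ring
  · obtain ⟨hsub, hcard, hexp⟩ := hD a ha b hb hab
    have hDab : D' a b = D a b := if_neg h
    rw [hDab]
    exact ⟨hsub, hcard, (cast_ncard_mono (Set.inter_subset_inter_right _ (hanti b))).trans hexp⟩

/-- A poorly expanding set cannot make `D i j` large, by non-divergence. -/
lemma IsPoorSystem.card_union_le (hD : IsPoorSystem G γ (1 / (16 * γ)) J X D) (hγ : 0 < γ)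
    (hγ8 : γ ≤ 1 / 8) (hJ : J.card * γ ≤ 1 / 2) (hi : i ∈ J) (hj : j ∈ J) (hij : i ≠ j)
    (hnd : NonDivergentPair G γ (X i) (X j)) (hS : S ⊆ residue J X D i)
    (hpoor : ♯(nbhd G S ∩ residue J X D j) ≤ 1 / 4 * ♯(residue J X D j)) :
    ♯(D i j ∪ S) ≤ γ * ♯(X i) := by
  by_contra! hlarge
  obtain ⟨hsub, hcard, hexp⟩ := hD i hi j hj hij
  have huncovered : ♯(residue J X D j \ nbhd G (D i j ∪ S)) < γ * ♯(X j) :=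
    (cast_ncard_mono (Set.sdiff_subset_sdiff_left residue_subset)).trans_lt
    (hnd (D i j ∪ S) (Set.union_subset hsub (hS.trans residue_subset)) hlarge.le)
  have hcovered : ♯(nbhd G (D i j ∪ S) ∩ residue J X D j) ≤
      1 / 8 * ♯(X j) + 1 / 4 * ♯(residue J X D j) :=
    calc ♯(nbhd G (D i j ∪ S) ∩ residue J X D j)
        ≤ ♯(nbhd G (D i j) ∩ residue J X D j) + ♯(nbhd G S ∩ residue J X D j) := by
          rw [nbhd_union, Set.union_inter_distrib_right]
          exact cast_ncard_union_le _ _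
      _ ≤ 2 * (1 / (16 * γ)) * (γ * ♯(X i)) * (♯(X j) / ♯(X i)) + 1 / 4 * ♯(residue J X D j) := by
          refine add_le_add (hexp.trans ?_) hpoor
          gcongr
      _ = 1 / 8 * (♯(X i) / ♯(X i)) * ♯(X j) + 1 / 4 * ♯(residue J X D j) := by
          field_simp
          ring
      _ ≤ 1 / 8 * ♯(X j) + 1 / 4 * ♯(residue J X D j) := by
          gcongr
          exact mul_le_of_le_one_right (by norm_num) (div_self_le_one _)
  have hsplit := cast_ncard_inter_add_sdiff (residue J X D j) (nbhd G (D i j ∪ S))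
  have hhalf := hD.half_le_residue hγ.le hJ hj
  have hγX : γ * ♯(X j) ≤ 1 / 8 * ♯(X j) := by gcongr
  linarith

lemma exists_maximal_isPoorSystem (hγ : 0 ≤ γ) :
    ∃ D, IsPoorSystem G γ τ J X D ∧ ∀ D', IsPoorSystem G γ τ J X D' →
      (∀ i j, D i j ⊆ D' i j) → ∀ i ∈ J, ∀ j ∈ J, D' i j ⊆ D i j := by
  obtain ⟨D, hD, hmax⟩ := Set.Finite.exists_maximalFor'
    (fun (D : ι → ι → Set V) (p : J × J) => D p.1 p.2) {D | IsPoorSystem G γ τ J X D}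
    (Set.toFinite _) ⟨fun _ _ => ∅, fun i _ j _ _ =>
      ⟨Set.empty_subset _, by rw [Set.ncard_empty, Nat.cast_zero]; positivity, by simp⟩⟩
  exact ⟨D, hD, fun D' hD' hle i hi j hj =>
    hmax hD' (fun p => hle p.1 p.2) (⟨i, hi⟩, ⟨j, hj⟩)⟩

end Cleaning

theorem exists_pairwise_expandsInto [Finite V] {ι : Type*} {G : SimpleGraph V} {J : Finset ι}
    {X : ι → Set V} {γ : ℝ} (hγ : 0 < γ) (hγ8 : γ ≤ 1 / 8) (hJ : J.card * γ ≤ 1 / 2)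
    (hne : ∀ i ∈ J, (X i).Nonempty)
    (hnd : ∀ i ∈ J, ∀ j ∈ J, i ≠ j → NonDivergentPair G γ (X i) (X j)) :
    ∃ Y : ι → Set V, (∀ i ∈ J, Y i ⊆ X i ∧ 1 / 2 * ♯(X i) ≤ ♯(Y i)) ∧
      ∀ i ∈ J, ∀ j ∈ J, i ≠ j → ExpandsInto G (1 / (16 * γ)) (Y i) (Y j) := by
  classical
  obtain ⟨D, hD, hmax⟩ :=
    exists_maximal_isPoorSystem (G := G) (τ := 1 / (16 * γ)) (J := J) (X := X) hγ.le
  refine ⟨residue J X D, fun i hi => ⟨residue_subset, hD.half_le_residue hγ.le hJ hi⟩, ?_⟩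
  intro i hi j hj hij S hS
  by_contra! hpoor
  have hXi : 0 < ♯(X i) := cast_ncard_pos.2 (hne i hi)
  have hhalf := hD.half_le_residue hγ.le hJ hi
  have hsub : residue J X D j ⊆ X j := residue_subset
  have hquarter : ♯(nbhd G S ∩ residue J X D j) ≤ 1 / 4 * ♯(residue J X D j) :=
    hpoor.le.trans (by gcongr; exact min_le_right _ _)
  have hlinear : ♯(nbhd G S ∩ residue J X D j) ≤
      2 * (1 / (16 * γ)) * ♯S * (♯(X j) / ♯(X i)) :=
    calc ♯(nbhd G S ∩ residue J X D j)
        ≤ 1 / (16 * γ) * ♯S / (1 / 2 * ♯(X i)) * ♯(X j) :=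
          hpoor.le.trans (by
            gcongr
            · exact (min_le_left _ _).trans (by gcongr)
            · exact Set.toFinite _)
      _ = 2 * (1 / (16 * γ)) * ♯S * (♯(X j) / ♯(X i)) := by field_simp
  have hsmall := hD.card_union_le hγ hγ8 hJ hi hj hij (hnd i hi j hj hij) hS hquarter
  have hSD : S ⊆ D i j := by
    have := hmax _ (hD.update hi hj hij hS hsmall hlinear)
      (fun a b => by
        split_ifs with h
        · exact h.1 ▸ h.2 ▸ Set.subset_union_left
        · exact subset_rfl) i hi j hj
    rw [if_pos ⟨rfl, rfl⟩] at this
    exact Set.subset_union_right.trans this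
  have hSempty : S = ∅ := (disjoint_of_subset_residue hj hij hS).symm.eq_bot_of_le hSD
  simp [hSempty] at hpoor

section Counting

lemma exists_pow_le_le_pow_succ {Λ x : ℝ} {r : ℕ} (hr : r ≠ 0) (hx1 : 1 ≤ x) (hx : x ≤ Λ ^ r) :
    ∃ k < r, Λ ^ k ≤ x ∧ x ≤ Λ ^ (k + 1) := by
  have hex : ∃ k, x ≤ Λ ^ (k + 1) := ⟨r - 1, by rwa [Nat.sub_add_cancel (by omega)]⟩
  classical
  refine ⟨Nat.find hex, ?_, ?_, Nat.find_spec hex⟩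
  · exact (Nat.find_le (n := r - 1) (by rwa [Nat.sub_add_cancel (by omega)])).trans_lt (by omega)
  · rcases h0 : Nat.find hex with _ | k
    · simpa using hx1
    · exact (not_le.1 (Nat.find_min hex (m := k) (by omega))).le

lemma exists_ncard_le_card_mul [Finite V] {κ : Type*} {S : Finset κ} {D : Set V} {E : κ → Set V}
    (hS : S.Nonempty) (h : D ⊆ ⋃ k ∈ S, E k) : ∃ k ∈ S, ♯D ≤ S.card * ♯(E k ∩ D) := by
  by_contra! hsmall
  have hS0 : (0 : ℝ) < S.card := by exact_mod_cast hS.card_pos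
  have hcover : ♯D ≤ ∑ k ∈ S, ♯(E k ∩ D) := by
    refine le_trans (cast_ncard_mono ?_) (cast_ncard_biUnion_le S fun k => E k ∩ D)
    rw [← Set.iUnion₂_inter]
    exact Set.subset_inter h subset_rfl
  have hsum := Finset.sum_lt_sum_of_nonempty hS hsmall
  rw [← Finset.mul_sum, Finset.sum_const, nsmul_eq_mul] at hsum
  exact hcover.not_gt (lt_of_mul_lt_mul_left hsum hS0.le)

lemma exists_erase_min {ι : Type*} [LinearOrder ι] {R : Finset ι} {k : ℕ} (hR : R.card = k + 1) :
    ∃ q ∈ R, ∃ J ⊆ R, J.card = k ∧ ∀ t ∈ J, q < t := by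
  have hne : R.Nonempty := Finset.card_pos.1 (by omega)
  refine ⟨R.min' hne, R.min'_mem hne, R.erase (R.min' hne), R.erase_subset _, ?_, fun t ht => ?_⟩
  · rw [Finset.card_erase_of_mem (R.min'_mem hne), hR, Nat.add_sub_cancel]
  · exact R.min'_lt_of_mem_erase_min' hne ht

lemma sum_ncard_neighborSet_inter_comm [Finite V] (G : SimpleGraph V) (T U : Set V) :
    ∑ z ∈ T.toFinite.toFinset, ♯(G.neighborSet z ∩ U) =
      ∑ u ∈ U.toFinite.toFinset, ♯(G.neighborSet u ∩ T) := by
  classical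
  have hcard (S : Set V) (v : V) :
      (G.neighborSet v ∩ S).ncard = (S.toFinite.toFinset.filter (G.Adj v)).card := by
    rw [← Set.ncard_coe_finset]
    congr 1
    ext u
    simp [and_comm]
  have := Finset.sum_card_bipartiteAbove_eq_sum_card_bipartiteBelow
    (s := T.toFinite.toFinset) (t := U.toFinite.toFinset) G.Adj
  simp only [Finset.bipartiteAbove, Finset.bipartiteBelow] at this
  simp_rw [hcard]
  rw [← Nat.cast_sum, ← Nat.cast_sum, this]
  simp_rw [G.adj_comm]

lemma exists_weight_pos_and_sum_le {α ι : Type*} {T : Finset α} {R : Finset ι} {w : ι → α → ℝ}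
    {t₀ : ι} {a b C : ℝ} (hw : ∀ t z, 0 ≤ w t z) (hupper : ∀ t ∈ R, ∑ z ∈ T, w t z ≤ b)
    (hlower : a ≤ ∑ z ∈ T, w t₀ z) (hC : 0 ≤ C) (hab : R.card * b < C * a) :
    ∃ z ∈ T, 0 < w t₀ z ∧ ∑ t ∈ R, w t z ≤ C * w t₀ z := by
  by_contra! hlarge
  have hpointwise : ∀ z ∈ T, C * w t₀ z ≤ ∑ t ∈ R, w t z := fun z hz => by
    rcases (hw t₀ z).eq_or_lt with h | h
    · rw [← h, mul_zero]
      exact Finset.sum_nonneg fun t _ => hw t z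
    · exact (hlarge z hz h).le
  have htotal : C * a ≤ R.card * b :=
    calc C * a ≤ C * ∑ z ∈ T, w t₀ z := by gcongr
      _ ≤ ∑ z ∈ T, ∑ t ∈ R, w t z := by
          rw [Finset.mul_sum]
          exact Finset.sum_le_sum hpointwise
      _ = ∑ t ∈ R, ∑ z ∈ T, w t z := Finset.sum_comm
      _ ≤ R.card * b := by
          rw [← nsmul_eq_mul]
          exact Finset.sum_le_card_nsmul _ _ _ hupper
  exact htotal.not_gt hab

end Counting

/-- All vertices of `D` have roughly the same number of neighbours in `T`, namely between `Λ ^ k`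
and `Λ ^ (k + 1)`. -/
def HasDegreeScale (G : SimpleGraph V) (Λ : ℝ) (k : ℕ) (T D : Set V) : Prop :=
  ∀ u ∈ D, Λ ^ k ≤ ♯(G.neighborSet u ∩ T) ∧ ♯(G.neighborSet u ∩ T) ≤ Λ ^ (k + 1)

section DegreeScale
variable {ι : Type*} [Finite V] {G : SimpleGraph V} {T U : Set V} {J R : Finset ι} {D W : ι → Set V}
  {Λ μ : ℝ} {r k m : ℕ}

theorem exists_hasDegreeScale (hr : r ≠ 0) (hn : Nat.card V ≤ Λ ^ r)
    (hD : ∀ t ∈ J, Covers G T (D t)) (hJ : r * m ≤ J.card) :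
    ∃ k, ∃ R ⊆ J, R.card = m ∧ ∃ D' : ι → Set V, ∀ t ∈ R,
      D' t ⊆ D t ∧ ♯(D t) ≤ r * ♯(D' t) ∧ HasDegreeScale G Λ k T (D' t) := by
  classical
  let E (k : ℕ) : Set V :=
    {u | Λ ^ k ≤ ♯(G.neighborSet u ∩ T) ∧ ♯(G.neighborSet u ∩ T) ≤ Λ ^ (k + 1)}
  have hrange : (Finset.range r).Nonempty := Finset.nonempty_range_iff.2 hr
  have hscale (t : ι) : ∃ k, t ∈ J → k ∈ Finset.range r ∧ ♯(D t) ≤ r * ♯(E k ∩ D t) := by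
    by_cases ht : t ∈ J
    · obtain ⟨k, hk, hcard⟩ := exists_ncard_le_card_mul (E := E) hrange (D := D t) fun u hu => by
        obtain ⟨x, hx, hxu⟩ := hD t ht u hu
        obtain ⟨k, hk, hlow, hupp⟩ := exists_pow_le_le_pow_succ hr
          (one_le_cast_ncard (S := G.neighborSet u ∩ T) ⟨x, hxu.symm, hx⟩)
          ((cast_ncard_le_card _).trans hn)
        exact Set.mem_biUnion (Finset.mem_coe.2 (Finset.mem_range.2 hk)) ⟨hlow, hupp⟩
      rw [Finset.card_range] at hcard
      exact ⟨k, fun _ => ⟨hk, hcard⟩⟩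
    · exact ⟨0, fun h => absurd h ht⟩
  choose f hf using hscale
  obtain ⟨k, -, hk⟩ := Finset.exists_le_card_fiber_of_mul_le_card_of_maps_to
    (fun t ht => (hf t ht).1) hrange (by rwa [Finset.card_range])
  obtain ⟨R, hR, hRcard⟩ := Finset.exists_subset_card_eq hk
  refine ⟨k, R, hR.trans (Finset.filter_subset _ _), hRcard, fun t => E k ∩ D t, fun t ht => ?_⟩
  obtain ⟨htJ, rfl⟩ := Finset.mem_filter.1 (hR ht)
  exact ⟨Set.inter_subset_right, (hf t htJ).2, fun u hu => hu.1⟩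

lemma HasDegreeScale.sum_bounds (hU : HasDegreeScale G Λ k T U) :
    Λ ^ k * ♯U ≤ ∑ z ∈ T.toFinite.toFinset, ♯(G.neighborSet z ∩ U) ∧
      ∑ z ∈ T.toFinite.toFinset, ♯(G.neighborSet z ∩ U) ≤ Λ ^ (k + 1) * ♯U := by
  rw [sum_ncard_neighborSet_inter_comm, mul_comm _ (♯U), mul_comm _ (♯U),
    Set.ncard_eq_toFinset_card U, ← nsmul_eq_mul, ← nsmul_eq_mul]
  exact ⟨Finset.card_nsmul_le_sum _ _ _ fun u hu => (hU u (by simpa using hu)).1,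
    Finset.sum_le_card_nsmul _ _ _ fun u hu => (hU u (by simpa using hu)).2⟩

/-- The proportion of `D` covered by `Z`. -/
def coverFraction (G : SimpleGraph V) (Z D : Set V) : ℝ := ♯(nbhd G Z ∩ D) / ♯D

/-- `Z` covers at most half of each `D t`, and its total coverage is comparable with its coverage
of `D t₀`. A largest such `Z` is found greedily. -/
structure IsFairCover (G : SimpleGraph V) (T : Set V) (R : Finset ι) (D : ι → Set V) (C : ℝ)
    (t₀ : ι) (Z : Set V) : Prop where
  subset : Z ⊆ T
  sum_le : ∑ t ∈ R, coverFraction G Z (D t) ≤ C * coverFraction G Z (D t₀)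
  le_half : ∀ t ∈ R, ♯(nbhd G Z ∩ D t) ≤ 1 / 2 * ♯(D t)

lemma ncard_nbhd_insert_inter (G : SimpleGraph V) (z : V) (Z D : Set V) :
    ♯(nbhd G (Z ∪ {z}) ∩ D) = ♯(nbhd G Z ∩ D) + ♯(G.neighborSet z ∩ (D \ nbhd G Z)) := by
  have hdisj : Disjoint (nbhd G Z ∩ D) (G.neighborSet z ∩ (D \ nbhd G Z)) :=
    Set.disjoint_sdiff_right.mono Set.inter_subset_left Set.inter_subset_right
  rw [← Nat.cast_add, ← Set.ncard_union_eq hdisj, nbhd_union, nbhd_singleton]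
  congr 2
  ext v
  simp only [Set.mem_inter_iff, Set.mem_union, Set.mem_sdiff]
  tauto

lemma IsFairCover.exists_insert {t₀ : ι} {Z : Set V} (hΛ : 1 ≤ Λ) (ht₀ : t₀ ∈ R)
    (hZ : IsFairCover G T R D (2 * R.card * Λ) t₀ Z)
    (hscale : ∀ t ∈ R, HasDegreeScale G Λ k T (D t)) (hne : ∀ t ∈ R, (D t).Nonempty)
    (hlink : ∀ t ∈ R, LinkedLE G (1 / 4) T (D t))
    (hsmall : ∀ t ∈ R, ♯(nbhd G Z ∩ D t) < 1 / 4 * ♯(D t)) :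
    ∃ z, IsFairCover G T R D (2 * R.card * Λ) t₀ (Z ∪ {z}) ∧
      ♯(nbhd G Z ∩ D t₀) < ♯(nbhd G (Z ∪ {z}) ∩ D t₀) := by
  have hpos (t) (ht : t ∈ R) : 0 < ♯(D t) := cast_ncard_pos.2 (hne t ht)
  let w (t : ι) (z : V) : ℝ := ♯(G.neighborSet z ∩ (D t \ nbhd G Z)) / ♯(D t)
  have hsum (t) (ht : t ∈ R) := HasDegreeScale.sum_bounds
    (fun u hu => hscale t ht u hu.1 : HasDegreeScale G Λ k T (D t \ nbhd G Z))
  have hupper : ∀ t ∈ R, ∑ z ∈ T.toFinite.toFinset, w t z ≤ Λ ^ (k + 1) := fun t ht => by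
    rw [← Finset.sum_div, div_le_iff₀ (hpos t ht)]
    exact (hsum t ht).2.trans
      (mul_le_mul_of_nonneg_left (cast_ncard_mono Set.sdiff_subset) (by positivity))
  have hlower : 3 / 4 * Λ ^ k ≤ ∑ z ∈ T.toFinite.toFinset, w t₀ z := by
    rw [← Finset.sum_div, le_div_iff₀ (hpos t₀ ht₀)]
    have huncovered : 3 / 4 * ♯(D t₀) ≤ ♯(D t₀ \ nbhd G Z) := by
      linarith [cast_ncard_inter_add_sdiff (D t₀) (nbhd G Z), hsmall t₀ ht₀]
    calc 3 / 4 * Λ ^ k * ♯(D t₀) = Λ ^ k * (3 / 4 * ♯(D t₀)) := by ring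
      _ ≤ Λ ^ k * ♯(D t₀ \ nbhd G Z) := by gcongr
      _ ≤ _ := (hsum t₀ ht₀).1
  have hRΛ : 0 < R.card * Λ ^ (k + 1) := by
    have : 0 < R.card := Finset.card_pos.2 ⟨t₀, ht₀⟩
    positivity
  obtain ⟨z, hzT, hz, hzsum⟩ := exists_weight_pos_and_sum_le (C := 2 * R.card * Λ)
    (fun t z => by positivity) hupper hlower (by positivity) (by
      calc (R.card : ℝ) * Λ ^ (k + 1) < 3 / 2 * (R.card * Λ ^ (k + 1)) := by linarith
        _ = 2 * R.card * Λ * (3 / 4 * Λ ^ k) := by ring)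
  rw [Set.Finite.mem_toFinset] at hzT
  have hfrac (t) : coverFraction G (Z ∪ {z}) (D t) = coverFraction G Z (D t) + w t z := by
    simp only [coverFraction, w, ncard_nbhd_insert_inter, add_div]
  refine ⟨z, ⟨Set.union_subset hZ.subset (Set.singleton_subset_iff.2 hzT), ?_, fun t ht => ?_⟩, ?_⟩
  · simp only [hfrac, Finset.sum_add_distrib, mul_add]
    exact add_le_add hZ.sum_le hzsum
  · have hzt : ♯(G.neighborSet z ∩ (D t \ nbhd G Z)) ≤ 1 / 4 * ♯(D t) :=
      (cast_ncard_mono (Set.inter_subset_inter_right _ Set.sdiff_subset)).trans (hlink t ht z hzT)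
    rw [ncard_nbhd_insert_inter]
    linarith [hsmall t ht]
  · rw [ncard_nbhd_insert_inter]
    exact lt_add_of_pos_right _ ((div_pos_iff_of_pos_right (hpos t₀ ht₀)).1 hz)

theorem exists_fair_cover (hΛ : 1 ≤ Λ) {t₀ : ι} (ht₀ : t₀ ∈ R)
    (hscale : ∀ t ∈ R, HasDegreeScale G Λ k T (D t)) (hne : ∀ t ∈ R, (D t).Nonempty)
    (hlink : ∀ t ∈ R, LinkedLE G (1 / 4) T (D t)) :
    ∃ Z ⊆ T, ♯(D t₀) ≤ 8 * R.card * Λ * ♯(nbhd G Z ∩ D t₀) ∧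
      ∀ t ∈ R, ♯(nbhd G Z ∩ D t) ≤ 1 / 2 * ♯(D t) := by
  have hfair_empty : IsFairCover G T R D (2 * R.card * Λ) t₀ ∅ :=
    ⟨Set.empty_subset _, by simp [coverFraction], fun t _ => by simp⟩
  obtain ⟨Z, hZ, hmax⟩ := Set.Finite.exists_maximalFor (fun Z => ♯(nbhd G Z ∩ D t₀))
    {Z | IsFairCover G T R D (2 * R.card * Λ) t₀ Z} (Set.toFinite _) ⟨∅, hfair_empty⟩
  have hZ : IsFairCover G T R D (2 * R.card * Λ) t₀ Z := hZ
  refine ⟨Z, hZ.subset, ?_, hZ.le_half⟩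
  by_cases hsmall : ∀ t ∈ R, ♯(nbhd G Z ∩ D t) < 1 / 4 * ♯(D t)
  · obtain ⟨z, hz, hlt⟩ := hZ.exists_insert hΛ ht₀ hscale hne hlink hsmall
    exact absurd hlt (hmax hz hlt.le).not_gt
  · push Not at hsmall
    obtain ⟨t, ht, hquarter⟩ := hsmall
    have hfrac : 1 / 4 ≤ 2 * R.card * Λ * coverFraction G Z (D t₀) :=
      calc 1 / 4 ≤ coverFraction G Z (D t) := by
            rwa [coverFraction, le_div_iff₀ (cast_ncard_pos.2 (hne t ht))]
        _ ≤ ∑ t ∈ R, coverFraction G Z (D t) := Finset.single_le_sum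
            (f := fun t => coverFraction G Z (D t)) (fun _ _ => by unfold coverFraction; positivity)
            ht
        _ ≤ _ := hZ.sum_le
    rw [coverFraction, ← mul_div_assoc, le_div_iff₀ (cast_ncard_pos.2 (hne t₀ ht₀))] at hfrac
    linarith

theorem exists_partial_cover {ι : Type*} [LinearOrder ι] {J : Finset ι} {W : ι → Set V}
    (hr : r ≠ 0) (hΛ : 1 ≤ Λ) (hn : Nat.card V ≤ Λ ^ r) (hne : ∀ t ∈ J, (W t).Nonempty)
    (hcov : ∀ t ∈ J, 1 / 2 * ♯(W t) ≤ ♯(nbhd G T ∩ W t)) (hlink : ∀ t ∈ J, LinkedLE G μ T (W t))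
    (hμ0 : 0 ≤ μ) (hμ : 8 * r * μ ≤ 1) (hJ : r * (m + 1) ≤ J.card) :
    ∃ q ∈ J, ∃ J' ⊆ J, J'.card = m ∧ (∀ t ∈ J', q < t) ∧
      ∃ Z ⊆ T, Z.Nonempty ∧
        (∃ M ⊆ nbhd G Z ∩ W q, ♯(W q) ≤ 16 * r * (m + 1) * Λ * ♯M) ∧
        ∃ W' : ι → Set V, ∀ t ∈ J', W' t ⊆ W t \ nbhd G Z ∧ ♯(W t) ≤ 4 * r * ♯(W' t) := by
  obtain ⟨k, R, hRJ, hRcard, D, hD⟩ := exists_hasDegreeScale (D := fun t => nbhd G T ∩ W t) hr hn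
    (fun t _ => Set.inter_subset_left) hJ
  have hDW (t) (ht : t ∈ R) : D t ⊆ W t := (hD t ht).1.trans Set.inter_subset_right
  have hWD (t) (ht : t ∈ R) : ♯(W t) ≤ 2 * r * ♯(D t) := by
    linarith [(hD t ht).2.1, hcov t (hRJ ht)]
  have hDne (t) (ht : t ∈ R) : (D t).Nonempty :=
    nonempty_of_mul_le (cast_ncard_pos.2 (hne t (hRJ ht))) (hWD t ht)
  have hDlink : ∀ t ∈ R, LinkedLE G (1 / 4) T (D t) := fun t ht z hz =>
    calc ♯(G.neighborSet z ∩ D t) ≤ ♯(G.neighborSet z ∩ W t) :=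
          cast_ncard_mono (Set.inter_subset_inter_right _ (hDW t ht))
      _ ≤ μ * ♯(W t) := hlink t (hRJ ht) z hz
      _ ≤ μ * (2 * r * ♯(D t)) := by gcongr; exact hWD t ht
      _ = 8 * r * μ * (1 / 4 * ♯(D t)) := by ring
      _ ≤ 1 / 4 * ♯(D t) := mul_le_of_le_one_left (by positivity) hμ
  obtain ⟨q, hq, J', hJ'R, hJ'card, hJ'⟩ := exists_erase_min hRcard
  obtain ⟨Z, hZT, hZq, hZhalf⟩ := exists_fair_cover hΛ hq (fun t ht => (hD t ht).2.2) hDne hDlink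
  obtain ⟨v, ⟨x, hx, -⟩, -⟩ := nonempty_of_mul_le (cast_ncard_pos.2 (hDne q hq)) hZq
  refine ⟨q, hRJ hq, J', hJ'R.trans hRJ, hJ'card, hJ', Z, hZT, ⟨x, hx⟩, ⟨nbhd G Z ∩ D q,
    Set.inter_subset_inter_right _ (hDW q hq), ?_⟩, fun t => D t \ nbhd G Z, fun t ht =>
    ⟨Set.sdiff_subset_sdiff_left (hDW t (hJ'R ht)), ?_⟩⟩
  · calc ♯(W q) ≤ 2 * r * ♯(D q) := hWD q hq
      _ ≤ 2 * r * (8 * (m + 1) * Λ * ♯(nbhd G Z ∩ D q)) := by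
          gcongr
          exact_mod_cast hRcard ▸ hZq
      _ = 16 * r * (m + 1) * Λ * ♯(nbhd G Z ∩ D q) := by ring
  · have hhalf : ♯(D t) ≤ 2 * ♯(D t \ nbhd G Z) := by
      linarith [hZhalf t (hJ'R ht), cast_ncard_inter_add_sdiff (D t) (nbhd G Z)]
    calc ♯(W t) ≤ 2 * r * ♯(D t) := hWD t (hJ'R ht)
      _ ≤ 2 * r * (2 * ♯(D t \ nbhd G Z)) := by gcongr
      _ = 4 * r * ♯(D t \ nbhd G Z) := by ring

end DegreeScale

section LevelSequences
variable {G : SimpleGraph V} {L : ℕ → Set V} {k : ℕ}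

/-- The adjacency conditions of a levelling `(L 0, …, L k)`. -/
structure IsLevelSeq (G : SimpleGraph V) (L : ℕ → Set V) (k : ℕ) : Prop where
  covers : ∀ h < k, Covers G (L h) (L (h + 1))
  anticomplete : ∀ h h', h + 2 ≤ h' → h' ≤ k → Anticomplete G (L h) (L h')

lemma update_pair_of_lt (L : ℕ → Set V) (Z N : Set V) {h : ℕ} (hh : h < k) :
    Function.update (Function.update L k Z) (k + 1) N h = L h := by
  rw [Function.update_of_ne (by omega), Function.update_of_ne hh.ne]

lemma update_pair_self (L : ℕ → Set V) (Z N : Set V) :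
    Function.update (Function.update L k Z) (k + 1) N k = Z := by
  rw [Function.update_of_ne (by omega), Function.update_self]

lemma update_pair_subset {Z : Set V} (N : Set V) (hZ : Z ⊆ L k) {h : ℕ} (hh : h ≤ k) :
    Function.update (Function.update L k Z) (k + 1) N h ⊆ L h := by
  rcases hh.eq_or_lt with rfl | hlt
  · rwa [update_pair_self]
  · rw [update_pair_of_lt L Z N hlt]

lemma IsLevelSeq.push (hL : IsLevelSeq G L k) {Z N : Set V} (hZ : Z ⊆ L k) (hcov : Covers G Z N)
    (hanti : ∀ h < k, Anticomplete G (L h) N) :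
    IsLevelSeq G (Function.update (Function.update L k Z) (k + 1) N) (k + 1) where
  covers h hh := by
    rcases (Nat.lt_succ_iff.1 hh).eq_or_lt with rfl | hlt
    · rwa [update_pair_self, Function.update_self]
    · rw [update_pair_of_lt L Z N hlt]
      exact (hL.covers h hlt).mono subset_rfl (update_pair_subset N hZ hlt)
  anticomplete h h' hle hh' := by
    rw [update_pair_of_lt L Z N (by omega)]
    rcases hh'.eq_or_lt with rfl | hlt
    · rw [Function.update_self]
      exact hanti h (by omega)
    · exact (hL.anticomplete h h' hle (by omega)).mono subset_rfl
        (update_pair_subset N hZ (by omega))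

end LevelSequences

section GrowthParameters

/-- The number of blocks that suffices to grow `b` levels and keep `K` blocks. -/
def growthLength (r K : ℕ) : ℕ → ℕ
  | 0 => K
  | b + 1 => 2 * r ^ 2 * (growthLength r K b + 1)

lemma growthLength_mono {r : ℕ} (hr : r ≠ 0) (K : ℕ) : Monotone (growthLength r K) :=
  monotone_nat_of_le_succ fun b =>
    (Nat.le_succ _).trans (Nat.le_mul_of_pos_left _ (by positivity))

lemma growthLength_pos {r K b : ℕ} (hr : r ≠ 0) (hb : b ≠ 0) : 0 < growthLength r K b := by
  obtain ⟨b, rfl⟩ := Nat.exists_eq_succ_of_ne_zero hb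
  exact Nat.mul_pos (by positivity) (Nat.succ_pos _)

/-- The guaranteed relative size of the remaining part of a block after `i` growth steps, if it was
`κ` initially: each step costs a factor `4 * r`. -/
def keptRatio (κ : ℝ) (r i : ℕ) : ℝ := κ * (1 / (4 * r)) ^ i

section KeptRatio
variable {κ : ℝ} {r i j : ℕ}

@[simp] lemma keptRatio_zero : keptRatio κ r 0 = κ := by
  rw [keptRatio, pow_zero, mul_one]

lemma keptRatio_pos (hκ : 0 < κ) (hr : r ≠ 0) : 0 < keptRatio κ r i := by
  unfold keptRatio
  positivity

lemma four_mul_keptRatio_succ (hr : r ≠ 0) : 4 * r * keptRatio κ r (i + 1) = keptRatio κ r i := by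
  rw [keptRatio, keptRatio, pow_succ]
  field_simp

lemma keptRatio_anti (hκ : 0 ≤ κ) (hij : i ≤ j) : keptRatio κ r j ≤ keptRatio κ r i := by
  refine mul_le_mul_of_nonneg_left (pow_le_pow_of_le_one (by positivity) ?_ hij) hκ
  rcases Nat.eq_zero_or_pos r with rfl | hr
  · simp
  · have : (1 : ℝ) ≤ r := by exact_mod_cast hr
    rw [div_le_one (by positivity)]
    linarith

lemma keptRatio_succ_le_half (hκ : 0 < κ) (hr : r ≠ 0) :
    keptRatio κ r (i + 1) ≤ 1 / 2 * keptRatio κ r i := by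
  have hr1 : (1 : ℝ) ≤ r := by exact_mod_cast Nat.one_le_iff_ne_zero.2 hr
  have hpos : 0 < keptRatio κ r (i + 1) := keptRatio_pos hκ hr
  rw [← four_mul_keptRatio_succ (i := i) hr]
  nlinarith

end KeptRatio

/-- The numerical conditions under which `b` levels can be grown while keeping `K` blocks, in a
graph with `n` vertices. -/
structure GrowthParams (n : ℝ) (r b K : ℕ) (Λ κ τ ν lam : ℝ) : Prop where
  r_ne_zero : r ≠ 0
  b_ne_zero : b ≠ 0
  card_le : n ≤ Λ ^ r
  κ_pos : 0 < κ
  κ_le_one : κ ≤ 1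
  ν_nonneg : 0 ≤ ν
  ν_mul_le : ν * Λ ^ 5 ≤ 1
  le_Λ_mul : 64 * r * (growthLength r K b + 1) * (b + 1) ≤ Λ * keptRatio κ r b
  lam_nonneg : 0 ≤ lam
  lam_mul_le : 8 * r * lam ≤ keptRatio κ r b
  le_τ : 4 * b * Λ ≤ τ
  card_lt : n < (τ / 2) ^ b

namespace GrowthParams
variable {n : ℝ} {r b K : ℕ} {Λ κ τ ν lam : ℝ} (P : GrowthParams n r b K Λ κ τ ν lam)
include P

lemma keptRatio_pos (i : ℕ) : 0 < keptRatio κ r i := PurePairs.keptRatio_pos P.κ_pos P.r_ne_zero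

lemma one_le_r : (1 : ℝ) ≤ r := by exact_mod_cast Nat.one_le_iff_ne_zero.2 P.r_ne_zero

lemma one_le_b : (1 : ℝ) ≤ b := by exact_mod_cast Nat.one_le_iff_ne_zero.2 P.b_ne_zero

lemma keptRatio_le_one : keptRatio κ r b ≤ 1 :=
  (keptRatio_anti P.κ_pos.le b.zero_le).trans (by simpa using P.κ_le_one)

lemma le_Λ_mul_keptRatio : 64 * (b + 1) ≤ Λ * keptRatio κ r b := by
  refine le_trans ?_ P.le_Λ_mul
  have hone : (1 : ℝ) ≤ r * (growthLength r K b + 1) :=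
    one_le_mul_of_one_le_of_one_le P.one_le_r
      (by linarith [(growthLength r K b).cast_nonneg (α := ℝ)])
  calc 64 * ((b : ℝ) + 1) = 64 * 1 * (b + 1) := by ring
    _ ≤ 64 * (r * (growthLength r K b + 1)) * (b + 1) := by gcongr
    _ = _ := by ring

lemma Λ_pos : 0 < Λ :=
  pos_of_mul_pos_left ((by positivity : (0 : ℝ) < 64 * (b + 1)).trans_le P.le_Λ_mul_keptRatio)
    (P.keptRatio_pos b).le

lemma le_Λ : 64 * (b + 1) ≤ Λ :=
  P.le_Λ_mul_keptRatio.trans (mul_le_of_le_one_right P.Λ_pos.le P.keptRatio_le_one)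

lemma one_le_Λ : 1 ≤ Λ := by linarith [P.le_Λ, P.one_le_b]

lemma Λ_le_τ : Λ ≤ τ := by nlinarith [P.le_τ, P.one_le_b, P.Λ_pos]

lemma ν_mul_pow_le {j : ℕ} (hj : j ≤ 5) : ν * Λ ^ j ≤ 1 :=
  (mul_le_mul_of_nonneg_left (pow_le_pow_right₀ P.one_le_Λ hj) P.ν_nonneg).trans P.ν_mul_le

lemma mul_le_keptRatio {A x : ℝ} (hx : 0 ≤ x) (hA : A ≤ Λ * keptRatio κ r b) (hΛ : Λ * x ≤ 1) :
    A * x ≤ keptRatio κ r b :=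
  calc A * x ≤ Λ * keptRatio κ r b * x := by gcongr
    _ = Λ * x * keptRatio κ r b := by ring
    _ ≤ keptRatio κ r b := mul_le_of_le_one_left (P.keptRatio_pos b).le hΛ

lemma two_mul_le_keptRatio {i : ℕ} (hi : i ≤ b) {x : ℝ} (hx : 0 ≤ x) (hΛ : Λ * x ≤ 1) :
    2 * x ≤ keptRatio κ r i :=
  (P.mul_le_keptRatio hx (by linarith [P.le_Λ_mul_keptRatio, P.one_le_b]) hΛ).trans
    (keptRatio_anti P.κ_pos.le hi)

lemma ν_mul_le_keptRatio {i k : ℕ} (hi : i ≤ b) (hk : k ≤ growthLength r K b) :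
    ν * (16 * r * (k + 1) * Λ) ≤ keptRatio κ r i := by
  refine le_trans ?_ (keptRatio_anti P.κ_pos.le hi)
  have hcoef : 16 * r * ((k : ℝ) + 1) ≤ Λ * keptRatio κ r b := by
    refine le_trans ?_ P.le_Λ_mul
    calc 16 * r * ((k : ℝ) + 1) ≤ 64 * r * (growthLength r K b + 1) := by
          have : (k : ℝ) ≤ growthLength r K b := by exact_mod_cast hk
          gcongr
          norm_num
      _ ≤ _ := le_mul_of_one_le_right (by positivity) (by linarith [P.one_le_b])
  calc ν * (16 * r * (k + 1) * Λ) = 16 * r * (k + 1) * (ν * Λ) := by ring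
    _ ≤ keptRatio κ r b := P.mul_le_keptRatio (mul_nonneg P.ν_nonneg P.Λ_pos.le) hcoef (by
        linarith [P.ν_mul_pow_le (j := 2) (by norm_num)])

end GrowthParams

end GrowthParameters

section Growth
variable {ι : Type*} [LinearOrder ι]

/-- Blocks `X t` for `t ∈ J₀` with a root block `X x₀` before them, and a part `W₀ t` of each block
from which the blocks that survive the growth of levels are taken. -/
structure GrowthSetup (G : SimpleGraph V) (x₀ : ι) (X W₀ : ι → Set V) (J₀ : Finset ι) (r b K : ℕ)
    (Λ κ τ ν lam : ℝ) : Prop extends GrowthParams (Nat.card V) r b K Λ κ τ ν lam where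
  lt : ∀ t ∈ J₀, x₀ < t
  length_le : growthLength r K b ≤ J₀.card
  nonempty : ∀ t ∈ J₀, (X t).Nonempty
  subset : ∀ t ∈ J₀, W₀ t ⊆ X t
  κ_mul_le : ∀ t ∈ J₀, κ * ♯(X t) ≤ ♯(W₀ t)
  expandsInto : ∀ q ∈ insert x₀ J₀, ∀ t ∈ J₀, q < t → ExpandsInto G τ (X q) (X t)
  nonDivergentPair : ∀ q ∈ insert x₀ J₀, ∀ t ∈ J₀, q < t → NonDivergentPair G ν (X q) (X t)
  linkedLE : ∀ q ∈ insert x₀ J₀, ∀ t ∈ J₀, q < t → LinkedLE G lam (X q) (X t)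

/-- Levels `level 0, …, level i` grown from `z`, each inside a block of its own, together with
large parts `part t` of later blocks that may only be adjacent to the last level. -/
structure GrowthState (G : SimpleGraph V) (x₀ : ι) (z : V) (X W₀ : ι → Set V) (J₀ : Finset ι)
    (κ : ℝ) (r i : ℕ) where
  level : ℕ → Set V
  index : ℕ → ι
  rest : Finset ι
  part : ι → Set V
  isLevelSeq : IsLevelSeq G level i
  level_zero : level 0 = {z}
  level_subset : ∀ h ≤ i, level h ⊆ X (index h)
  index_zero : index 0 = x₀
  index_mem : ∀ h ≤ i, index h ∈ insert x₀ J₀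
  index_lt_index : ∀ h h', h < h' → h' ≤ i → index h < index h'
  index_lt : ∀ t ∈ rest, ∀ h ≤ i, index h < t
  rest_subset : rest ⊆ J₀
  part_subset : ∀ t ∈ rest, part t ⊆ W₀ t
  le_part : ∀ t ∈ rest, keptRatio κ r i * ♯(X t) ≤ ♯(part t)
  anticomplete : ∀ t ∈ rest, ∀ h < i, Anticomplete G (level h) (part t)

namespace GrowthState
variable {G : SimpleGraph V} {x₀ : ι} {z : V} {X W₀ : ι → Set V} {J₀ : Finset ι}
  {r i : ℕ} {κ : ℝ} (S : GrowthState G x₀ z X W₀ J₀ κ r i)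

/-- Adds a new level `N` in the block `q`, after replacing the last level by its subset `Z`. -/
def push (Z N : Set V) (q : ι) (J : Finset ι) (W : ι → Set V) (hZ : Z ⊆ S.level i)
    (hZne : Z.Nonempty) (hcov : Covers G Z N) (hanti : ∀ h < i, Anticomplete G (S.level h) N)
    (hq : q ∈ S.rest) (hN : N ⊆ X q) (hJ : J ⊆ S.rest) (hqJ : ∀ t ∈ J, q < t)
    (hW : ∀ t ∈ J, W t ⊆ S.part t \ nbhd G Z)
    (hWcard : ∀ t ∈ J, keptRatio κ r (i + 1) * ♯(X t) ≤ ♯(W t)) :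
    GrowthState G x₀ z X W₀ J₀ κ r (i + 1) where
  level := Function.update (Function.update S.level i Z) (i + 1) N
  index := Function.update S.index (i + 1) q
  rest := J
  part := W
  isLevelSeq := S.isLevelSeq.push hZ hcov hanti
  level_zero := (Set.subset_singleton_iff_eq.1
    (S.level_zero ▸ update_pair_subset N hZ i.zero_le)).resolve_left (by
      rcases i.eq_zero_or_pos with rfl | hi
      · rw [update_pair_self]
        exact hZne.ne_empty
      · rw [update_pair_of_lt S.level Z N hi, S.level_zero]
        exact Set.singleton_ne_empty z)
  level_subset h hh := by
    rcases hh.eq_or_lt with rfl | hlt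
    · rwa [Function.update_self, Function.update_self]
    · rw [Function.update_of_ne (f := S.index) hlt.ne]
      exact (update_pair_subset N hZ (by omega)).trans (S.level_subset h (by omega))
  index_zero := by rw [Function.update_of_ne (by omega), S.index_zero]
  index_mem h hh := by
    rcases hh.eq_or_lt with rfl | hlt
    · rw [Function.update_self]
      exact Finset.mem_insert_of_mem (S.rest_subset hq)
    · rw [Function.update_of_ne hlt.ne]
      exact S.index_mem h (by omega)
  index_lt_index h h' hlt hh' := by
    rw [Function.update_of_ne (by omega)]
    rcases hh'.eq_or_lt with rfl | hlt'
    · rw [Function.update_self]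
      exact S.index_lt q hq h (by omega)
    · rw [Function.update_of_ne hlt'.ne]
      exact S.index_lt_index h h' hlt (by omega)
  index_lt t ht h hh := by
    rcases hh.eq_or_lt with rfl | hlt
    · rw [Function.update_self]
      exact hqJ t ht
    · rw [Function.update_of_ne hlt.ne]
      exact S.index_lt t (hJ ht) h (by omega)
  rest_subset := hJ.trans S.rest_subset
  part_subset t ht := ((hW t ht).trans Set.sdiff_subset).trans (S.part_subset t (hJ ht))
  le_part := hWcard
  anticomplete t ht h hh := by
    rcases (Nat.lt_succ_iff.1 hh).eq_or_lt with rfl | hlt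
    · rw [update_pair_self]
      exact (anticomplete_sdiff_nbhd Z (S.part t)).mono subset_rfl (hW t ht)
    · rw [update_pair_of_lt S.level Z N hlt]
      exact (S.anticomplete t (hJ ht) h hlt).mono subset_rfl ((hW t ht).trans Set.sdiff_subset)

end GrowthState
end Growth

section CommonScale

lemma exists_common_scale {ι : Type*} {Λ : ℝ} {r m : ℕ} {J : Finset ι} {x : ι → ℝ} (hr : r ≠ 0)
    (hx1 : ∀ t ∈ J, 1 ≤ x t) (hx : ∀ t ∈ J, x t ≤ Λ ^ r) (hJ : r * m ≤ J.card) :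
    ∃ k, ∃ R ⊆ J, R.card = m ∧ ∀ t ∈ R, Λ ^ k ≤ x t ∧ x t ≤ Λ ^ (k + 1) := by
  classical
  have hscale (t : ι) : ∃ k, t ∈ J → k ∈ Finset.range r ∧ Λ ^ k ≤ x t ∧ x t ≤ Λ ^ (k + 1) := by
    by_cases ht : t ∈ J
    · obtain ⟨k, hk, hkx⟩ := exists_pow_le_le_pow_succ hr (hx1 t ht) (hx t ht)
      exact ⟨k, fun _ => ⟨Finset.mem_range.2 hk, hkx⟩⟩
    · exact ⟨0, fun h => absurd h ht⟩
  choose s hs using hscale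
  obtain ⟨k, -, hcard⟩ := Finset.exists_le_card_fiber_of_mul_le_card_of_maps_to
    (fun t ht => (hs t ht).1) (Finset.nonempty_range_iff.2 hr) (by rwa [Finset.card_range])
  obtain ⟨R, hR, rfl⟩ := Finset.exists_subset_card_eq hcard
  refine ⟨k, R, hR.trans (Finset.filter_subset _ _), rfl, fun t ht => ?_⟩
  obtain ⟨htJ, rfl⟩ := Finset.mem_filter.1 (hR ht)
  exact (hs t htJ).2

end CommonScale

section Growth
variable {ι : Type*} [LinearOrder ι]

namespace GrowthState
variable {G : SimpleGraph V} {x₀ : ι} {z : V} {X W₀ : ι → Set V} {J₀ J R : Finset ι} {t : ι}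
  {r b K i k m : ℕ} {Λ κ τ ν lam ρ : ℝ}

section Invariants
variable (S : GrowthState G x₀ z X W₀ J₀ κ r i)

/-- The last level covers at least half of every remaining part. -/
def CoversHalf : Prop := ∀ t ∈ S.rest, 1 / 2 * ♯(S.part t) ≤ ♯(nbhd G (S.level i) ∩ S.part t)

/-- The relative size of the last level in its block. -/
def density : ℝ := ♯(S.level i) / ♯(X (S.index i))

/-- The union of all levels but the last. -/
def lower : Set V := ⋃ h < i, S.level h

/-- The part of the block `q` that can serve as the next level. -/
def fresh (q : ι) : Set V := (nbhd G (S.level i) ∩ X q) \ nbhd G S.lower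

/-- The levels have grown fast so far, but the last one is still too small to cover half of the
remaining parts. -/
structure IsSmall (Λ τ : ℝ) : Prop where
  pow_le : (τ / 2) ^ i ≤ S.density * Nat.card V
  density_mul_le : S.density * Λ ^ 3 ≤ 1
  lower_le : ∀ t ∈ S.rest, ♯(nbhd G S.lower ∩ X t) ≤ 2 * i * Λ * S.density * ♯(X t)

end Invariants

variable {S : GrowthState G x₀ z X W₀ J₀ κ r i}

theorem exists_push_fresh [Finite V] (hκ : 0 < κ) (hr : r ≠ 0) (hne : (S.level i).Nonempty)
    (hJ : J ⊆ S.rest)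
    (hhalf : ∀ t ∈ J, ♯(nbhd G (S.level i) ∩ S.part t) ≤ 1 / 2 * ♯(S.part t))
    (hJc : k + 1 ≤ J.card) :
    ∃ S' : GrowthState G x₀ z X W₀ J₀ κ r (i + 1), S'.rest ⊆ J ∧ S'.rest.card = k ∧
      S'.index (i + 1) ∈ J ∧ S'.level (i + 1) = S.fresh (S'.index (i + 1)) ∧
      S'.lower = S.lower ∪ S.level i := by
  obtain ⟨R, hRJ, hR⟩ := Finset.exists_subset_card_eq hJc
  obtain ⟨q, hq, J', hJ', rfl, hqJ'⟩ := exists_erase_min hR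
  refine ⟨S.push (S.level i) (S.fresh q) q J' (fun t => S.part t \ nbhd G (S.level i)) subset_rfl
    hne (Set.sdiff_subset.trans Set.inter_subset_left) (fun h hh => ?_) (hJ (hRJ hq))
    (Set.sdiff_subset.trans Set.inter_subset_right) ((hJ'.trans hRJ).trans hJ) hqJ'
    (fun t _ => subset_rfl) fun t ht => ?_, hJ'.trans hRJ, rfl, ?_, ?_, ?_⟩
  · exact (anticomplete_sdiff_nbhd S.lower _).mono
      (Set.subset_biUnion_of_mem (u := S.level) (Set.mem_Iio.2 hh)) subset_rfl
  · have htJ := hRJ (hJ' ht)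
    have hsucc : keptRatio κ r (i + 1) * ♯(X t) ≤ 1 / 2 * keptRatio κ r i * ♯(X t) := by
      gcongr
      exact keptRatio_succ_le_half hκ hr
    linarith [S.le_part t (hJ htJ), hhalf t htJ,
      cast_ncard_inter_add_sdiff (S.part t) (nbhd G (S.level i))]
  · simpa only [push, Function.update_self] using hRJ hq
  · simp only [push, Function.update_self]
  · simp only [lower, push, Set.biUnion_lt_succ, update_pair_self]
    congr 1
    exact Set.iUnion₂_congr fun h hh => update_pair_of_lt S.level _ _ hh

section Setup
variable (C : GrowthSetup G x₀ X W₀ J₀ r b K Λ κ τ ν lam)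
include C

lemma part_subset_block (ht : t ∈ S.rest) : S.part t ⊆ X t :=
  (S.part_subset t ht).trans (C.subset t (S.rest_subset ht))

lemma min_mul_density_le (ht : t ∈ S.rest) :
    min (τ * S.density) (1 / 4) * ♯(X t) ≤ ♯(nbhd G (S.level i) ∩ X t) := by
  rw [density, ← mul_div_assoc]
  exact C.expandsInto _ (S.index_mem i le_rfl) t (S.rest_subset ht) (S.index_lt t ht i le_rfl) _
    (S.level_subset i le_rfl)

lemma IsSmall.density_pos (hS : S.IsSmall Λ τ) : 0 < S.density := by
  have hτ : 0 < τ := C.Λ_pos.trans_le C.Λ_le_τ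
  exact pos_of_mul_pos_left ((by positivity : 0 < (τ / 2) ^ i).trans_le hS.pow_le) (by positivity)

lemma IsSmall.level_nonempty (hS : S.IsSmall Λ τ) : (S.level i).Nonempty := by
  rw [Set.nonempty_iff_ne_empty]
  refine fun h => (hS.density_pos C).ne' ?_
  rw [density, h, Set.ncard_empty, Nat.cast_zero, zero_div]

variable [Finite V]

lemma ncard_block_pos (ht : t ∈ S.rest) : 0 < ♯(X t) :=
  cast_ncard_pos.2 (C.nonempty t (S.rest_subset ht))

lemma part_nonempty (ht : t ∈ S.rest) : (S.part t).Nonempty :=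
  cast_ncard_pos.1 ((mul_pos (C.keptRatio_pos i) (ncard_block_pos C ht)).trans_le (S.le_part t ht))

lemma linkedLE_level_part (ht : t ∈ S.rest) :
    LinkedLE G (lam / keptRatio κ r i) (S.level i) (S.part t) :=
  (C.linkedLE _ (S.index_mem i le_rfl) t (S.rest_subset ht) (S.index_lt t ht i le_rfl)).sub
    C.lam_nonneg (C.keptRatio_pos i) (S.level_subset i le_rfl) (part_subset_block C ht)
    (S.le_part t ht)

lemma coversHalf_of_le (hi : i ≤ b) (hν : ν * ♯(X (S.index i)) ≤ ♯(S.level i)) :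
    S.CoversHalf := fun t ht => by
  have hmissed : ♯(S.part t \ nbhd G (S.level i)) < ν * ♯(X t) :=
    (cast_ncard_mono (Set.sdiff_subset_sdiff_left (part_subset_block C ht))).trans_lt
      (C.nonDivergentPair _ (S.index_mem i le_rfl) t (S.rest_subset ht) (S.index_lt t ht i le_rfl)
        _ (S.level_subset i le_rfl) hν)
  have hsmall : 2 * ν * ♯(X t) ≤ ♯(S.part t) := by
    refine le_trans ?_ (S.le_part t ht)
    gcongr
    exact C.two_mul_le_keptRatio hi C.ν_nonneg (by
      simpa [mul_comm] using C.ν_mul_pow_le (j := 1) (by norm_num))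
  linarith [cast_ncard_inter_add_sdiff (S.part t) (nbhd G (S.level i))]

/-- The next level here is only a part of the neighbourhood of a subset of the last level; this
keeps the parts of the remaining blocks large when the last level covers a lot. -/
theorem exists_push_of_half_le (hi : i ≤ b) (hJ : J ⊆ S.rest)
    (hcov : ∀ t ∈ J, 1 / 2 * ♯(S.part t) ≤ ♯(nbhd G (S.level i) ∩ S.part t))
    (hJc : r * (k + 1) ≤ J.card) :
    ∃ S' : GrowthState G x₀ z X W₀ J₀ κ r (i + 1), S'.rest.card = k ∧
      S'.level (i + 1) ⊆ W₀ (S'.index (i + 1)) ∧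
      keptRatio κ r i * ♯(X (S'.index (i + 1))) ≤
        16 * r * (k + 1) * Λ * ♯(S'.level (i + 1)) := by
  obtain ⟨q, hq, J', hJ', rfl, hqJ', Z, hZ, hZne, ⟨M, hM, hMcard⟩, W', hW'⟩ :=
    exists_partial_cover C.r_ne_zero C.one_le_Λ C.card_le (fun t ht => part_nonempty C (hJ ht)) hcov
      (fun t ht => linkedLE_level_part C (hJ ht))
      (div_nonneg C.lam_nonneg (C.keptRatio_pos i).le)
      (by
        rw [← mul_div_assoc, div_le_one (C.keptRatio_pos i)]
        exact C.lam_mul_le.trans (keptRatio_anti C.κ_pos.le hi)) hJc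
  have hMpart : M ⊆ S.part q := hM.trans Set.inter_subset_right
  refine ⟨S.push Z M q J' W' hZ hZne (hM.trans Set.inter_subset_left)
    (fun h hh => (S.anticomplete q (hJ hq) h hh).mono subset_rfl hMpart) (hJ hq)
    (hMpart.trans (part_subset_block C (hJ hq))) (hJ'.trans hJ) hqJ' (fun t ht => (hW' t ht).1)
    fun t ht => ?_, rfl, ?_, ?_⟩
  · have hr : 0 < 4 * (r : ℝ) := by linarith [C.one_le_r]
    refine le_of_mul_le_mul_left ?_ hr
    rw [← mul_assoc, four_mul_keptRatio_succ C.r_ne_zero]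
    exact (S.le_part t (hJ (hJ' ht))).trans (hW' t ht).2
  · simpa only [push, Function.update_self] using hMpart.trans (S.part_subset q (hJ hq))
  · simpa only [push, Function.update_self] using (S.le_part q (hJ hq)).trans hMcard

theorem exists_coversHalf_succ (hi : i < b) (hJ : J ⊆ S.rest)
    (hcov : ∀ t ∈ J, 1 / 2 * ♯(S.part t) ≤ ♯(nbhd G (S.level i) ∩ S.part t))
    (hk : k ≤ growthLength r K b) (hJc : r * (k + 1) ≤ J.card) :
    ∃ S' : GrowthState G x₀ z X W₀ J₀ κ r (i + 1), S'.rest.card = k ∧ S'.CoversHalf := by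
  obtain ⟨S', hcard, -, hlevel⟩ := exists_push_of_half_le C hi.le hJ hcov hJc
  refine ⟨S', hcard, coversHalf_of_le C hi ?_⟩
  have hA : 0 < 16 * r * ((k : ℝ) + 1) * Λ := by
    have := C.one_le_r
    have := C.Λ_pos
    positivity
  refine le_of_mul_le_mul_left (le_trans ?_ hlevel) hA
  rw [← mul_assoc, mul_comm _ ν]
  gcongr
  exact C.ν_mul_le_keptRatio hi.le hk

namespace IsSmall
variable (hS : S.IsSmall Λ τ)
include hS

lemma nbhd_inter_nonempty (ht : t ∈ S.rest) : (nbhd G (S.level i) ∩ X t).Nonempty := by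
  refine cast_ncard_pos.1 (lt_of_lt_of_le ?_ (min_mul_density_le C ht))
  have := density_pos C hS
  have := ncard_block_pos C ht
  have : 0 < τ := C.Λ_pos.trans_le C.Λ_le_τ
  positivity

lemma half_le_fresh (hi : i < b) (ht : t ∈ S.rest) :
    1 / 2 * ♯(nbhd G (S.level i) ∩ X t) ≤ ♯(S.fresh t) := by
  have hd := density_pos C hS
  have hΛ := C.Λ_pos
  have hib : (i : ℝ) + 1 ≤ b := by exact_mod_cast hi
  have hcoef : 2 * i * Λ * S.density ≤ 1 / 2 * min (τ * S.density) (1 / 4) := by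
    rcases min_cases (τ * S.density) (1 / 4) with ⟨hmin, -⟩ | ⟨hmin, -⟩ <;> rw [hmin]
    · have hτ : 4 * i * Λ ≤ τ := le_trans (by gcongr 4 * ?_ * Λ; linarith) C.le_τ
      nlinarith
    · have hiΛ : 2 * (i : ℝ) ≤ 1 / 8 * Λ ^ 2 := by nlinarith [C.le_Λ]
      calc 2 * i * Λ * S.density ≤ 1 / 8 * Λ ^ 2 * Λ * S.density := by gcongr
        _ = 1 / 8 * (S.density * Λ ^ 3) := by ring
        _ ≤ 1 / 2 * (1 / 4) := by linarith [hS.density_mul_le]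
  have hlower : ♯(nbhd G S.lower ∩ X t) ≤ 1 / 2 * ♯(nbhd G (S.level i) ∩ X t) :=
    calc ♯(nbhd G S.lower ∩ X t) ≤ 2 * i * Λ * S.density * ♯(X t) := hS.lower_le t ht
      _ ≤ 1 / 2 * min (τ * S.density) (1 / 4) * ♯(X t) := by gcongr
      _ ≤ _ := by linarith [min_mul_density_le C ht]
  have hsub : ♯(nbhd G S.lower ∩ (nbhd G (S.level i) ∩ X t)) ≤ ♯(nbhd G S.lower ∩ X t) :=
    cast_ncard_mono (Set.inter_subset_inter_right _ Set.inter_subset_right)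
  have hsplit := cast_ncard_inter_add_sdiff (nbhd G (S.level i) ∩ X t) (nbhd G S.lower)
  rw [fresh]
  linarith

theorem exists_nbhd_scale (hm : m ≠ 0) (hcard : r * m ≤ S.rest.card) :
    ∃ ρ > 0, ∃ R ⊆ S.rest, R.card = m ∧ ∀ t ∈ R, ρ * ♯(X t) ≤ ♯(nbhd G (S.level i) ∩ X t) ∧
      ♯(nbhd G (S.level i) ∩ X t) ≤ Λ * ρ * ♯(X t) := by
  have hn (t : ι) (ht : t ∈ S.rest) : 0 < (Nat.card V : ℝ) :=
    (ncard_block_pos C ht).trans_le (cast_ncard_le_card _)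
  obtain ⟨k, R, hR, rfl, hk⟩ := exists_common_scale (J := S.rest) (Λ := Λ) C.r_ne_zero
    (x := fun t => Nat.card V * ♯(nbhd G (S.level i) ∩ X t) / ♯(X t))
    (fun t ht => by
      rw [one_le_div (ncard_block_pos C ht)]
      exact (cast_ncard_le_card _).trans (le_mul_of_one_le_right (Nat.cast_nonneg _)
        (one_le_cast_ncard (nbhd_inter_nonempty C hS ht))))
    (fun t ht => by
      refine le_trans ?_ C.card_le
      rw [mul_div_assoc]
      refine mul_le_of_le_one_right (Nat.cast_nonneg _) ((div_le_one (ncard_block_pos C ht)).2 ?_)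
      exact cast_ncard_mono Set.inter_subset_right) hcard
  obtain ⟨t₀, ht₀⟩ := Finset.card_ne_zero.1 hm
  have hn0 := hn t₀ (hR ht₀)
  have hΛ := C.Λ_pos
  refine ⟨Λ ^ k / Nat.card V, by positivity, R, hR, rfl, fun t ht => ?_⟩
  have hX := ncard_block_pos C (hR ht)
  obtain ⟨hl, hu⟩ := hk t ht
  rw [le_div_iff₀ hX] at hl
  rw [div_le_iff₀ hX, pow_succ'] at hu
  constructor
  · rw [div_mul_eq_mul_div, div_le_iff₀ hn0]
    linarith
  · rw [← mul_div_assoc, div_mul_eq_mul_div, le_div_iff₀ hn0]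
    linarith

theorem succ (hi : i < b) {S' : GrowthState G x₀ z X W₀ J₀ κ r (i + 1)} {q : ι} (hq : q ∈ S.rest)
    (hrest : S'.rest ⊆ S.rest) (hindex : S'.index (i + 1) = q)
    (hlevel : S'.level (i + 1) = S.fresh q) (hlower : S'.lower = S.lower ∪ S.level i)
    (hρq : ρ * ♯(X q) ≤ ♯(nbhd G (S.level i) ∩ X q))
    (hρ : ∀ t ∈ insert q S'.rest, ♯(nbhd G (S.level i) ∩ X t) ≤ Λ * ρ * ♯(X t))
    (hρΛ : ρ * Λ ^ 4 ≤ 1) : S'.IsSmall Λ τ := by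
  have hΛ := C.Λ_pos
  have hX := ncard_block_pos C hq
  have hfresh := hS.half_le_fresh C hi hq
  have hdensity : S'.density * ♯(X q) = ♯(S.fresh q) := by
    rw [density, hindex, hlevel, div_mul_cancel₀ _ hX.ne']
  have hle : 1 / 2 * ρ ≤ S'.density :=
    le_of_mul_le_mul_right (by rw [hdensity]; linarith) hX
  have hge : S'.density ≤ Λ * ρ := le_of_mul_le_mul_right (by
    rw [hdensity]
    exact (cast_ncard_mono Set.sdiff_subset).trans (hρ q (Finset.mem_insert_self _ _))) hX
  have hgrow : τ / 2 * S.density ≤ S'.density := by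
    have hexpand := (min_mul_density_le C hq).trans (hρ q (Finset.mem_insert_self _ _))
    have hΛ64 : 64 ≤ Λ ^ 3 := by
      linarith [C.le_Λ, C.one_le_b, le_self_pow₀ C.one_le_Λ three_ne_zero]
    rcases min_cases (τ * S.density) (1 / 4) with ⟨hmin, -⟩ | ⟨hmin, -⟩ <;> rw [hmin] at hexpand
    · refine le_of_mul_le_mul_right ?_ hX
      linarith [hmin ▸ min_mul_density_le C hq]
    · nlinarith [le_of_mul_le_mul_right hexpand hX]
  have hmono : S.density ≤ S'.density := by
    nlinarith [hS.density_pos C, C.Λ_le_τ, C.le_Λ]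
  refine ⟨?_, ?_, fun t ht => ?_⟩
  · have hτ := C.Λ_pos.trans_le C.Λ_le_τ
    calc (τ / 2) ^ (i + 1) = τ / 2 * (τ / 2) ^ i := pow_succ' _ _
      _ ≤ τ / 2 * (S.density * Nat.card V) := by gcongr; exact hS.pow_le
      _ = τ / 2 * S.density * Nat.card V := (mul_assoc _ _ _).symm
      _ ≤ S'.density * Nat.card V := by gcongr
  · calc S'.density * Λ ^ 3 ≤ Λ * ρ * Λ ^ 3 := by gcongr
      _ = ρ * Λ ^ 4 := by ring
      _ ≤ 1 := hρΛ
  · rw [hlower, nbhd_union, Set.union_inter_distrib_right]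
    push_cast
    calc ♯(nbhd G S.lower ∩ X t ∪ nbhd G (S.level i) ∩ X t)
        ≤ 2 * i * Λ * S.density * ♯(X t) + Λ * ρ * ♯(X t) :=
          (cast_ncard_union_le _ _).trans (add_le_add (hS.lower_le t (hrest ht))
            (hρ t (Finset.mem_insert_of_mem ht)))
      _ ≤ 2 * i * Λ * S'.density * ♯(X t) + Λ * (2 * S'.density) * ♯(X t) := by
          gcongr
          linarith
      _ = 2 * (i + 1) * Λ * S'.density * ♯(X t) := by ring

theorem exists_succ_of_small_scale (hi : i < b) (hR : R ⊆ S.rest) (hkR : k + 1 ≤ R.card)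
    (hρ0 : 0 < ρ) (hρ : ∀ t ∈ R, ρ * ♯(X t) ≤ ♯(nbhd G (S.level i) ∩ X t) ∧
      ♯(nbhd G (S.level i) ∩ X t) ≤ Λ * ρ * ♯(X t)) (hρΛ : ρ * Λ ^ 4 ≤ 1) :
    ∃ S' : GrowthState G x₀ z X W₀ J₀ κ r (i + 1), S'.rest.card = k ∧ S'.IsSmall Λ τ := by
  have hhalf : ∀ t ∈ R, ♯(nbhd G (S.level i) ∩ S.part t) ≤ 1 / 2 * ♯(S.part t) := fun t ht => by
    have hΛ2 : Λ * (Λ * ρ) ≤ 1 :=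
      calc Λ * (Λ * ρ) = ρ * Λ ^ 2 := by ring
        _ ≤ ρ * Λ ^ 4 := by gcongr <;> [exact C.one_le_Λ; norm_num]
        _ ≤ 1 := hρΛ
    have hkept : 2 * (Λ * ρ) * ♯(X t) ≤ ♯(S.part t) := by
      refine le_trans ?_ (S.le_part t (hR ht))
      gcongr
      exact C.two_mul_le_keptRatio hi.le (mul_nonneg C.Λ_pos.le hρ0.le) hΛ2
    have hsub : ♯(nbhd G (S.level i) ∩ S.part t) ≤ ♯(nbhd G (S.level i) ∩ X t) :=
      cast_ncard_mono (Set.inter_subset_inter_right _ (part_subset_block C (hR ht)))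
    linarith [(hρ t ht).2]
  obtain ⟨S', hrest, hcard, hindex, hlevel, hlower⟩ := exists_push_fresh C.κ_pos C.r_ne_zero
    (hS.level_nonempty C) hR hhalf hkR
  exact ⟨S', hcard, hS.succ C hi (hR hindex) (hrest.trans hR) rfl hlevel hlower
    (hρ _ hindex).1 (fun t ht => (hρ t (Finset.insert_subset hindex hrest ht)).2) hρΛ⟩

theorem exists_succ_of_large_scale (hi : i < b) (hk : k ≤ growthLength r K b) (hR : R ⊆ S.rest)
    (hkR : 2 * r * (k + 1) ≤ R.card)
    (hρ : ∀ t ∈ R, ρ * ♯(X t) ≤ ♯(nbhd G (S.level i) ∩ X t)) (hρΛ : 1 ≤ ρ * Λ ^ 4) :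
    ∃ S' : GrowthState G x₀ z X W₀ J₀ κ r (i + 1), S'.rest.card = k ∧ S'.CoversHalf := by
  classical
  let big := {t ∈ R | 1 / 2 * ♯(S.part t) ≤ ♯(nbhd G (S.level i) ∩ S.part t)}
  let small := {t ∈ R | ¬ 1 / 2 * ♯(S.part t) ≤ ♯(nbhd G (S.level i) ∩ S.part t)}
  have hsum : big.card + small.card = R.card := Finset.card_filter_add_card_filter_not _
  have hsmallR : small ⊆ R := Finset.filter_subset _ _
  by_cases hbig : r * (k + 1) ≤ big.card
  · exact exists_coversHalf_succ C hi ((Finset.filter_subset _ R).trans hR)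
      (fun t ht => (Finset.mem_filter.1 ht).2) hk hbig
  · have hr := Nat.one_le_iff_ne_zero.2 C.r_ne_zero
    obtain ⟨S', -, hcard, hindex, hlevel, -⟩ := exists_push_fresh C.κ_pos C.r_ne_zero
      (hS.level_nonempty C) (hsmallR.trans hR) (k := k)
      (fun t ht => (not_le.1 (Finset.mem_filter.1 ht).2).le) (by nlinarith)
    have hindexR : S'.index (i + 1) ∈ R := hsmallR hindex
    have hν : ν ≤ 1 / 2 * ρ := by
      refine le_of_mul_le_mul_right (C.ν_mul_le.trans ?_) (pow_pos C.Λ_pos 5)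
      calc (1 : ℝ) ≤ 1 / 2 * Λ * 1 := by linarith [C.le_Λ, C.one_le_b]
        _ ≤ 1 / 2 * Λ * (ρ * Λ ^ 4) := by
          gcongr
          linarith [C.Λ_pos]
        _ = 1 / 2 * ρ * Λ ^ 5 := by ring
    refine ⟨S', hcard, coversHalf_of_le C hi ?_⟩
    calc ν * ♯(X (S'.index (i + 1))) ≤ 1 / 2 * ρ * ♯(X (S'.index (i + 1))) := by gcongr
      _ ≤ ♯(S'.level (i + 1)) := by
        rw [hlevel]
        linarith [hS.half_le_fresh C hi (hR hindexR), hρ _ hindexR]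

theorem exists_succ (hi : i < b) (hk : k ≤ growthLength r K b)
    (hcard : 2 * r ^ 2 * (k + 1) ≤ S.rest.card) :
    ∃ S' : GrowthState G x₀ z X W₀ J₀ κ r (i + 1),
      S'.rest.card = k ∧ (S'.IsSmall Λ τ ∨ S'.CoversHalf) := by
  have hr := Nat.one_le_iff_ne_zero.2 C.r_ne_zero
  obtain ⟨ρ, hρ0, R, hR, hRcard, hρ⟩ := hS.exists_nbhd_scale C (m := 2 * r * (k + 1))
    (by positivity) (le_of_eq_of_le (by ring) hcard)
  rcases le_total (ρ * Λ ^ 4) 1 with hsmall | hlarge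
  · obtain ⟨S', hcard', hS'⟩ := hS.exists_succ_of_small_scale C hi hR (k := k) (by nlinarith)
      hρ0 hρ hsmall
    exact ⟨S', hcard', Or.inl hS'⟩
  · obtain ⟨S', hcard', hS'⟩ := hS.exists_succ_of_large_scale C hi hk hR hRcard.ge
      (fun t ht => (hρ t ht).1) hlarge
    exact ⟨S', hcard', Or.inr hS'⟩

end IsSmall
end Setup

/-- The initial state, with `z` as the only level. -/
def start (C : GrowthSetup G x₀ X W₀ J₀ r b K Λ κ τ ν lam) (hz : z ∈ X x₀) :
    GrowthState G x₀ z X W₀ J₀ κ r 0 where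
  level _ := {z}
  index _ := x₀
  rest := J₀
  part := W₀
  isLevelSeq := ⟨fun h hh => absurd hh h.not_lt_zero, fun h h' hle hh' => by omega⟩
  level_zero := rfl
  level_subset _ _ := Set.singleton_subset_iff.2 hz
  index_zero := rfl
  index_mem _ _ := Finset.mem_insert_self _ _
  index_lt_index h h' hlt hh' := by omega
  index_lt t ht _ _ := C.lt t ht
  rest_subset := subset_rfl
  part_subset _ _ := subset_rfl
  le_part t ht := by simpa using C.κ_mul_le t ht
  anticomplete _ _ h hh := absurd hh h.not_lt_zero

/-- Keeps only the remaining blocks in `J`. -/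
def restrict (S : GrowthState G x₀ z X W₀ J₀ κ r i) (J : Finset ι) (hJ : J ⊆ S.rest) :
    GrowthState G x₀ z X W₀ J₀ κ r i where
  __ := S
  rest := J
  index_lt t ht := S.index_lt t (hJ ht)
  rest_subset := hJ.trans S.rest_subset
  part_subset t ht := S.part_subset t (hJ ht)
  le_part t ht := S.le_part t (hJ ht)
  anticomplete t ht := S.anticomplete t (hJ ht)

lemma not_isSmall (C : GrowthSetup G x₀ X W₀ J₀ r b K Λ κ τ ν lam)
    (S : GrowthState G x₀ z X W₀ J₀ κ r b) : ¬ S.IsSmall Λ τ := fun hS => by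
  have hdensity : S.density ≤ 1 := by
    nlinarith [hS.density_mul_le, hS.density_pos C, one_le_pow₀ C.one_le_Λ (n := 3)]
  have := hS.pow_le.trans (mul_le_of_le_one_left (Nat.cast_nonneg _) hdensity)
  linarith [C.card_lt]

lemma start_isSmall [Finite V] (C : GrowthSetup G x₀ X W₀ J₀ r b K Λ κ τ ν lam) (hz : z ∈ X x₀) :
    (start C hz).IsSmall Λ τ := by
  have hX : 0 < ♯(X x₀) := cast_ncard_pos.2 ⟨z, hz⟩
  have hdensity : (start C hz).density = 1 / ♯(X x₀) := by simp [density, start]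
  refine ⟨?_, ?_, fun t _ => by simp [lower, start]⟩ <;> rw [hdensity]
  · rw [pow_zero, one_div_mul_eq_div, one_le_div hX]
    exact cast_ncard_le_card _
  · by_contra! hlarge
    rw [one_div_mul_eq_div, one_lt_div hX] at hlarge
    obtain ⟨t, ht⟩ : J₀.Nonempty :=
      Finset.card_pos.1 ((growthLength_pos C.r_ne_zero C.b_ne_zero).trans_le C.length_le)
    have := cast_ncard_pos.2 (C.nonempty t ht)
    have hmissed : ♯(X t \ nbhd G {z}) < ν * ♯(X t) := by
      refine C.nonDivergentPair x₀ (Finset.mem_insert_self _ _) t ht (C.lt t ht) _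
        (Set.singleton_subset_iff.2 hz) ?_
      rw [Set.ncard_singleton, Nat.cast_one]
      exact (mul_le_mul_of_nonneg_left hlarge.le C.ν_nonneg).trans (C.ν_mul_pow_le (by norm_num))
    have hcovered : ♯(nbhd G {z} ∩ X t) ≤ lam * ♯(X t) := by
      rw [nbhd_singleton]
      exact C.linkedLE x₀ (Finset.mem_insert_self _ _) t ht (C.lt t ht) z hz
    have hlam : lam ≤ 1 / 2 := by
      nlinarith [C.lam_mul_le, C.keptRatio_le_one, C.one_le_r, C.lam_nonneg]
    have hν : ν ≤ 1 / 2 := by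
      nlinarith [C.ν_mul_pow_le (j := 1) (by norm_num), C.le_Λ, C.one_le_b, C.ν_nonneg]
    have hsplit := cast_ncard_inter_add_sdiff (X t) (nbhd G {z})
    nlinarith

end GrowthState

variable {G : SimpleGraph V} {x₀ : ι} {z : V} {X W₀ : ι → Set V} {J₀ : Finset ι} {r b K : ℕ}
  {Λ κ τ ν lam : ℝ}

open GrowthState

theorem GrowthSetup.exists_coversHalf [Finite V]
    (C : GrowthSetup G x₀ X W₀ J₀ r b K Λ κ τ ν lam) (hz : z ∈ X x₀) :
    ∃ S : GrowthState G x₀ z X W₀ J₀ κ r b, S.rest.card = K ∧ S.CoversHalf := by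
  have hall : ∀ i ≤ b, ∃ S : GrowthState G x₀ z X W₀ J₀ κ r i,
      growthLength r K (b - i) ≤ S.rest.card ∧ (S.IsSmall Λ τ ∨ S.CoversHalf) := by
    intro i
    induction i with
    | zero => exact fun _ => ⟨start C hz, C.length_le, Or.inl (start_isSmall C hz)⟩
    | succ i ih =>
      intro hi
      obtain ⟨S, hcard, hS⟩ := ih (by omega)
      rw [show b - i = b - (i + 1) + 1 by omega, growthLength] at hcard
      have hk := growthLength_mono C.r_ne_zero K (Nat.sub_le b (i + 1))
      rcases hS with hS | hS
      · obtain ⟨S', hcard', hS'⟩ := hS.exists_succ C hi hk hcard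
        exact ⟨S', hcard'.ge, hS'⟩
      · obtain ⟨S', hcard', hS'⟩ := exists_coversHalf_succ C hi subset_rfl hS hk
          (le_trans (Nat.mul_le_mul_right _ (by nlinarith)) hcard)
        exact ⟨S', hcard'.ge, Or.inr hS'⟩
  obtain ⟨S, hcard, hS⟩ := hall b le_rfl
  rw [Nat.sub_self, growthLength] at hcard
  obtain ⟨J, hJ, hJcard⟩ := Finset.exists_subset_card_eq hcard
  exact ⟨S.restrict J hJ, hJcard, fun t ht => hS.resolve_left (not_isSmall C S) t (hJ ht)⟩

end Growth

/-- The sets `Z t ⊆ T` cover the corresponding `B t` and miss `B t'` whenever `prec t t'`. A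
levelling with last level `T` grades `B` forwards if this holds for `prec = (· > ·)` and backwards
if it holds for `prec = (· < ·)`. -/
def IsGradedBy {ι : Type*} (G : SimpleGraph V) (prec : ι → ι → Prop) (T : Set V) (R : Finset ι)
    (Z B : ι → Set V) : Prop :=
  ∀ t ∈ R, Z t ⊆ T ∧ Covers G (Z t) (B t) ∧ ∀ t' ∈ R, prec t t' → Anticomplete G (Z t) (B t')

lemma IsGradedBy.mono {ι : Type*} {G : SimpleGraph V} {prec : ι → ι → Prop} {T : Set V}
    {R R' : Finset ι} {Z B B' : ι → Set V} (h : IsGradedBy G prec T R Z B) (hR : R' ⊆ R)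
    (hB : ∀ t ∈ R', B' t ⊆ B t) : IsGradedBy G prec T R' Z B' := fun t ht =>
  ⟨(h t (hR ht)).1, (h t (hR ht)).2.1.mono subset_rfl (hB t ht),
    fun t' ht' hlt => ((h t (hR ht)).2.2 t' (hR ht') hlt).mono subset_rfl (hB t' ht')⟩

lemma IsGradedBy.insert {ι : Type*} [DecidableEq ι] {G : SimpleGraph V} {prec : ι → ι → Prop}
    {T Z₀ : Set V} {R : Finset ι} {Z B : ι → Set V} {a : ι} (h : IsGradedBy G prec T R Z B)
    (ha : a ∉ R) (hirrefl : ¬ prec a a) (hfirst : ∀ t ∈ R, ¬ prec t a) (hZ₀ : Z₀ ⊆ T)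
    (hcov : Covers G Z₀ (B a)) (hanti : ∀ t ∈ R, Anticomplete G Z₀ (B t)) :
    IsGradedBy G prec T (insert a R) (Function.update Z a Z₀) B := by
  intro t ht
  rcases Finset.mem_insert.1 ht with rfl | htR
  · rw [Function.update_self]
    refine ⟨hZ₀, hcov, fun t' ht' hprec => ?_⟩
    rcases Finset.mem_insert.1 ht' with rfl | ht'R
    exacts [absurd hprec hirrefl, hanti t' ht'R]
  · rw [Function.update_of_ne (ne_of_mem_of_not_mem htR ha)]
    refine ⟨(h t htR).1, (h t htR).2.1, fun t' ht' hprec => ?_⟩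
    rcases Finset.mem_insert.1 ht' with rfl | ht'R
    exacts [absurd hprec (hfirst t htR), (h t htR).2.2 t' ht'R hprec]

section FixedOutside
variable {ι : Type*} {R : Finset ι} {e : Equiv.Perm ι} {a b t : ι}

lemma perm_apply_mem (he : ∀ t ∉ R, e t = t) (ht : t ∈ R) : e t ∈ R := by
  by_contra h
  exact h (by rwa [e.injective (he _ h)])

variable [DecidableEq ι]

lemma swap_apply_eq_self_of_notMem (ha : a ∈ R) (hb : b ∈ R) (ht : t ∉ R) :
    Equiv.swap a b t = t :=
  Equiv.swap_apply_of_ne_of_ne (ne_of_mem_of_not_mem ha ht).symm (ne_of_mem_of_not_mem hb ht).symm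

lemma swap_apply_mem (ha : a ∈ R) (hb : b ∈ R) (ht : t ∈ R) : Equiv.swap a b t ∈ R :=
  perm_apply_mem (fun _ => swap_apply_eq_self_of_notMem ha hb) ht

end FixedOutside

section Forward
variable {ι : Type*} [Finite V] {G : SimpleGraph V} {T : Set V} {R : Finset ι} {D : ι → Set V}
  {a : ι}

/-- Shrink a subset of `T` covering half of some block until it is minimal: then no block is
mostly covered, because single vertices cover at most a quarter. -/
lemma exists_half_cover (hR : R.Nonempty) (hne : ∀ t ∈ R, (D t).Nonempty)
    (hcov : ∀ t ∈ R, Covers G T (D t)) (hlink : ∀ t ∈ R, LinkedLE G (1 / 4) T (D t)) :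
    ∃ Z ⊆ T, (∃ t ∈ R, 1 / 2 * ♯(D t) ≤ ♯(nbhd G Z ∩ D t)) ∧
      ∀ t ∈ R, ♯(D t) ≤ 4 * ♯(D t \ nbhd G Z) := by
  obtain ⟨t₁, ht₁⟩ := hR
  obtain ⟨Z, ⟨hZT, t₀, ht₀, hhalf⟩, hmin⟩ := exists_minimal_of_wellFoundedLT
    (fun Z => Z ⊆ T ∧ ∃ t ∈ R, 1 / 2 * ♯(D t) ≤ ♯(nbhd G Z ∩ D t)) ⟨T, subset_rfl, t₁, ht₁, by
      rw [Set.inter_eq_right.2 (covers_iff.1 (hcov t₁ ht₁))]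
      linarith [Nat.cast_nonneg (α := ℝ) (D t₁).ncard]⟩
  obtain ⟨v, hv⟩ : Z.Nonempty := by
    by_contra! hZ
    rw [hZ, nbhd_empty, Set.empty_inter, Set.ncard_empty] at hhalf
    linarith [cast_ncard_pos.2 (hne t₀ ht₀)]
  refine ⟨Z, hZT, ⟨t₀, ht₀, hhalf⟩, fun t ht => ?_⟩
  have hless : ♯(nbhd G (Z \ {v}) ∩ D t) < 1 / 2 * ♯(D t) := by
    by_contra! hge
    exact (hmin ⟨Set.sdiff_subset.trans hZT, t, ht, hge⟩ Set.sdiff_subset hv).2 rfl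
  have hunion : ♯(nbhd G Z ∩ D t) ≤ ♯(nbhd G (Z \ {v}) ∩ D t) + ♯(nbhd G {v} ∩ D t) := by
    rw [← Set.sdiff_union_of_subset (Set.singleton_subset_iff.2 hv), nbhd_union,
      Set.union_inter_distrib_right, Set.sdiff_union_of_subset (Set.singleton_subset_iff.2 hv)]
    exact cast_ncard_union_le _ _
  rw [nbhd_singleton] at hunion
  linarith [hlink t ht v (hZT hv), cast_ncard_inter_add_sdiff (D t) (nbhd G Z)]

lemma exists_forward_step [DecidableEq ι] (hne : ∀ t ∈ insert a R, (D t).Nonempty)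
    (hcov : ∀ t ∈ insert a R, Covers G T (D t))
    (hlink : ∀ t ∈ insert a R, LinkedLE G (1 / 4) T (D t)) :
    ∃ e : Equiv.Perm ι, (∀ t ∉ insert a R, e t = t) ∧ ∃ Z ⊆ T, ∃ Y : ι → Set V,
      (∀ t ∈ insert a R, Y t ⊆ D (e t) ∧ ♯(D (e t)) ≤ 4 * ♯(Y t)) ∧ Covers G Z (Y a) ∧
      ∀ t, t ≠ a → Anticomplete G Z (Y t) := by
  obtain ⟨Z, hZT, ⟨t₀, ht₀, hhalf⟩, hquarter⟩ :=
    exists_half_cover (Finset.insert_nonempty a R) hne hcov hlink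
  have ha := Finset.mem_insert_self a R
  set Y : ι → Set V := Function.update (fun t => D (Equiv.swap a t₀ t) \ nbhd G Z) a
    (nbhd G Z ∩ D t₀)
  have hYa : Y a = nbhd G Z ∩ D t₀ := Function.update_self ..
  have hY (t) (hta : t ≠ a) : Y t = D (Equiv.swap a t₀ t) \ nbhd G Z := Function.update_of_ne hta ..
  refine ⟨Equiv.swap a t₀, fun t ht => swap_apply_eq_self_of_notMem ha ht₀ ht, Z, hZT, Y,
    fun t ht => ?_, ?_, fun t hta => ?_⟩
  · rcases eq_or_ne t a with rfl | hta
    · rw [hYa, Equiv.swap_apply_left]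
      exact ⟨Set.inter_subset_right, by linarith⟩
    · rw [hY t hta]
      exact ⟨Set.sdiff_subset, hquarter _ (swap_apply_mem ha ht₀ ht)⟩
  · rw [hYa, covers_iff]
    exact Set.inter_subset_left
  · rw [hY t hta]
    exact anticomplete_sdiff_nbhd Z _

theorem exists_isGradedBy_gt [LinearOrder ι] {μ : ℝ} (hμ0 : 0 ≤ μ) (hμ : μ * 4 ^ R.card ≤ 1)
    (hne : ∀ t ∈ R, (D t).Nonempty) (hcov : ∀ t ∈ R, Covers G T (D t))
    (hlink : ∀ t ∈ R, LinkedLE G μ T (D t)) :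
    ∃ e : Equiv.Perm ι, (∀ t ∉ R, e t = t) ∧ ∃ Z B : ι → Set V,
      (∀ t ∈ R, B t ⊆ D (e t) ∧ ♯(D (e t)) ≤ 4 ^ R.card * ♯(B t)) ∧
      IsGradedBy G (· > ·) T R Z B := by
  induction R using Finset.induction_on_max generalizing D μ with
  | empty => exact ⟨1, by simp, fun _ => ∅, fun _ => ∅, by simp, by simp [IsGradedBy]⟩
  | insert a R ha ih =>
    have haR : a ∉ R := fun h => (ha a h).false
    rw [Finset.card_insert_of_notMem haR, pow_succ] at hμ ⊢
    have h4 : (1 : ℝ) ≤ 4 ^ R.card := one_le_pow₀ (by norm_num)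
    obtain ⟨e₀, he₀, Z₀, hZ₀T, Y, hY, hcovY, hanti⟩ := exists_forward_step hne hcov
      fun t ht => (hlink t ht).mono (by nlinarith) subset_rfl
    have hmem (t) (ht : t ∈ R) : t ∈ insert a R := Finset.mem_insert_of_mem ht
    have he₀mem (t) (ht : t ∈ R) : e₀ t ∈ insert a R := perm_apply_mem he₀ (hmem t ht)
    obtain ⟨e, he, Z, B, hB, hgraded⟩ := ih (D := Y) (μ := μ / (1 / 4)) (by positivity)
      (by linarith)
      (fun t ht => nonempty_of_mul_le (cast_ncard_pos.2 (hne _ (he₀mem t ht))) (hY t (hmem t ht)).2)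
      (fun t ht => (hcov _ (he₀mem t ht)).mono subset_rfl (hY t (hmem t ht)).1)
      (fun t ht => (hlink _ (he₀mem t ht)).sub hμ0 (by norm_num) subset_rfl (hY t (hmem t ht)).1
        (by linarith [(hY t (hmem t ht)).2]))
    have hupdate (t) (ht : t ∈ R) : Function.update B a (Y a) t = B t :=
      Function.update_of_ne (ne_of_mem_of_not_mem ht haR) _ _
    refine ⟨e.trans e₀, fun t ht => ?_, Function.update Z a Z₀, Function.update B a (Y a),
      fun t ht => ?_, ?_⟩
    · rw [Equiv.trans_apply, he t (mt (hmem t) ht), he₀ t ht]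
    · rw [Equiv.trans_apply]
      rcases Finset.mem_insert.1 ht with rfl | htR
      · rw [he _ haR, Function.update_self]
        exact ⟨(hY t ht).1, by nlinarith [(hY t ht).2, Nat.cast_nonneg (α := ℝ) (Y t).ncard]⟩
      · have hYt := hY (e t) (hmem _ (perm_apply_mem he htR))
        rw [hupdate t htR]
        exact ⟨(hB t htR).1.trans hYt.1, by linarith [(hB t htR).2, hYt.2]⟩
    · refine (hgraded.mono subset_rfl fun t ht => (hupdate t ht).subset).insert haR (lt_irrefl a)
        (fun t ht => (ha t ht).not_gt) hZ₀T (by rwa [Function.update_self]) fun t ht => ?_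
      rw [hupdate t ht]
      have het := perm_apply_mem he ht
      exact (hanti _ (ne_of_mem_of_not_mem het haR)).mono subset_rfl (hB t ht).1

end Forward

section Backward
variable {ι : Type*} [Finite V] {G : SimpleGraph V} {T : Set V} {Q R : Finset ι}
  {D Y : ι → Set V} {Λ μ η : ℝ} {k : ℕ} {a : ι}

lemma LinkedLE.half_le_transpose {X Y : Set V} (h : LinkedLE G η X Y) (hη : 0 ≤ η) :
    1 / 2 * ♯Y ≤ ♯({v | ♯(G.neighborSet v ∩ X) ≤ 2 * η * ♯X} ∩ Y) := by
  set H : Set V := {v | ♯(G.neighborSet v ∩ X) ≤ 2 * η * ♯X}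
  have hsplit := cast_ncard_inter_add_sdiff Y H
  by_contra! hlt
  have hbad : (Y \ H).Nonempty := cast_ncard_pos.1 (by
    linarith [Nat.cast_nonneg (α := ℝ) (H ∩ Y).ncard])
  have hfrom : ∑ u ∈ X.toFinite.toFinset, ♯(G.neighborSet u ∩ (Y \ H)) ≤ ♯X * (η * ♯Y) := by
    rw [Set.ncard_eq_toFinset_card X, ← nsmul_eq_mul]
    refine Finset.sum_le_card_nsmul _ _ _ fun u hu => ?_
    exact (cast_ncard_mono (Set.inter_subset_inter_right _ Set.sdiff_subset)).trans
      (h u (by simpa using hu))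
  have hinto : ♯(Y \ H) * (2 * η * ♯X) <
      ∑ v ∈ (Y \ H).toFinite.toFinset, ♯(G.neighborSet v ∩ X) := by
    rw [Set.ncard_eq_toFinset_card (Y \ H), ← nsmul_eq_mul, ← Finset.sum_const]
    refine Finset.sum_lt_sum_of_nonempty (by simpa using hbad) fun v hv => ?_
    exact not_le.1 (((Set.Finite.mem_toFinset _).1 hv).2 : ¬ v ∈ H)
  rw [sum_ncard_neighborSet_inter_comm] at hfrom
  have hηX : 0 ≤ ♯X * η := by positivity
  nlinarith

lemma exists_linkedLE_of_subset {B : Set V} (hη : 0 ≤ η)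
    (hlink : ∀ t ∈ R, ∀ t' ∈ R, t ≠ t' → LinkedLE G η (Y t) (Y t')) (ha : a ∈ R)
    (hB : B ⊆ Y a) :
    ∃ Y' : ι → Set V, Y' a = B ∧ (∀ t ∈ R, t ≠ a → Y' t ⊆ Y t ∧ 1 / 2 * ♯(Y t) ≤ ♯(Y' t)) ∧
      ∀ t ∈ R, ∀ t' ∈ R, t ≠ t' → LinkedLE G (2 * η) (Y' t) (Y' t') := by
  classical
  set H : Set V := {v | ♯(G.neighborSet v ∩ B) ≤ 2 * η * ♯B}
  have hhalf (t) (ht : t ∈ R) (hta : t ≠ a) : 1 / 2 * ♯(Y t) ≤ ♯(H ∩ Y t) :=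
    ((hlink a ha t ht hta.symm).mono le_rfl hB).half_le_transpose hη
  have hsub (t) : Function.update (fun t => H ∩ Y t) a B t ⊆ Y t := by
    rcases eq_or_ne t a with rfl | hta
    · rwa [Function.update_self]
    · rw [Function.update_of_ne hta]
      exact Set.inter_subset_right
  refine ⟨Function.update (fun t => H ∩ Y t) a B, Function.update_self .., fun t ht hta => ?_,
    fun t ht t' ht' htt' => ?_⟩
  · refine ⟨hsub t, ?_⟩
    rw [Function.update_of_ne hta]
    exact hhalf t ht hta
  · rcases eq_or_ne t' a with rfl | ht'a
    · rw [Function.update_self, Function.update_of_ne htt']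
      exact fun v hv => hv.1
    · have hsize : 1 / 2 * ♯(Y t') ≤ ♯(Function.update (fun t => H ∩ Y t) a B t') := by
        rw [Function.update_of_ne ht'a]
        exact hhalf t' ht' ht'a
      convert (hlink t ht t' ht' htt').sub hη (by norm_num) (hsub t) (hsub t') hsize using 1
      ring

lemma exists_backward_step [DecidableEq ι] (hη : 0 ≤ η) (hΛ : 1 ≤ Λ) (hQ : insert a Q ⊆ R)
    (ha : a ∉ Q)
    (hscale : ∀ t ∈ insert a Q, HasDegreeScale G Λ k T (D t))
    (hne : ∀ t ∈ insert a Q, (D t).Nonempty) (hlinkT : ∀ t ∈ insert a Q, LinkedLE G (1 / 4) T (D t))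
    (hlink : ∀ t ∈ R, ∀ t' ∈ R, t ≠ t' → LinkedLE G η (D t) (D t')) :
    ∃ Z ⊆ T, ∃ Y : ι → Set V, (∀ t ∈ R, Y t ⊆ D t ∧ (t ≠ a → 1 / 4 * ♯(D t) ≤ ♯(Y t))) ∧
      ♯(D a) ≤ 8 * (Q.card + 1) * Λ * ♯(Y a) ∧ Covers G Z (Y a) ∧
      (∀ t ∈ Q, Anticomplete G Z (Y t)) ∧
      ∀ t ∈ R, ∀ t' ∈ R, t ≠ t' → LinkedLE G (4 * η) (Y t) (Y t') := by
  obtain ⟨Z, hZT, hZa, hZhalf⟩ := exists_fair_cover hΛ (Finset.mem_insert_self a Q) hscale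
    hne hlinkT
  rw [Finset.card_insert_of_notMem ha, Nat.cast_succ] at hZa
  set D' : ι → Set V := fun t => if t ∈ Q then D t \ nbhd G Z else D t
  have hD' (t) : D' t ⊆ D t ∧ 1 / 2 * ♯(D t) ≤ ♯(D' t) := by
    by_cases ht : t ∈ Q
    · simp only [D', if_pos ht]
      refine ⟨Set.sdiff_subset, ?_⟩
      linarith [cast_ncard_inter_add_sdiff (D t) (nbhd G Z), hZhalf t (Finset.mem_insert_of_mem ht)]
    · simp only [D', if_neg ht]
      exact ⟨subset_rfl, by linarith [Nat.cast_nonneg (α := ℝ) (D t).ncard]⟩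
  obtain ⟨Y, hYa, hY, hYlink⟩ := exists_linkedLE_of_subset (η := η / (1 / 2)) (by positivity)
    (fun t ht t' ht' htt' => (hlink t ht t' ht' htt').sub hη (by norm_num) (hD' t).1 (hD' t').1
      (hD' t').2) (hQ (Finset.mem_insert_self a Q)) (B := nbhd G Z ∩ D a)
    (by simp only [D', if_neg ha]; exact Set.inter_subset_right)
  refine ⟨Z, hZT, Y, fun t ht => ?_, by rwa [hYa], ?_, fun t ht => ?_, fun t ht t' ht' htt' => ?_⟩
  · rcases eq_or_ne t a with rfl | hta
    · exact ⟨hYa ▸ Set.inter_subset_right, fun h => absurd rfl h⟩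
    · exact ⟨(hY t ht hta).1.trans (hD' t).1, fun _ => by linarith [(hY t ht hta).2, (hD' t).2]⟩
  · rw [hYa, covers_iff]
    exact Set.inter_subset_left
  · have hYt := (hY t (hQ (Finset.mem_insert_of_mem ht)) (ne_of_mem_of_not_mem ht ha)).1
    simp only [D', if_pos ht] at hYt
    exact (anticomplete_sdiff_nbhd Z _).mono subset_rfl hYt
  · convert hYlink t ht t' ht' htt' using 1
    ring

theorem exists_isGradedBy_lt [LinearOrder ι] (hη : 0 ≤ η) (hΛ : 1 ≤ Λ) (hμ0 : 0 ≤ μ)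
    (hμ : μ * 4 ^ Q.card ≤ 1) (hQ : Q ⊆ R) (hscale : ∀ t ∈ Q, HasDegreeScale G Λ k T (D t))
    (hne : ∀ t ∈ Q, (D t).Nonempty) (hlinkT : ∀ t ∈ Q, LinkedLE G μ T (D t))
    (hlink : ∀ t ∈ R, ∀ t' ∈ R, t ≠ t' → LinkedLE G η (D t) (D t')) :
    ∃ Z B : ι → Set V, IsGradedBy G (· < ·) T Q Z B ∧
      (∀ t ∈ Q, ♯(D t) ≤ 8 * Q.card * Λ * 4 ^ Q.card * ♯(B t)) ∧
      (∀ t ∈ R, B t ⊆ D t ∧ (t ∉ Q → ♯(D t) ≤ 4 ^ Q.card * ♯(B t))) ∧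
      ∀ t ∈ R, ∀ t' ∈ R, t ≠ t' → LinkedLE G (4 ^ Q.card * η) (B t) (B t') := by
  induction Q using Finset.induction_on_min generalizing D μ η with
  | empty => exact ⟨fun _ => ∅, D, by simp [IsGradedBy], by simp, by simp, by simpa using hlink⟩
  | insert a Q ha ih =>
    have haQ : a ∉ Q := fun h => (ha a h).false
    rw [Finset.card_insert_of_notMem haQ, pow_succ] at hμ
    have h4 : (1 : ℝ) ≤ 4 ^ Q.card := one_le_pow₀ (by norm_num)
    obtain ⟨Z₀, hZ₀T, Y, hY, hYa, hcov, hanti, hYlink⟩ := exists_backward_step hη hΛ hQ haQ hscale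
      hne (fun t ht => (hlinkT t ht).mono (by nlinarith) subset_rfl) hlink
    have hQR := (Finset.subset_insert a Q).trans hQ
    have hmem (t) (ht : t ∈ Q) : t ∈ insert a Q := Finset.mem_insert_of_mem ht
    have hquarter (t) (ht : t ∈ Q) : 1 / 4 * ♯(D t) ≤ ♯(Y t) :=
      (hY t (hQR ht)).2 (ne_of_mem_of_not_mem ht haQ)
    obtain ⟨Z, B, hgraded, hBQ, hBR, hBlink⟩ := ih (D := Y) (μ := μ / (1 / 4)) (η := 4 * η)
      (by positivity) (by positivity) (by linarith) hQR
      (fun t ht u hu => hscale t (hmem t ht) u ((hY t (hQR ht)).1 hu))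
      (fun t ht => nonempty_of_mul_le (C := 4) (cast_ncard_pos.2 (hne t (hmem t ht)))
        (by linarith [hquarter t ht]))
      (fun t ht => (hlinkT t (hmem t ht)).sub hμ0 (by norm_num) subset_rfl (hY t (hQR ht)).1
        (hquarter t ht)) hYlink
    have haR := hQ (Finset.mem_insert_self a Q)
    refine ⟨Function.update Z a Z₀, B, hgraded.insert haQ (lt_irrefl a)
      (fun t ht => (ha t ht).not_gt) hZ₀T (hcov.mono subset_rfl (hBR a haR).1)
      fun t ht => (hanti t ht).mono subset_rfl (hBR t (hQR ht)).1, fun t ht => ?_, fun t ht => ?_,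
      fun t ht t' ht' htt' => ?_⟩
    · rw [Finset.card_insert_of_notMem haQ, pow_succ]
      push_cast
      rcases Finset.mem_insert.1 ht with rfl | htQ
      · calc ♯(D t) ≤ 8 * (Q.card + 1) * Λ * ♯(Y t) := hYa
          _ ≤ 8 * (Q.card + 1) * Λ * (4 * (4 ^ Q.card * ♯(B t))) := by
              gcongr
              linarith [(hBR t haR).2 haQ, Nat.cast_nonneg (α := ℝ) (Y t).ncard]
          _ = _ := by ring
      · calc ♯(D t) ≤ 4 * (8 * Q.card * Λ * 4 ^ Q.card * ♯(B t)) := by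
              linarith [hquarter t htQ, hBQ t htQ]
          _ ≤ 4 * (8 * (Q.card + 1) * Λ * 4 ^ Q.card * ♯(B t)) := by gcongr; linarith
          _ = _ := by ring
    · refine ⟨(hBR t ht).1.trans (hY t ht).1, fun htQ => ?_⟩
      rw [Finset.mem_insert, not_or] at htQ
      rw [Finset.card_insert_of_notMem haQ, pow_succ]
      linarith [(hBR t ht).2 htQ.2, (hY t ht).2 htQ.1]
    · rw [Finset.card_insert_of_notMem haQ, pow_succ, mul_assoc]
      exact hBlink t ht t' ht' htt'

end Backward

section Levellings
variable {G : SimpleGraph V} {L M : ℕ → Set V} {a b k : ℕ} {I J : Finset ℤ} {A B Z Zb : ℤ → Set V}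

lemma IsLevelSeq.isLevelling (hL : IsLevelSeq G L k) (hk : 1 ≤ k) (hroot : (L 0).ncard = 1)
    (hdisj : ∀ i ≤ k, ∀ j ≤ k, i ≠ j → Disjoint (L i) (L j)) : IsLevelling G L k := by
  refine ⟨hk, hroot, hdisj, fun i hi hik => ?_, fun i _ hik h hh => hL.anticomplete h i hh hik⟩
  obtain ⟨i, rfl⟩ := Nat.exists_eq_add_of_le' hi
  exact hL.covers i hik

lemma IsLevelSeq.reaches (hL : IsLevelSeq G L k) (hroot : (L 0).ncard = 1)
    (hdisj : ∀ i ≤ k, ∀ j ≤ k, i ≠ j → Disjoint (L i) (L j))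
    (hdisjB : ∀ i ≤ k, ∀ t ∈ J, Disjoint (L i) (B t)) (hcov : ∀ t ∈ J, Covers G (L k) (B t))
    (hanti : ∀ i < k, ∀ t ∈ J, Anticomplete G (L i) (B t)) : Reaches G L k (⋃ t ∈ J, B t) := by
  have hpush := hL.push (N := ⋃ t ∈ J, B t) subset_rfl
    (fun v hv => by
      obtain ⟨t, ht, hvt⟩ := Set.mem_iUnion₂.1 hv
      exact hcov t ht v hvt)
    (fun i hi u hu v hv => by
      obtain ⟨t, ht, hvt⟩ := Set.mem_iUnion₂.1 hv
      exact hanti i hi t ht u hu v hvt)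
  rw [Function.update_eq_self] at hpush
  have hunion (i) (hi : i ≤ k) : Disjoint (L i) (⋃ t ∈ J, B t) :=
    Set.disjoint_iUnion₂_right.2 (hdisjB i hi)
  have hfun : (fun i => if i = k + 1 then ⋃ t ∈ J, B t else L i) =
      Function.update L (k + 1) (⋃ t ∈ J, B t) := funext fun i => (Function.update_apply ..).symm
  rw [Reaches, hfun]
  refine hpush.isLevelling (Nat.succ_pos k) ?_ fun i hi j hj hij => ?_
  · rwa [Function.update_of_ne (Nat.succ_ne_zero k).symm]
  · rcases hi.eq_or_lt with rfl | hi <;> rcases hj.eq_or_lt with rfl | hj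
    · exact absurd rfl hij
    · rw [Function.update_self, Function.update_of_ne hj.ne]
      exact (hunion j (by omega)).symm
    · rw [Function.update_self, Function.update_of_ne hi.ne]
      exact hunion i (by omega)
    · rw [Function.update_of_ne hi.ne, Function.update_of_ne hj.ne]
      exact hdisj i (by omega) j (by omega) hij

lemma IsGradedBy.gradesFwd (h : IsGradedBy G (· > ·) (L k) J Z B)
    (hreach : Reaches G L k (⋃ t ∈ J, B t)) : GradesFwd G L k J B := by
  refine ⟨hreach, fun j _ => ⟨⋃ t ∈ J.filter (j ≤ ·), Z t, ?_, fun i hi hji => ?_,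
    fun i hi hij u hu v hv => ?_⟩⟩
  · exact Set.iUnion₂_subset fun t ht => (h t (Finset.mem_filter.1 ht).1).1
  · exact (h i hi).2.1.mono (Set.subset_biUnion_of_mem (u := Z)
      (Finset.mem_coe.2 (Finset.mem_filter.2 ⟨hi, hji⟩))) subset_rfl
  · obtain ⟨t, ht, hut⟩ := Set.mem_iUnion₂.1 hu
    obtain ⟨htJ, hjt⟩ := Finset.mem_filter.1 ht
    exact (h t htJ).2.2 i hi (hij.trans_le hjt) u hut v hv

lemma IsGradedBy.gradesBwd (h : IsGradedBy G (· < ·) (L k) J Z B)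
    (hreach : Reaches G L k (⋃ t ∈ J, B t)) : GradesBwd G L k J B := by
  refine ⟨hreach, fun j _ => ⟨⋃ t ∈ J.filter (· ≤ j), Z t, ?_, fun i hi hij => ?_,
    fun i hi hji u hu v hv => ?_⟩⟩
  · exact Set.iUnion₂_subset fun t ht => (h t (Finset.mem_filter.1 ht).1).1
  · exact (h i hi).2.1.mono (Set.subset_biUnion_of_mem (u := Z)
      (Finset.mem_coe.2 (Finset.mem_filter.2 ⟨hi, hij⟩))) subset_rfl
  · obtain ⟨t, ht, hut⟩ := Set.mem_iUnion₂.1 hu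
    obtain ⟨htJ, htj⟩ := Finset.mem_filter.1 ht
    exact (h t htJ).2.2 i hi (htj.trans_lt hji) u hut v hv

lemma IsBlockade.disjoint_of_subset (hA : IsBlockade I A) {S T : Set V} {i j : ℤ}
    (hS : i ∈ I ∧ S ⊆ A i) (hT : j ∈ I ∧ T ⊆ A j) (hij : i ≠ j) : Disjoint S T :=
  (hA.2 i hS.1 j hT.1 hij).mono hS.2 hT.2

/-- In a rainbow situation all disjointness requirements are automatic. -/
theorem isBiGrading_of_rainbow (hA : IsBlockade I A) (hrainbow : RainbowBiLevelling I A L a M b J B)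
    (hL : IsLevelSeq G L a) (hM : IsLevelSeq G M b) (ha : 1 ≤ a) (hb : 1 ≤ b)
    (hroot : (L 0).ncard = 1) (hLM : L 0 = M 0)
    (hpar : ∀ i ∈ Finset.Icc 1 b, ∀ j ∈ Finset.Icc 1 a, Anticomplete G (M i) (L j))
    (hne : ∀ t ∈ J, (B t).Nonempty) (hLB : ∀ i < a, ∀ t ∈ J, Anticomplete G (L i) (B t))
    (hMB : ∀ i < b, ∀ t ∈ J, Anticomplete G (M i) (B t)) (hZ : IsGradedBy G (· > ·) (L a) J Z B)
    (hZb : IsGradedBy G (· < ·) (M b) J Zb B) : IsBiGrading G L a M b J B := by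
  obtain ⟨qB, qL, qM, hqB, hqL, hqM, hBinj, hLinj, hMinj, hBL, hBM, hLM'⟩ := hrainbow
  have hLdisj (i) (hi : i ≤ a) (j) (hj : j ≤ a) (hij : i ≠ j) : Disjoint (L i) (L j) :=
    hA.disjoint_of_subset (hqL i hi) (hqL j hj) fun h => hij (hLinj i hi j hj h)
  have hLdisjM (i) (hi : i ≤ a) (j) (hj1 : 1 ≤ j) (hj : j ≤ b) : Disjoint (L i) (M j) :=
    hA.disjoint_of_subset (hqL i hi) (hqM j hj1 hj) (hLM' i hi j hj1 hj)
  have hMdisj (i) (hi : i ≤ b) (j) (hj : j ≤ b) (hij : i ≠ j) : Disjoint (M i) (M j) := by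
    rcases Nat.eq_zero_or_pos i with rfl | hi1 <;> rcases Nat.eq_zero_or_pos j with rfl | hj1
    · exact absurd rfl hij
    · exact hLM ▸ hLdisjM 0 (Nat.zero_le a) j hj1 hj
    · exact hLM ▸ (hLdisjM 0 (Nat.zero_le a) i hi1 hi).symm
    · exact hA.disjoint_of_subset (hqM i hi1 hi) (hqM j hj1 hj)
        fun h => hij (hMinj i hi1 hi j hj1 hj h)
  have hLdisjB (i) (hi : i ≤ a) (t) (ht : t ∈ J) : Disjoint (L i) (B t) :=
    hA.disjoint_of_subset (hqL i hi) (hqB t ht) (hBL t ht i hi).symm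
  have hMdisjB (i) (hi : i ≤ b) (t) (ht : t ∈ J) : Disjoint (M i) (B t) := by
    rcases Nat.eq_zero_or_pos i with rfl | hi1
    · exact hLM ▸ hLdisjB 0 (Nat.zero_le a) t ht
    · exact hA.disjoint_of_subset (hqM i hi1 hi) (hqB t ht) (hBM t ht i hi1 hi).symm
  have hLreach := hL.reaches hroot hLdisj hLdisjB
    (fun t ht => (hZ t ht).2.1.mono (hZ t ht).1 subset_rfl) hLB
  have hMreach := hM.reaches (hLM ▸ hroot) hMdisj hMdisjB
    (fun t ht => (hZb t ht).2.1.mono (hZb t ht).1 subset_rfl) hMB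
  refine ⟨⟨⟨hne, fun i hi j hj hij => ?_⟩, hL.isLevelling ha hroot hLdisj,
    hM.isLevelling hb (hLM ▸ hroot) hMdisj, ⟨hLM, ?_, ?_⟩, hMreach, hZ.gradesFwd hLreach⟩,
    hZb.gradesBwd hMreach⟩
  · exact hA.disjoint_of_subset (hqB i hi) (hqB j hj) fun h => hij (hBinj i hi j hj h)
  · refine Set.disjoint_iUnion₂_left.2 fun i hi => Set.disjoint_iUnion₂_right.2 fun j hj => ?_
    rw [Finset.mem_Icc] at hi hj
    exact (hLdisjM j hj.2 i hi.1 hi.2).symm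
  · intro u hu v hv
    obtain ⟨i, hi, hui⟩ := Set.mem_iUnion₂.1 hu
    obtain ⟨j, hj, hvj⟩ := Set.mem_iUnion₂.1 hv
    exact hpar i hi j hj u hui v hvj

end Levellings

section Append
variable {α : Type*} {u v : ℕ → α} {a b m : ℕ}

/-- The sequence `u 0, …, u a, v 0, v 1, …`. -/
def appendSeq (u : ℕ → α) (a : ℕ) (v : ℕ → α) (m : ℕ) : α :=
  if m ≤ a then u m else v (m - (a + 1))

lemma appendSeq_of_le (hm : m ≤ a) : appendSeq u a v m = u m := if_pos hm

@[simp] lemma appendSeq_add : appendSeq u a v (a + 1 + m) = v m := by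
  rw [appendSeq, if_neg (by omega), Nat.add_sub_cancel_left]

lemma le_or_exists_eq_add (hm : m ≤ a + 1 + b) : m ≤ a ∨ ∃ m' ≤ b, m = a + 1 + m' := by
  rcases le_or_gt m a with h | h
  · exact Or.inl h
  · exact Or.inr ⟨m - (a + 1), by omega, by omega⟩

lemma forall_appendSeq {p : ℕ → α → Prop} (hu : ∀ m ≤ a, p m (u m))
    (hv : ∀ m ≤ b, p (a + 1 + m) (v m)) : ∀ m ≤ a + 1 + b, p m (appendSeq u a v m) := by
  intro m hm
  rcases le_or_exists_eq_add hm with hma | ⟨m, hmb, rfl⟩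
  · rw [appendSeq_of_le hma]
    exact hu m hma
  · rw [appendSeq_add]
    exact hv m hmb

lemma appendSeq_injOn (hu : ∀ m ≤ a, ∀ m' ≤ a, u m = u m' → m = m')
    (hv : ∀ m ≤ b, ∀ m' ≤ b, v m = v m' → m = m') (huv : ∀ m ≤ a, ∀ m' ≤ b, u m ≠ v m') :
    ∀ m ≤ a + 1 + b, ∀ m' ≤ a + 1 + b, appendSeq u a v m = appendSeq u a v m' → m = m' := by
  intro m hm m' hm' h
  rcases le_or_exists_eq_add hm with hma | ⟨m, hmb, rfl⟩ <;>
    rcases le_or_exists_eq_add hm' with hma' | ⟨m', hmb', rfl⟩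
  · rw [appendSeq_of_le hma, appendSeq_of_le hma'] at h
    exact hu m hma m' hma' h
  · rw [appendSeq_of_le hma, appendSeq_add] at h
    exact absurd h (huv m hma m' hmb')
  · rw [appendSeq_add, appendSeq_of_le hma'] at h
    exact absurd h.symm (huv m' hma' m hmb)
  · rw [appendSeq_add, appendSeq_add] at h
    rw [hv m hmb m' hmb' h]

lemma IsLevelSeq.append {G : SimpleGraph V} {M R : ℕ → Set V} (hM : IsLevelSeq G M a)
    (hR : IsLevelSeq G R b) (hcov : Covers G (M a) (R 0))
    (hanti : ∀ h ≤ a, ∀ h' ≤ b, h < a ∨ 0 < h' → Anticomplete G (M h) (R h')) :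
    IsLevelSeq G (appendSeq M a R) (a + 1 + b) where
  covers h hh := by
    rcases lt_trichotomy h a with hlt | rfl | hlt
    · rw [appendSeq_of_le hlt.le, appendSeq_of_le hlt]
      exact hM.covers h hlt
    · rw [appendSeq_of_le le_rfl]
      rwa [← appendSeq_add (u := M) (a := h) (v := R)] at hcov
    · obtain ⟨h, rfl⟩ := Nat.exists_eq_add_of_le hlt
      rw [Nat.succ_eq_add_one, add_assoc (a + 1), appendSeq_add, appendSeq_add]
      exact hR.covers h (by omega)
  anticomplete h h' hle hh' := by
    rcases le_or_exists_eq_add hh' with ha' | ⟨h', hb', rfl⟩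
    · rw [appendSeq_of_le (by omega), appendSeq_of_le ha']
      exact hM.anticomplete h h' hle ha'
    · rw [appendSeq_add]
      rcases le_or_exists_eq_add (show h ≤ a + 1 + b by omega) with ha | ⟨h, _, rfl⟩
      · rw [appendSeq_of_le ha]
        exact hanti h ha h' hb' (by omega)
      · rw [appendSeq_add]
        exact hR.anticomplete h h' (by omega) hb'

end Append

section Descent
variable {G : SimpleGraph V} {L : ℕ → Set V} {p : ℕ → V} {s k i j m : ℕ} {x v : V}

lemma exists_level_path (hcov : ∀ h < k, Covers G (L h) (L (h + 1))) (hx : x ∈ L k) :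
    ∃ l : ℕ → V, l k = x ∧ (∀ h ≤ k, l h ∈ L h) ∧ ∀ h < k, G.Adj (l h) (l (h + 1)) := by
  induction k generalizing x with
  | zero => exact ⟨fun _ => x, rfl, fun h hh => by rwa [Nat.le_zero.1 hh], fun h hh => by omega⟩
  | succ k ih =>
    obtain ⟨y, hy, hyx⟩ := hcov k (Nat.lt_succ_self k) x hx
    obtain ⟨l, rfl, hmem, hadj⟩ := ih (fun h hh => hcov h (hh.trans (Nat.lt_succ_self k))) hy
    refine ⟨Function.update l (k + 1) x, Function.update_self .., fun h hh => ?_, fun h hh => ?_⟩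
    · rcases hh.eq_or_lt with rfl | hlt
      · rwa [Function.update_self]
      · rw [Function.update_of_ne hlt.ne]
        exact hmem h (by omega)
    · rw [Function.update_of_ne hh.ne]
      rcases (Nat.lt_succ_iff.1 hh).eq_or_lt with rfl | hlt
      · rwa [Function.update_self]
      · rw [Function.update_of_ne (by omega)]
        exact hadj h hlt

/-- The levels reached from a path `p 0, …, p s` by leaving it for good: the `m`-th level consists
of the vertices of `L (j + m)` at the end of a path that starts at `p i`, enters `L j`, descends
through the levels of `L`, and has no other edge to `p i, …, p s`. -/
def descent (G : SimpleGraph V) (L : ℕ → Set V) (p : ℕ → V) (s i j : ℕ) : ℕ → Set V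
  | 0 => {v ∈ L j | G.Adj (p i) v ∧ ∀ h, i < h → h ≤ s → ¬ G.Adj (p h) v}
  | m + 1 => {v ∈ L (j + m + 1) |
      (∃ u ∈ descent G L p s i j m, G.Adj u v) ∧ ∀ h, i ≤ h → h ≤ s → ¬ G.Adj (p h) v}

lemma descent_subset : descent G L p s i j m ⊆ L (j + m) := by
  cases m <;> exact fun v hv => hv.1

lemma not_adj_of_mem_descent (hv : v ∈ descent G L p s i j m) {h : ℕ} (hi : i ≤ h) (hs : h ≤ s)
    (him : i < h ∨ 0 < m) : ¬ G.Adj (p h) v := by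
  cases m with
  | zero => exact hv.2.2 h (by omega) hs
  | succ m => exact hv.2.2 h hi hs

lemma isLevelSeq_descent (hL : IsLevelSeq G L s) (hj : j ≤ s) :
    IsLevelSeq G (descent G L p s i j) (s - j) where
  covers _ _ _ hv := hv.2.1
  anticomplete h h' hle hh' := (hL.anticomplete (j + h) (j + h') (by omega) (by omega)).mono
    descent_subset descent_subset

lemma exists_mem_descent (hs : 1 ≤ s) (hroot : L 0 = {p 0})
    (hcov : ∀ h < s, Covers G (L h) (L (h + 1))) (hx : x ∈ L s) :
    ∃ i ≤ s, ∃ j ∈ Finset.Icc 1 s, x ∈ descent G L p s i j (s - j) := by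
  classical
  obtain ⟨l, rfl, hl, hadj⟩ := exists_level_path hcov hx
  have hl0 : l 0 = p 0 := by simpa [hroot] using hl 0 s.zero_le
  -- Leave the path `p` at the last possible vertex, and enter the path `l` as late as possible.
  obtain ⟨⟨i, j⟩, hij, hmax⟩ := Finset.exists_max_image
    ((Finset.range (s + 1) ×ˢ Finset.Icc 1 s).filter fun a => G.Adj (p a.1) (l a.2)) toLex
    ⟨(0, 1), by simpa [hs] using hl0 ▸ hadj 0 hs⟩
  obtain ⟨⟨hi, hj⟩, hpl⟩ := by simpa only [Finset.mem_filter, Finset.mem_product] using hij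
  have hnot (h j') (hh : h ≤ s) (hj' : j' ∈ Finset.Icc 1 s) (hlt : i < h ∨ i = h ∧ j < j') :
      ¬ G.Adj (p h) (l j') := fun hadj' => by
    have := Prod.Lex.toLex_le_toLex.1 (hmax (h, j') (Finset.mem_filter.2
      ⟨Finset.mem_product.2 ⟨Finset.mem_range_succ_iff.2 hh, hj'⟩, hadj'⟩))
    dsimp only at this
    omega
  refine ⟨i, Finset.mem_range_succ_iff.1 hi, j, hj, ?_⟩
  rw [Finset.mem_Icc] at hj
  have hmem : ∀ m, j + m ≤ s → l (j + m) ∈ descent G L p s i j m := by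
    intro m
    induction m with
    | zero => exact fun hm => ⟨hl j hm, hpl, fun h hi hh =>
        hnot h j hh (Finset.mem_Icc.2 hj) (Or.inl hi)⟩
    | succ m ih => exact fun hm => ⟨hl _ hm, ⟨_, ih (by omega), hadj _ hm⟩, fun h hi hh =>
        hnot h _ hh (Finset.mem_Icc.2 ⟨by omega, hm⟩) (by omega)⟩
  simpa only [Nat.add_sub_cancel' hj.2] using hmem (s - j) (by omega)

lemma isLevelSeq_reverse_path (hadj : ∀ h < k, G.Adj (p h) (p (h + 1)))
    (hpath : ∀ h h', h + 2 ≤ h' → h' ≤ k → ¬ G.Adj (p h) (p h')) (hm : m ≤ k) :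
    IsLevelSeq G (fun h => {p (k - h)}) m where
  covers h hh := by
    simp only [Covers, Set.mem_singleton_iff, forall_eq, exists_eq_left]
    have := hadj (k - (h + 1)) (by omega)
    rw [show k - (h + 1) + 1 = k - h by omega] at this
    exact this.symm
  anticomplete h h' hle hh' := by
    simp only [Anticomplete, Set.mem_singleton_iff, forall_eq]
    exact fun h => hpath _ _ (by omega) (Nat.sub_le k _) h.symm

theorem isLevelSeq_reverse_path_append_descent (hL : IsLevelSeq G L s)
    (hadj : ∀ h < s + 1, G.Adj (p h) (p (h + 1)))
    (hpath : ∀ h h', h + 2 ≤ h' → h' ≤ s + 1 → ¬ G.Adj (p h) (p h')) (hi : i ≤ s)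
    (hj : j ≤ s) {Y : Set V} (hY : Y ⊆ descent G L p s i j (s - j))
    (hend : ∀ h < s, Anticomplete G {p (s + 1)} (L h)) (hendY : Anticomplete G {p (s + 1)} Y) :
    IsLevelSeq G (appendSeq (fun m => {p (s + 1 - m)}) (s + 1 - i)
      (Function.update (descent G L p s i j) (s - j) Y)) (s + 1 - i + 1 + (s - j)) := by
  have hsub (m) : Function.update (descent G L p s i j) (s - j) Y m ⊆ descent G L p s i j m := by
    rcases eq_or_ne m (s - j) with rfl | hm
    · rwa [Function.update_self]
    · rw [Function.update_of_ne hm]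
  refine (isLevelSeq_reverse_path hadj hpath (Nat.sub_le _ _)).append ⟨fun h hh => ?_,
    fun h h' hle hh' => ?_⟩ ?_ ?_
  · rw [Function.update_of_ne hh.ne]
    exact ((isLevelSeq_descent hL hj).covers h hh).mono subset_rfl (hsub _)
  · exact ((isLevelSeq_descent hL hj).anticomplete h h' hle hh').mono (hsub _) (hsub _)
  · rw [show s + 1 - (s + 1 - i) = i by omega]
    exact fun v hv => ⟨p i, rfl, (hsub 0 hv).2.1⟩
  · rintro (_ | h) hh h' hh' hlt
    · rcases hh'.eq_or_lt with rfl | hlt'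
      · rwa [Function.update_self, Nat.sub_zero]
      · exact (hend (j + h') (by omega)).mono subset_rfl ((hsub h').trans descent_subset)
    · rintro _ rfl v hv
      exact not_adj_of_mem_descent (hsub h' hv) (by omega) (by omega) (by omega)

theorem exists_common_descent [Finite V] {ι : Type*} {J : Finset ι} {Z P : ι → Set V} (hs : 1 ≤ s)
    (hroot : L 0 = {p 0}) (hcov : ∀ h < s, Covers G (L h) (L (h + 1))) (hZ : ∀ t ∈ J, Z t ⊆ L s)
    (hP : ∀ t ∈ J, Covers G (Z t) (P t)) {k : ℕ} (hk : (s + 1) * s * k ≤ J.card) :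
    ∃ i ≤ s, ∃ j ∈ Finset.Icc 1 s, ∃ R ⊆ J, R.card = k ∧ ∀ t ∈ R, ♯(P t) ≤
      (s + 1) * s * ♯(nbhd G (Z t ∩ descent G L p s i j (s - j)) ∩ P t) := by
  classical
  let pairs := Finset.range (s + 1) ×ˢ Finset.Icc 1 s
  have hcard : pairs.card = (s + 1) * s := by simp [pairs]
  have hpairs : pairs.Nonempty := Finset.card_pos.1 (hcard ▸ Nat.mul_pos s.succ_pos hs)
  have hpair (t) : ∃ a ∈ pairs, t ∈ J → ♯(P t) ≤
      pairs.card * ♯(nbhd G (Z t ∩ descent G L p s a.1 a.2 (s - a.2)) ∩ P t) := by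
    by_cases ht : t ∈ J
    · obtain ⟨a, ha, hle⟩ := exists_ncard_le_card_mul hpairs
        (E := fun a => nbhd G (Z t ∩ descent G L p s a.1 a.2 (s - a.2))) (D := P t) fun v hv => by
          obtain ⟨x, hx, hxv⟩ := hP t ht v hv
          obtain ⟨i, hi, j, hj, hdesc⟩ := exists_mem_descent hs hroot hcov (hZ t ht hx)
          exact Set.mem_iUnion₂.2 ⟨(i, j), Finset.mem_product.2
            ⟨Finset.mem_range_succ_iff.2 hi, hj⟩, x, ⟨hx, hdesc⟩, hxv⟩
      exact ⟨a, ha, fun _ => hle⟩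
    · exact ⟨_, hpairs.choose_spec, fun h => absurd h ht⟩
  choose f hf hle using hpair
  obtain ⟨⟨i, j⟩, hij, hfiber⟩ := Finset.exists_le_card_fiber_of_mul_le_card_of_maps_to
    (fun t (_ : t ∈ J) => hf t) hpairs (hcard ▸ hk)
  obtain ⟨R, hR, hRcard⟩ := Finset.exists_subset_card_eq hfiber
  rw [Finset.mem_product, Finset.mem_range_succ_iff] at hij
  refine ⟨i, hij.1, j, hij.2, R, hR.trans (Finset.filter_subset _ _), hRcard, fun t ht => ?_⟩
  obtain ⟨htJ, hft⟩ := Finset.mem_filter.1 (hR ht)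
  have := hle t htJ
  rw [hcard, hft] at this
  exact_mod_cast this

end Descent

section Assembly

lemma GrowthState.index_injOn {ι : Type*} [LinearOrder ι] {G : SimpleGraph V} {x₀ : ι} {z : V}
    {X W₀ : ι → Set V} {J₀ : Finset ι} {κ : ℝ} {r i m h : ℕ}
    (S : GrowthState G x₀ z X W₀ J₀ κ r i) (hm : m ≤ i) (hh : h ≤ i)
    (heq : S.index m = S.index h) : m = h := by
  rcases lt_trichotomy m h with hlt | rfl | hlt
  · exact absurd heq (S.index_lt_index m h hlt hh).ne
  · rfl
  · exact absurd heq.symm (S.index_lt_index h m hlt hm).ne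

lemma GrowthState.index_mem_of_pos {ι : Type*} [LinearOrder ι] {G : SimpleGraph V} {x₀ : ι} {z : V}
    {X W₀ : ι → Set V} {J₀ : Finset ι} {κ : ℝ} {r i h : ℕ}
    (S : GrowthState G x₀ z X W₀ J₀ κ r i) (h1 : 1 ≤ h) (hh : h ≤ i) : S.index h ∈ J₀ :=
  (Finset.mem_insert.1 (S.index_mem h hh)).resolve_left
    (S.index_zero ▸ S.index_lt_index 0 h h1 hh).ne'

/-- Levels grown from `z` whose last level grades, after a permutation `perm` of the blocks, large
parts `graded t` of the remaining blocks. -/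
structure GradedGrowth {ι : Type*} [LinearOrder ι] (G : SimpleGraph V) (x₀ : ι) (z : V)
    (X : ι → Set V) (J₀ : Finset ι) (r s : ℕ) extends GrowthState G x₀ z X X J₀ 1 r s where
  perm : Equiv.Perm ι
  perm_eq : ∀ t ∉ rest, perm t = t
  grader : ι → Set V
  graded : ι → Set V
  graded_subset : ∀ t ∈ rest, graded t ⊆ part (perm t)
  isGradedBy : IsGradedBy G (· > ·) (level s) rest grader graded

namespace GradedGrowth
variable {ι : Type*} [LinearOrder ι] {G : SimpleGraph V} {x₀ : ι} {z : V} {X : ι → Set V}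
  {J₀ : Finset ι} {r s : ℕ} (T : GradedGrowth G x₀ z X J₀ r s) {t : ι} {h : ℕ}

lemma perm_mem (ht : t ∈ T.rest) : T.perm t ∈ T.rest := perm_apply_mem T.perm_eq ht

lemma graded_subset_block (ht : t ∈ T.rest) : T.graded t ⊆ X (T.perm t) :=
  (T.graded_subset t ht).trans (T.part_subset _ (T.perm_mem ht))

lemma anticomplete_level_graded (ht : t ∈ T.rest) (hh : h < s) :
    Anticomplete G (T.level h) (T.graded t) :=
  (T.anticomplete _ (T.perm_mem ht) h hh).mono subset_rfl (T.graded_subset t ht)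

lemma perm_root : T.perm x₀ = x₀ :=
  T.perm_eq x₀ fun hx₀ => (T.index_zero ▸ T.index_lt x₀ hx₀ 0 (Nat.zero_le s)).false

lemma index_ne_perm (ht : t ∈ T.rest) (hh : h ≤ s) : T.index h ≠ T.perm t :=
  (T.index_lt _ (T.perm_mem ht) h hh).ne

end GradedGrowth

/-- A second growth from the same vertex, inside the graded parts, together with a path through its
levels, and subsets `block t` of the remaining parts and of the last level. -/
structure DescentFrame {ι : Type*} [LinearOrder ι] {G : SimpleGraph V} {x₀ : ι} {z : V}
    {X : ι → Set V} {J₀ : Finset ι} {r s : ℕ} (T : GradedGrowth G x₀ z X J₀ r s) (κ : ℝ) extends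
    GrowthState G x₀ z (X ∘ T.perm) T.graded T.rest κ r (s + 1) where
  level_last_subset : level (s + 1) ⊆ T.graded (index (s + 1))
  path : ℕ → V
  path_mem : ∀ h ≤ s + 1, path h ∈ level h
  path_adj : ∀ h < s + 1, G.Adj (path h) (path (h + 1))
  block : ι → Set V
  block_index_subset : block (index (s + 1)) ⊆ level (s + 1)
  block_subset : ∀ t ∈ rest, block t ⊆ part t
  exit : ℕ
  exit_le : exit ≤ s
  entry : ℕ
  entry_mem : entry ∈ Finset.Icc 1 s

namespace DescentFrame

section Index
variable {ι : Type*} [LinearOrder ι] {G : SimpleGraph V} {x₀ : ι} {z : V} {X : ι → Set V}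
  {J₀ J : Finset ι} {r s : ℕ} {T : GradedGrowth G x₀ z X J₀ r s} {κ : ℝ} (D : DescentFrame T κ)
  {t : ι} {h m : ℕ}

/-- The levels of the descent from the path of `D` through the levels of `T`. -/
def descent : ℕ → Set V := PurePairs.descent G T.level D.path s D.exit D.entry

/-- The part of `block t` that is covered by the end of the descent inside `T.grader t`. -/
def coveredPart (t : ι) : Set V :=
  nbhd G (T.grader t ∩ D.descent (s - D.entry)) ∩ D.block t

/-- The number of levels, not counting the root, of the levelling that walks back along the path
and then descends. -/
def height : ℕ := s + 1 - D.exit + 1 + (s - D.entry)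

/-- The levelling that walks back along the path, then descends, and ends in the graders of the
blocks in `J`. -/
def leftLevel (J : Finset ι) : ℕ → Set V :=
  appendSeq (fun m => {D.path (s + 1 - m)}) (s + 1 - D.exit) (Function.update D.descent
    (s - D.entry) (⋃ t ∈ J, T.grader t ∩ D.descent (s - D.entry)))

/-- The index of the block that contains a level of `leftLevel`. -/
def leftIndex : ℕ → ι :=
  appendSeq (fun m => T.perm (D.index (s + 1 - m))) (s + 1 - D.exit)
    fun m => T.index (D.entry + m)

lemma one_le_entry : 1 ≤ D.entry := (Finset.mem_Icc.1 D.entry_mem).1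

lemma entry_le : D.entry ≤ s := (Finset.mem_Icc.1 D.entry_mem).2

lemma height_mem : D.height ∈ Finset.Icc 2 (2 * s + 1) := by
  have := D.one_le_entry
  have := D.entry_le
  have := D.exit_le
  rw [Finset.mem_Icc, height]
  omega

lemma block_subset_graded (ht : t ∈ D.rest) : D.block t ⊆ T.graded t :=
  (D.block_subset t ht).trans (D.part_subset t ht)

lemma descent_subset_level : D.descent m ⊆ T.level (D.entry + m) := descent_subset

lemma leftLevel_zero : D.leftLevel J 0 = {D.path (s + 1)} := appendSeq_of_le (Nat.zero_le _)

lemma leftLevel_height :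
    D.leftLevel J D.height = ⋃ t ∈ J, T.grader t ∩ D.descent (s - D.entry) := by
  rw [leftLevel, height, appendSeq_add, Function.update_self]

lemma update_descent_subset (m : ℕ) : Function.update D.descent (s - D.entry)
    (⋃ t ∈ J, T.grader t ∩ D.descent (s - D.entry)) m ⊆ D.descent m := by
  rcases eq_or_ne m (s - D.entry) with rfl | hm
  · rw [Function.update_self]
    exact Set.iUnion₂_subset fun _ _ => Set.inter_subset_right
  · rw [Function.update_of_ne hm]

lemma anticomplete_grader_graded (hJ : J ⊆ D.rest) (hlt : ∀ u ∈ J, t < u) (ht : t ∈ T.rest) :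
    Anticomplete G (⋃ u ∈ J, T.grader u ∩ D.descent (s - D.entry)) (T.graded t) := by
  intro x hx v hv
  obtain ⟨u, hu, hxu, -⟩ := Set.mem_iUnion₂.1 hx
  exact (T.isGradedBy u (D.rest_subset (hJ hu))).2.2 t ht (hlt u hu) x hxu v hv

lemma anticomplete_leftLevel_part (ht : t ∈ D.rest) (h1 : 1 ≤ m) (hm : m < D.height) :
    Anticomplete G (D.leftLevel J m) (D.part t) := by
  have := D.entry_le
  rw [leftLevel]
  rcases le_or_exists_eq_add hm.le with hle | ⟨m, _, rfl⟩
  · rw [appendSeq_of_le hle]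
    exact (D.anticomplete t ht (s + 1 - m) (by omega)).mono
      (Set.singleton_subset_iff.2 (D.path_mem _ (Nat.sub_le _ _))) subset_rfl
  · have hlt : m < s - D.entry := by simpa only [height, add_lt_add_iff_left] using hm
    rw [appendSeq_add]
    exact (T.anticomplete_level_graded (D.rest_subset ht) (by omega)).mono
      ((D.update_descent_subset m).trans D.descent_subset_level) (D.part_subset t ht)

lemma isLevelSeq_leftLevel (hJ : J ⊆ D.rest) : IsLevelSeq G (D.leftLevel J) D.height := by
  have hlast : D.index (s + 1) ∈ T.rest := D.index_mem_of_pos (Nat.le_add_left 1 s) le_rfl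
  have hend : {D.path (s + 1)} ⊆ T.graded (D.index (s + 1)) :=
    Set.singleton_subset_iff.2 (D.level_last_subset (D.path_mem _ le_rfl))
  refine isLevelSeq_reverse_path_append_descent T.isLevelSeq D.path_adj (fun h h' hle hh' => ?_)
    D.exit_le D.entry_le (Set.iUnion₂_subset fun _ _ => Set.inter_subset_right)
    (fun h hh => ((T.anticomplete_level_graded hlast hh).mono subset_rfl hend).symm)
    ((D.anticomplete_grader_graded hJ (fun u hu => D.index_lt u (hJ hu) _ le_rfl) hlast).mono
      subset_rfl hend).symm
  exact D.isLevelSeq.anticomplete h h' hle hh' _ (D.path_mem h (by omega)) _ (D.path_mem h' hh')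

lemma perm_index_mem (hh : h ≤ s + 1) : T.perm (D.index h) ∈ insert x₀ J₀ := by
  rcases h.eq_zero_or_pos with rfl | h1
  · rw [D.index_zero, T.perm_root]
    exact Finset.mem_insert_self _ _
  · exact Finset.mem_insert_of_mem (T.rest_subset (T.perm_mem (D.index_mem_of_pos h1 hh)))

lemma leftIndex_mem : ∀ m ≤ D.height, D.leftIndex m ∈ insert x₀ J₀ := by
  have := D.entry_le
  exact forall_appendSeq (p := fun _ t => t ∈ insert x₀ J₀)
    (fun _ _ => D.perm_index_mem (Nat.sub_le _ _)) fun _ _ => T.index_mem _ (by omega)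

lemma leftLevel_subset : ∀ m ≤ D.height, D.leftLevel J m ⊆ X (D.leftIndex m) := by
  have := D.entry_le
  refine forall_appendSeq (p := fun m Y => Y ⊆ X (D.leftIndex m)) (fun m hm => ?_) fun m hm => ?_
  · rw [leftIndex, appendSeq_of_le hm]
    exact Set.singleton_subset_iff.2
      (D.level_subset _ (Nat.sub_le _ _) (D.path_mem _ (Nat.sub_le _ _)))
  · rw [leftIndex, appendSeq_add]
    exact ((D.update_descent_subset m).trans D.descent_subset_level).trans
      (T.level_subset _ (by omega))

lemma perm_index_ne_index (hh : h ≤ s + 1) (hm : m ≤ s) (hm1 : 1 ≤ m) :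
    T.perm (D.index h) ≠ T.index m := by
  rcases h.eq_zero_or_pos with rfl | h1
  · have hlt := T.index_lt_index 0 m hm1 hm
    rw [T.index_zero] at hlt
    simpa only [D.index_zero, T.perm_root] using hlt.ne
  · exact (T.index_ne_perm (D.index_mem_of_pos h1 hh) hm).symm

lemma leftIndex_injOn :
    ∀ m ≤ D.height, ∀ m' ≤ D.height, D.leftIndex m = D.leftIndex m' → m = m' := by
  have := D.entry_le
  have := D.one_le_entry
  refine appendSeq_injOn (fun m hm m' hm' h => ?_) (fun m hm m' hm' h => ?_) fun m _ m' _ =>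
    D.perm_index_ne_index (Nat.sub_le _ _) (by omega) (by omega)
  · have := D.index_injOn (Nat.sub_le _ _) (Nat.sub_le _ _) (T.perm.injective h)
    omega
  · have := T.index_injOn (by omega) (by omega) h
    omega

lemma leftIndex_ne_perm (ht : t ∈ D.rest) : ∀ m ≤ D.height, D.leftIndex m ≠ T.perm t := by
  have := D.entry_le
  exact forall_appendSeq (p := fun _ u => u ≠ T.perm t)
    (fun m _ h => (D.index_lt t ht (s + 1 - m) (Nat.sub_le _ _)).ne (T.perm.injective h))
    fun m _ => T.index_ne_perm (D.rest_subset ht) (by omega)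

end Index

section BiGrading
variable {G : SimpleGraph V} {x₀ : ℤ} {z : V} {A X B Zb : ℤ → Set V} {J₀ J : Finset ℤ}
  {r s b : ℕ} {T : GradedGrowth G x₀ z X J₀ r s} {κ κ' : ℝ} (D : DescentFrame T κ) {t : ℤ}
  (S : GrowthState G (D.index (s + 1)) (D.path (s + 1)) D.block D.coveredPart D.rest κ' r b)

lemma rainbowBiLevelling (hXA : ∀ t ∈ insert x₀ J₀, X t ⊆ A t) (hJ : J ⊆ S.rest)
    (hB : ∀ t ∈ J, B t ⊆ D.coveredPart t) :
    RainbowBiLevelling (insert x₀ J₀) A (D.leftLevel J) D.height S.level b J B := by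
  have hmem (t) (ht : t ∈ D.rest) : T.perm t ∈ insert x₀ J₀ :=
    Finset.mem_insert_of_mem (T.rest_subset (T.perm_mem (D.rest_subset ht)))
  have hblock (t) (ht : t ∈ D.rest) : D.block t ⊆ A (T.perm t) :=
    ((D.block_subset_graded ht).trans (T.graded_subset_block (D.rest_subset ht))).trans
      (hXA _ (hmem t ht))
  have hJD : J ⊆ D.rest := hJ.trans S.rest_subset
  refine ⟨T.perm, D.leftIndex, fun h => T.perm (S.index h), fun t ht => ⟨hmem t (hJD ht),
      (hB t ht).trans (Set.inter_subset_right.trans (hblock t (hJD ht)))⟩,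
    fun m hm => ⟨D.leftIndex_mem m hm, (D.leftLevel_subset m hm).trans
      (hXA _ (D.leftIndex_mem m hm))⟩,
    fun h h1 hh => ⟨hmem _ (S.index_mem_of_pos h1 hh), (S.level_subset h hh).trans
      (hblock _ (S.index_mem_of_pos h1 hh))⟩,
    fun t _ t' _ h => T.perm.injective h, D.leftIndex_injOn,
    fun h _ hh h' _ hh' heq => S.index_injOn hh hh' (T.perm.injective heq),
    fun t ht m hm h => D.leftIndex_ne_perm (hJD ht) m hm h.symm,
    fun t ht h _ hh heq => (S.index_lt t (hJ ht) h hh).ne' (T.perm.injective heq),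
    fun m hm h h1 hh => D.leftIndex_ne_perm (S.index_mem_of_pos h1 hh) m hm⟩

theorem isBiGrading (hA : IsBlockade (insert x₀ J₀) A) (hXA : ∀ t ∈ insert x₀ J₀, X t ⊆ A t)
    (hb : 1 ≤ b) (hJ : J ⊆ S.rest) (hne : ∀ t ∈ J, (B t).Nonempty)
    (hB : ∀ t ∈ J, B t ⊆ S.part t) (hZb : IsGradedBy G (· < ·) (S.level b) J Zb B) :
    IsBiGrading G (D.leftLevel J) D.height S.level b J B := by
  have hJD : J ⊆ D.rest := hJ.trans S.rest_subset
  have hcovered (t) (ht : t ∈ J) : B t ⊆ D.coveredPart t :=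
    (hB t ht).trans (S.part_subset t (hJ ht))
  have hpart (t) (ht : t ∈ J) : B t ⊆ D.part t :=
    ((hcovered t ht).trans Set.inter_subset_right).trans (D.block_subset t (hJD ht))
  have hheight := Finset.mem_Icc.1 D.height_mem
  refine isBiGrading_of_rainbow (Z := fun t => T.grader t ∩ D.descent (s - D.entry)) hA
    (D.rainbowBiLevelling S hXA hJ hcovered) (D.isLevelSeq_leftLevel hJD) S.isLevelSeq
    (by omega) hb ?_ ?_ ?_ hne ?_
    (fun h hh t ht => (S.anticomplete t (hJ ht) h hh).mono subset_rfl (hB t ht)) ?_ hZb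
  · rw [D.leftLevel_zero, Set.ncard_singleton]
  · rw [D.leftLevel_zero, S.level_zero]
  · intro h hh m hm
    rw [Finset.mem_Icc] at hh hm
    have hrest := S.index_mem_of_pos hh.1 hh.2
    refine Anticomplete.symm ?_
    rcases hm.2.eq_or_lt with rfl | hlt
    · rw [D.leftLevel_height]
      exact (D.anticomplete_grader_graded hJD (fun t ht => S.index_lt t (hJ ht) h hh.2)
        (D.rest_subset hrest)).mono subset_rfl
          ((S.level_subset h hh.2).trans (D.block_subset_graded hrest))
    · exact (D.anticomplete_leftLevel_part hrest hm.1 hlt).mono subset_rfl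
        ((S.level_subset h hh.2).trans (D.block_subset _ hrest))
  · rintro (_ | m) hm t ht
    · rw [D.leftLevel_zero, ← S.level_zero]
      exact (S.anticomplete t (hJ ht) 0 hb).mono subset_rfl (hB t ht)
    · exact (D.anticomplete_leftLevel_part (hJD ht) (Nat.le_add_left 1 m) hm).mono subset_rfl
        (hpart t ht)
  · refine fun t ht => ⟨?_, covers_iff.2 ((hcovered t ht).trans Set.inter_subset_left),
      fun t' ht' hlt => ((T.isGradedBy t (D.rest_subset (hJD ht))).2.2 t'
        (D.rest_subset (hJD ht')) hlt).mono Set.inter_subset_left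
          ((hpart t' ht').trans (D.part_subset t' (hJD ht')))⟩
    rw [D.leftLevel_height]
    exact Set.subset_biUnion_of_mem (u := fun t => T.grader t ∩ D.descent (s - D.entry)) ht

end BiGrading
end DescentFrame
end Assembly

section CleanFamily
variable {ι : Type*} {G : SimpleGraph V} {R : Finset ι} {X Y : ι → Set V} {γ ν κ : ℝ}

/-- Every block of the family expands into every other one, and any two of them are far from
containing large anticomplete sets. -/
def IsCleanFamily (G : SimpleGraph V) (γ : ℝ) (R : Finset ι) (X : ι → Set V) : Prop :=
  ∀ q ∈ R, ∀ t ∈ R, q ≠ t →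
    ExpandsInto G (1 / (16 * γ)) (X q) (X t) ∧ NonDivergentPair G (2 * γ) (X q) (X t)

lemma IsCleanFamily.comp {ι' : Type*} {R' : Finset ι'} {e : ι' → ι} (h : IsCleanFamily G γ R X)
    (he : e.Injective) (heR : ∀ t ∈ R', e t ∈ R) : IsCleanFamily G γ R' (X ∘ e) :=
  fun q hq t ht hqt => h _ (heR q hq) _ (heR t ht) (he.ne hqt)

theorem exists_isCleanFamily [Finite V] (hγ : 0 < γ) (hγ8 : γ ≤ 1 / 8)
    (hR : R.card * γ ≤ 1 / 2) (hκ : 0 < κ) (hν : 0 ≤ ν) (hνγ : ν / κ ≤ γ)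
    (hne : ∀ t ∈ R, (X t).Nonempty)
    (hnd : ∀ q ∈ R, ∀ t ∈ R, q ≠ t → NonDivergentPair G ν (X q) (X t))
    (hY : ∀ t ∈ R, Y t ⊆ X t ∧ κ * ♯(X t) ≤ ♯(Y t)) :
    ∃ P : ι → Set V, (∀ t ∈ R, P t ⊆ Y t ∧ 1 / 2 * ♯(Y t) ≤ ♯(P t)) ∧ IsCleanFamily G γ R P := by
  have hYnd (q) (hq : q ∈ R) (t) (ht : t ∈ R) (hqt : q ≠ t) : NonDivergentPair G γ (Y q) (Y t) :=
    ((hnd q hq t ht hqt).sub hν hκ (hY q hq).1 (hY t ht).1 (hY q hq).2 (hY t ht).2).mono hνγ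
  have hYne (t) (ht : t ∈ R) : (Y t).Nonempty :=
    cast_ncard_pos.1 ((mul_pos hκ (cast_ncard_pos.2 (hne t ht))).trans_le (hY t ht).2)
  obtain ⟨P, hP, hexp⟩ := exists_pairwise_expandsInto hγ hγ8 hR hYne hYnd
  refine ⟨P, hP, fun q hq t ht hqt => ⟨hexp q hq t ht hqt, ?_⟩⟩
  have hsub := (hYnd q hq t ht hqt).sub hγ.le (by norm_num : (0 : ℝ) < 1 / 2) (hP q hq).1
    (hP t ht).1 (hP q hq).2 (hP t ht).2
  rwa [div_div_eq_mul_div, div_one, mul_comm] at hsub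

theorem exists_isCleanFamily_insert [DecidableEq ι] [Finite V] {q : ι} {N : Set V} (hγ : 0 < γ)
    (hγ8 : γ ≤ 1 / 8) (hq : q ∉ R) (hR : (R.card + 1) * γ ≤ 1 / 2) (hκ : 0 < κ) (hν : 0 ≤ ν)
    (hνγ : ν / κ ≤ γ) (hne : ∀ t ∈ insert q R, (X t).Nonempty)
    (hnd : ∀ u ∈ insert q R, ∀ t ∈ insert q R, u ≠ t → NonDivergentPair G ν (X u) (X t))
    (hN : N ⊆ X q ∧ κ * ♯(X q) ≤ ♯N) (hY : ∀ t ∈ R, Y t ⊆ X t ∧ κ * ♯(X t) ≤ ♯(Y t)) :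
    ∃ P : ι → Set V, P q ⊆ N ∧ (P q).Nonempty ∧ (∀ t ∈ R, P t ⊆ Y t ∧ 1 / 2 * ♯(Y t) ≤ ♯(P t)) ∧
      IsCleanFamily G γ (insert q R) P := by
  have hYq : Function.update Y q N q = N := Function.update_self ..
  have hYt (t) (ht : t ∈ R) : Function.update Y q N t = Y t :=
    Function.update_of_ne (ne_of_mem_of_not_mem ht hq) ..
  have hq' : q ∈ insert q R := Finset.mem_insert_self q R
  obtain ⟨P, hP, hclean⟩ := exists_isCleanFamily (Y := Function.update Y q N) hγ hγ8
    (by rwa [Finset.card_insert_of_notMem hq, Nat.cast_add_one]) hκ hν hνγ hne hnd <| by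
      simp only [Finset.forall_mem_insert]
      exact ⟨by rwa [hYq], fun t ht => by rw [hYt t ht]; exact hY t ht⟩
  have hPq := hP q hq'
  rw [hYq] at hPq
  have : 0 < κ * ♯(X q) := mul_pos hκ (cast_ncard_pos.2 (hne q hq'))
  refine ⟨P, hPq.1, cast_ncard_pos.1 (by linarith), fun t ht => ?_, hclean⟩
  rw [← hYt t ht]
  exact hP t (Finset.mem_insert_of_mem ht)

end CleanFamily

section Stages
variable {ι : Type*} [LinearOrder ι] {G : SimpleGraph V} {x₀ : ι} {z : V} {X W₀ : ι → Set V}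
  {J₀ : Finset ι} {r s b k K : ℕ} {Λ κ τ ν lam γ : ℝ}

lemma IsCleanFamily.growthSetup (hX : IsCleanFamily G γ (insert x₀ J₀) X)
    (P : GrowthParams (Nat.card V) r b K Λ κ (1 / (16 * γ)) (2 * γ) lam)
    (hlt : ∀ t ∈ J₀, x₀ < t) (hlen : growthLength r K b ≤ J₀.card)
    (hne : ∀ t ∈ J₀, (X t).Nonempty) (hW₀ : ∀ t ∈ J₀, W₀ t ⊆ X t ∧ κ * ♯(X t) ≤ ♯(W₀ t))
    (hlink : ∀ q ∈ insert x₀ J₀, ∀ t ∈ J₀, q < t → LinkedLE G lam (X q) (X t)) :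
    GrowthSetup G x₀ X W₀ J₀ r b K Λ κ (1 / (16 * γ)) (2 * γ) lam where
  __ := P
  lt := hlt
  length_le := hlen
  nonempty := hne
  subset t ht := (hW₀ t ht).1
  κ_mul_le t ht := (hW₀ t ht).2
  expandsInto q hq t ht hqt := (hX q hq t (Finset.mem_insert_of_mem ht) hqt.ne).1
  nonDivergentPair q hq t ht hqt := (hX q hq t (Finset.mem_insert_of_mem ht) hqt.ne).2
  linkedLE := hlink

lemma GrowthState.CoversHalf.mul_ncard_le {S : GrowthState G x₀ z X W₀ J₀ κ r b}
    (hS : S.CoversHalf) {t : ι} (ht : t ∈ S.rest) :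
    keptRatio κ r b / 2 * ♯(X t) ≤ ♯(nbhd G (S.level b) ∩ S.part t) := by
  linarith [hS t ht, S.le_part t ht]

theorem GrowthSetup.exists_gradedGrowth [Finite V]
    (C : GrowthSetup G x₀ X X J₀ r s K Λ 1 τ ν lam) (hz : z ∈ X x₀)
    (hμ : lam / (keptRatio 1 r s / 2) * 4 ^ K ≤ 1) :
    ∃ T : GradedGrowth G x₀ z X J₀ r s, T.rest.card = K ∧
      ∀ t ∈ T.rest, keptRatio 1 r s / 2 / 4 ^ K * ♯(X (T.perm t)) ≤ ♯(T.graded t) := by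
  obtain ⟨S, rfl, hS⟩ := C.exists_coversHalf hz
  have hratio : 0 < keptRatio 1 r s / 2 := half_pos (C.keptRatio_pos s)
  have hD (t) (ht : t ∈ S.rest) : nbhd G (S.level s) ∩ S.part t ⊆ X t :=
    Set.inter_subset_right.trans (S.part_subset t ht)
  obtain ⟨e, he, Z, B, hB, hZ⟩ := exists_isGradedBy_gt (div_nonneg C.lam_nonneg hratio.le) hμ
    (fun t ht => cast_ncard_pos.1
      ((mul_pos hratio (S.ncard_block_pos C ht)).trans_le (hS.mul_ncard_le ht)))
    (fun t _ => covers_iff.2 Set.inter_subset_left) fun t ht =>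
      (C.linkedLE _ (S.index_mem s le_rfl) t (S.rest_subset ht) (S.index_lt t ht s le_rfl)).sub
        C.lam_nonneg hratio (S.level_subset s le_rfl) (hD t ht) (hS.mul_ncard_le ht)
  let T : GradedGrowth G x₀ z X J₀ r s :=
    { S with
      perm := e
      perm_eq := he
      grader := Z
      graded := B
      graded_subset := fun t ht => (hB t ht).1.trans Set.inter_subset_right
      isGradedBy := hZ }
  refine ⟨T, rfl, fun t ht => ?_⟩
  rw [div_mul_eq_mul_div, div_le_iff₀' (by positivity)]
  exact (hS.mul_ncard_le (T.perm_mem ht)).trans (hB t ht).2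

theorem GrowthSetup.exists_isGradedBy_lt [Finite V]
    (C : GrowthSetup G x₀ X W₀ J₀ r b (r * k) Λ κ τ ν lam) (hz : z ∈ X x₀)
    (hlink : ∀ q ∈ J₀, ∀ t ∈ J₀, q ≠ t → LinkedLE G lam (X q) (X t))
    (hμ : lam / (keptRatio κ r b / (2 * r)) * 4 ^ k ≤ 1) :
    ∃ S : GrowthState G x₀ z X W₀ J₀ κ r b, ∃ J ⊆ S.rest, J.card = k ∧ ∃ Z B : ι → Set V,
      IsGradedBy G (· < ·) (S.level b) J Z B ∧
      (∀ t ∈ J, B t ⊆ S.part t ∧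
        keptRatio κ r b / (2 * r) * ♯(X t) ≤ 8 * k * Λ * 4 ^ k * ♯(B t)) ∧
      ∀ q ∈ J, ∀ t ∈ J, q ≠ t →
        LinkedLE G (4 ^ k * (lam / (keptRatio κ r b / (2 * r)))) (B q) (B t) := by
  obtain ⟨S, hScard, hS⟩ := C.exists_coversHalf hz
  have hr : (0 : ℝ) < r := zero_lt_one.trans_le C.one_le_r
  have hratio : 0 < keptRatio κ r b / (2 * r) := div_pos (C.keptRatio_pos b) (by positivity)
  obtain ⟨d, J, hJ, rfl, D, hD⟩ := exists_hasDegreeScale (J := S.rest) (m := k)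
    (D := fun t => nbhd G (S.level b) ∩ S.part t) C.r_ne_zero C.card_le
    (fun t _ => covers_iff.2 Set.inter_subset_left) hScard.ge
  have hDpart (t) (ht : t ∈ J) : D t ⊆ S.part t := (hD t ht).1.trans Set.inter_subset_right
  have hDX (t) (ht : t ∈ J) : D t ⊆ X t := (hDpart t ht).trans (S.part_subset_block C (hJ ht))
  have hDcard (t) (ht : t ∈ J) : keptRatio κ r b / (2 * r) * ♯(X t) ≤ ♯(D t) := by
    rw [div_mul_eq_mul_div, div_le_iff₀ (by positivity)]
    linarith [hS.mul_ncard_le (hJ ht), (hD t ht).2.1]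
  have hJ₀ (t) (ht : t ∈ J) : t ∈ J₀ := S.rest_subset (hJ ht)
  obtain ⟨Z, B, hZ, hBcard, hB, hBlink⟩ := PurePairs.exists_isGradedBy_lt
    (div_nonneg C.lam_nonneg hratio.le) C.one_le_Λ (div_nonneg C.lam_nonneg hratio.le) hμ
    subset_rfl (fun t ht => (hD t ht).2.2)
    (fun t ht => cast_ncard_pos.1
      ((mul_pos hratio (S.ncard_block_pos C (hJ ht))).trans_le (hDcard t ht)))
    (fun t ht => (C.linkedLE _ (S.index_mem b le_rfl) t (hJ₀ t ht)
      (S.index_lt t (hJ ht) b le_rfl)).sub C.lam_nonneg hratio (S.level_subset b le_rfl)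
        (hDX t ht) (hDcard t ht))
    fun q hq t ht hqt => (hlink q (hJ₀ q hq) t (hJ₀ t ht) hqt).sub C.lam_nonneg hratio
      (hDX q hq) (hDX t ht) (hDcard t ht)
  exact ⟨S, J, hJ, rfl, Z, B, hZ, fun t ht => ⟨(hB t ht).1.trans (hDpart t ht),
    (hDcard t ht).trans (hBcard t ht)⟩, hBlink⟩

theorem GrowthSetup.exists_isCleanFamily [Finite V] {m : ℕ}
    (C : GrowthSetup G x₀ X W₀ J₀ r s (r * (m + 1)) Λ κ τ ν lam) (hz : z ∈ X x₀) (hγ : 0 < γ)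
    (hγ8 : γ ≤ 1 / 8) (hmγ : (m + 1) * γ ≤ 1 / 2)
    (hνγ : ν / (keptRatio κ r (s + 1) / (16 * r * (m + 1) * Λ)) ≤ γ)
    (hnd : ∀ q ∈ J₀, ∀ t ∈ J₀, q ≠ t → NonDivergentPair G ν (X q) (X t)) :
    ∃ S : GrowthState G x₀ z X W₀ J₀ κ r (s + 1), S.rest.card = m ∧
      S.level (s + 1) ⊆ W₀ (S.index (s + 1)) ∧ ∃ P : ι → Set V,
        P (S.index (s + 1)) ⊆ S.level (s + 1) ∧ (P (S.index (s + 1))).Nonempty ∧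
        IsCleanFamily G γ (insert (S.index (s + 1)) S.rest) P ∧
        ∀ t ∈ S.rest, P t ⊆ S.part t ∧ keptRatio κ r (s + 1) / 2 * ♯(X t) ≤ ♯(P t) := by
  obtain ⟨S₀, hS₀card, hS₀⟩ := C.exists_coversHalf hz
  obtain ⟨S, hScard, hlevelW, hlevel⟩ :=
    S₀.exists_push_of_half_le C le_rfl subset_rfl hS₀ (k := m) hS₀card.ge
  set q := S.index (s + 1)
  have hq : q ∈ J₀ := S.index_mem_of_pos (Nat.le_add_left 1 s) le_rfl
  have hlt (t) (ht : t ∈ S.rest) : q < t := S.index_lt t ht _ le_rfl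
  have hden : 1 ≤ 16 * r * (m + 1) * Λ :=
    one_le_mul_of_one_le_of_one_le (one_le_mul_of_one_le_of_one_le
      (by linarith [C.one_le_r]) (by simp)) C.one_le_Λ
  have hκpos := C.keptRatio_pos (s + 1)
  have hR : insert q S.rest ⊆ J₀ := Finset.insert_subset hq S.rest_subset
  obtain ⟨P, hPq, hPne, hP, hclean⟩ := exists_isCleanFamily_insert (q := q) (R := S.rest)
    (N := S.level (s + 1)) (Y := S.part) hγ hγ8 (fun h => (hlt q h).false) (by rwa [hScard])
    (div_pos hκpos (zero_lt_one.trans_le hden)) C.ν_nonneg hνγ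
    (fun t ht => C.nonempty t (hR ht)) (fun u hu t ht => hnd u (hR hu) t (hR ht))
    ⟨S.level_subset _ le_rfl, by
      rw [div_mul_eq_mul_div, div_le_iff₀' (by positivity)]
      exact (mul_le_mul_of_nonneg_right (keptRatio_anti C.κ_pos.le s.le_succ)
        (by positivity)).trans hlevel⟩
    fun t ht => ⟨S.part_subset_block C ht, (mul_le_mul_of_nonneg_right
      (div_le_self hκpos.le hden) (by positivity)).trans (S.le_part t ht)⟩
  exact ⟨S, hScard, hlevelW, P, hPq, hPne, hclean, fun t ht =>
    ⟨(hP t ht).1, by linarith [S.le_part t ht, (hP t ht).2]⟩⟩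

namespace GradedGrowth
variable [Finite V] (T : GradedGrowth G x₀ z X J₀ r s)

theorem exists_descentFrame_of_growth (hs : 1 ≤ s)
    (S : GrowthState G x₀ z (X ∘ T.perm) T.graded T.rest κ r (s + 1)) {P : ι → Set V}
    (hlevel : S.level (s + 1) ⊆ T.graded (S.index (s + 1)))
    (hPlevel : P (S.index (s + 1)) ⊆ S.level (s + 1)) (hne : (P (S.index (s + 1))).Nonempty)
    (hP : ∀ t ∈ S.rest, P t ⊆ S.part t) (hcard : (s + 1) * s * k ≤ S.rest.card) :
    ∃ D : DescentFrame T κ, D.index = S.index ∧ D.block = P ∧ D.rest ⊆ S.rest ∧ D.rest.card = k ∧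
      D.path (s + 1) ∈ P (S.index (s + 1)) ∧
      ∀ t ∈ D.rest, ♯(P t) ≤ (s + 1) * s * ♯(D.coveredPart t) := by
  obtain ⟨x, hx⟩ := hne
  obtain ⟨p, rfl, hp, hadj⟩ := exists_level_path S.isLevelSeq.covers (hPlevel hx)
  have hp0 : p 0 = z := by simpa [S.level_zero] using hp 0 (Nat.zero_le _)
  have hgrader (t) (ht : t ∈ S.rest) := T.isGradedBy t (S.rest_subset ht)
  obtain ⟨i, hi, j, hj, R, hR, hRcard, hle⟩ := exists_common_descent (p := p) (P := P)
    hs (by rw [T.level_zero, hp0]) T.isLevelSeq.covers (fun t ht => (hgrader t ht).1)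
    (fun t ht => (hgrader t ht).2.1.mono subset_rfl ((hP t ht).trans (S.part_subset t ht))) hcard
  let D : DescentFrame T κ :=
    { S.restrict R hR with
      level_last_subset := hlevel
      path := p
      path_mem := hp
      path_adj := hadj
      block := P
      block_index_subset := hPlevel
      block_subset := fun t ht => hP t (hR ht)
      exit := i
      exit_le := hi
      entry := j
      entry_mem := hj }
  exact ⟨D, rfl, rfl, hR, hRcard, hx, hle⟩

theorem exists_descentFrame (hs : 1 ≤ s) {m : ℕ} (hm : m = (s + 1) * s * k)
    (C : GrowthSetup G x₀ (X ∘ T.perm) T.graded T.rest r s (r * (m + 1)) Λ κ τ ν lam)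
    (hz : z ∈ X x₀) (hγ : 0 < γ) (hγ8 : γ ≤ 1 / 8) (hmγ : (m + 1) * γ ≤ 1 / 2)
    (hνγ : ν / (keptRatio κ r (s + 1) / (16 * r * (m + 1) * Λ)) ≤ γ)
    (hnd : ∀ q ∈ T.rest, ∀ t ∈ T.rest, q ≠ t →
      NonDivergentPair G ν (X (T.perm q)) (X (T.perm t))) :
    ∃ D : DescentFrame T κ, D.rest.card = k ∧ D.path (s + 1) ∈ D.block (D.index (s + 1)) ∧
      IsCleanFamily G γ (insert (D.index (s + 1)) D.rest) D.block ∧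
      ∀ t ∈ D.rest, keptRatio κ r (s + 1) / 2 * ♯(X (T.perm t)) ≤ ♯(D.block t) ∧
        ♯(D.block t) ≤ (s + 1) * s * ♯(D.coveredPart t) := by
  have hz' : z ∈ (X ∘ T.perm) x₀ := by rwa [Function.comp_apply, T.perm_root]
  obtain ⟨S, hScard, hlevel, P, hPlevel, hPne, hclean, hP⟩ :=
    C.exists_isCleanFamily hz' hγ hγ8 hmγ hνγ hnd
  obtain ⟨D, hindex, hblock, hrest, hcard, hpath, hcovered⟩ := T.exists_descentFrame_of_growth hs S
    hlevel hPlevel hPne (fun t ht => (hP t ht).1) (hScard.trans hm).ge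
  refine ⟨D, hcard, by rwa [hblock, hindex], ?_, fun t ht => ⟨?_, ?_⟩⟩
  · rw [hblock, hindex]
    have hsub := Finset.insert_subset_insert (S.index (s + 1)) hrest
    exact fun q hq t ht => hclean q (hsub hq) t (hsub ht)
  · rw [hblock]
    exact (hP t (hrest ht)).2
  · rw [hblock]
    exact hcovered t ht

end GradedGrowth
end Stages

section Parameters
open Filter Topology

/-- The number of blocks that a descent frame must keep so that up to `ℓ` levels can be grown from
it and `K` blocks graded by the last one. -/
def frameLength (r ℓ K : ℕ) : ℕ := growthLength r (r * K) ℓ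

/-- The number of blocks from which a descent frame is selected: a factor `(s + 1) * s` is lost by
fixing the exit and entry levels of the descent. -/
def cleanLength (r s ℓ K : ℕ) : ℕ := (s + 1) * s * frameLength r ℓ K

/-- The number of blocks graded by the last level of the first growth. -/
def gradedLength (r s ℓ K : ℕ) : ℕ := growthLength r (r * (cleanLength r s ℓ K + 1)) s

/-- The number of blocks at the start, not counting the root block. -/
def initialLength (r s ℓ K : ℕ) : ℕ := growthLength r (gradedLength r s ℓ K) s

/-- The proportion of each block kept by the first growth and the grading after it. -/
def gradedRatio (r s ℓ K : ℕ) : ℝ := keptRatio 1 r s / 2 / 4 ^ gradedLength r s ℓ K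

/-- The proportion of each block that belongs to the blocks of the descent frame. -/
def frameRatio (r s ℓ K : ℕ) : ℝ := keptRatio (gradedRatio r s ℓ K) r (s + 1) / 2

/-- The proportion of each block of a descent frame covered by the descent. -/
def coveredRatio (s : ℕ) : ℝ := 1 / ((s + 1) * s)

/-- The proportion of each block of a descent frame kept by the growth of `b` levels and the choice
of a degree scale. -/
def outputRatio (r s b : ℕ) : ℝ := keptRatio (coveredRatio s) r b / (2 * r)

section Ratios
variable {r s ℓ K b : ℕ}

lemma coveredRatio_pos (hs : s ≠ 0) : 0 < coveredRatio s := by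
  unfold coveredRatio
  positivity

lemma coveredRatio_le_one (hs : s ≠ 0) : coveredRatio s ≤ 1 :=
  (div_le_one (by positivity)).2 (by exact_mod_cast Nat.mul_pos s.succ_pos (Nat.pos_of_ne_zero hs))

variable (hr : r ≠ 0)
include hr

lemma gradedRatio_pos : 0 < gradedRatio r s ℓ K := by
  have := keptRatio_pos (i := s) one_pos hr
  unfold gradedRatio
  positivity

lemma gradedRatio_le_one : gradedRatio r s ℓ K ≤ 1 := by
  have hκ := keptRatio_pos (i := s) one_pos hr
  have hκ1 := keptRatio_anti (r := r) zero_le_one s.zero_le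
  rw [keptRatio_zero] at hκ1
  exact (div_le_self (half_pos hκ).le (one_le_pow₀ (by norm_num))).trans (by linarith)

lemma frameRatio_pos : 0 < frameRatio r s ℓ K := half_pos (keptRatio_pos (gradedRatio_pos hr) hr)

lemma outputRatio_pos (hs : s ≠ 0) : 0 < outputRatio r s b :=
  div_pos (keptRatio_pos (coveredRatio_pos hs) hr) (by positivity)

end Ratios

/-- The linkage `lam` is small enough for all stages of the construction, and for the resulting
blockade to have linkage at most `lam'`. -/
structure SmallLinkage (r s ℓ K : ℕ) (lam lam' : ℝ) : Prop where
  pos : 0 < lam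
  mul_le_initial : 8 * r * (2 * lam) ≤ keptRatio 1 r s
  mul_le_graded : 8 * r * (2 * lam) ≤ keptRatio (gradedRatio r s ℓ K) r s
  mul_le_covered : ∀ b ∈ Finset.Icc s ℓ,
    8 * r * (2 * lam / frameRatio r s ℓ K) ≤ keptRatio (coveredRatio s) r b
  grading_le : 2 * lam / (keptRatio 1 r s / 2) * 4 ^ gradedLength r s ℓ K ≤ 1
  output_le : ∀ b ∈ Finset.Icc s ℓ,
    2 * lam / frameRatio r s ℓ K / outputRatio r s b * 4 ^ K ≤ min 1 lam'

theorem exists_smallLinkage {r s : ℕ} (ℓ K : ℕ) {lam' : ℝ} (hr : r ≠ 0) (hs : s ≠ 0)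
    (hlam' : 0 < lam') : ∃ lam, SmallLinkage r s ℓ K lam lam' := by
  have hsmall (f : ℝ → ℝ) (hf : Continuous f) (hf0 : f 0 = 0) {x : ℝ} (hx : 0 < x) :
      ∀ᶠ lam in 𝓝[>] 0, f lam ≤ x :=
    ((hf.tendsto' 0 0 hf0).mono_left nhdsWithin_le_nhds).eventually_le_const hx
  have hev : ∀ᶠ lam in 𝓝[>] 0, SmallLinkage r s ℓ K lam lam' := by
    filter_upwards [self_mem_nhdsWithin,
      hsmall (fun lam => 8 * r * (2 * lam)) (by fun_prop) (by simp) (keptRatio_pos one_pos hr),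
      hsmall (fun lam => 8 * r * (2 * lam)) (by fun_prop) (by simp)
        (keptRatio_pos (gradedRatio_pos hr) hr),
      (eventually_all_finset _).2 fun b _ =>
        hsmall (fun lam => 8 * r * (2 * lam / frameRatio r s ℓ K)) (by fun_prop) (by simp)
          (keptRatio_pos (coveredRatio_pos hs) hr),
      hsmall (fun lam => 2 * lam / (keptRatio 1 r s / 2) * 4 ^ gradedLength r s ℓ K)
        (by fun_prop) (by simp) one_pos,
      (eventually_all_finset _).2 fun b _ =>
        hsmall (fun lam => 2 * lam / frameRatio r s ℓ K / outputRatio r s b * 4 ^ K)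
          (by fun_prop) (by simp) (lt_min one_pos hlam')]
      with lam h0 h1 h2 h3 h4 h5 using ⟨h0, h1, h2, h3, h4, h5⟩
  exact hev.exists

/-- The numerical conditions of the construction in a graph with `n` vertices: `γ` is the
non-divergence of the initial blocks, `γ'` that of the blocks of the descent frame. -/
structure BiGradingParams (n : ℝ) (r s ℓ K : ℕ) (Λ γ γ' lam lam' : ℝ) : Prop
    extends SmallLinkage r s ℓ K lam lam' where
  γ_pos : 0 < γ
  γ_le : γ ≤ 1 / 8
  mul_γ_le : (initialLength r s ℓ K + 1) * γ ≤ 1 / 2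
  γ'_pos : 0 < γ'
  γ'_le : γ' ≤ 1 / 8
  mul_γ'_le : (cleanLength r s ℓ K + 1) * γ' ≤ 1 / 2
  γ_div_le : 2 * γ / (keptRatio (gradedRatio r s ℓ K) r (s + 1) /
    (16 * r * (cleanLength r s ℓ K + 1) * Λ)) ≤ γ'
  initialGrowth : GrowthParams n r s (gradedLength r s ℓ K) Λ 1 (1 / (16 * γ)) (2 * γ) (2 * lam)
  gradedGrowth : GrowthParams n r s (r * (cleanLength r s ℓ K + 1)) Λ (gradedRatio r s ℓ K)
    (1 / (16 * γ)) (2 * γ) (2 * lam)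
  coveredGrowth : ∀ b ∈ Finset.Icc s ℓ, GrowthParams n r b (r * K) Λ (coveredRatio s)
    (1 / (16 * γ')) (2 * γ') (2 * lam / frameRatio r s ℓ K)
  size_le : ∀ b ∈ Finset.Icc s ℓ,
    8 * K * 4 ^ K ≤ Λ * (1 / 2 * frameRatio r s ℓ K * outputRatio r s b)

lemma eventually_mul_rpow_le (C : ℝ) {p q : ℝ} (hpq : p < q) :
    ∀ᶠ n : ℝ in atTop, C * n ^ p ≤ n ^ q := by
  filter_upwards [(tendsto_rpow_atTop (sub_pos.2 hpq)).eventually_ge_atTop C,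
    eventually_gt_atTop 0] with n hC hn
  calc C * n ^ p ≤ n ^ (q - p) * n ^ p := by gcongr
    _ = n ^ q := by rw [← Real.rpow_add hn, sub_add_cancel]

lemma eventually_le_rpow_mul (C : ℝ) {a x : ℝ} (ha : 0 < a) (hx : 0 < x) :
    ∀ᶠ n : ℝ in atTop, C ≤ n ^ a * x :=
  ((tendsto_rpow_atTop ha).atTop_mul_const hx).eventually_ge_atTop C

lemma eventually_mul_rpow_neg_le (C : ℝ) {a x : ℝ} (ha : 0 < a) (hx : 0 < x) :
    ∀ᶠ n : ℝ in atTop, C * n ^ (-a) ≤ x := by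
  have hlim := (tendsto_rpow_neg_atTop ha).const_mul C
  rw [mul_zero] at hlim
  exact hlim.eventually_le_const hx

theorem eventually_growthParams {r b : ℕ} (K : ℕ) {κ a lam : ℝ} (hr : r ≠ 0) (hb : b ≠ 0)
    (hκ : 0 < κ) (hκ1 : κ ≤ 1) (hlam : 0 ≤ lam) (hlamκ : 8 * r * lam ≤ keptRatio κ r b)
    (ha : 5 * (r : ℝ)⁻¹ < a) (hab : 1 < b * a) :
    ∀ᶠ n : ℝ in atTop,
      GrowthParams n r b K (n ^ (r : ℝ)⁻¹) κ (1 / (16 * n ^ (-a))) (2 * n ^ (-a)) lam := by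
  have hr0 : 0 < (r : ℝ)⁻¹ := by positivity
  filter_upwards [eventually_gt_atTop 0, eventually_mul_rpow_le 2 ha,
    eventually_le_rpow_mul (64 * r * (growthLength r K b + 1) * (b + 1)) hr0 (keptRatio_pos hκ hr),
    eventually_mul_rpow_le (64 * b) (by linarith : (r : ℝ)⁻¹ < a),
    eventually_mul_rpow_le (2 * 32 ^ b) hab] with n hn hν hΛ hτ hcard
  have hna : 0 < n ^ a := Real.rpow_pos_of_pos hn a
  have hinv : 1 / (16 * n ^ (-a)) = n ^ a / 16 := by
    rw [Real.rpow_neg hn.le]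
    field_simp
  refine ⟨hr, hb, (Real.rpow_inv_natCast_pow hn.le hr).ge, hκ, hκ1, by positivity, ?_, hΛ, hlam,
    hlamκ, ?_, ?_⟩
  · rw [← Real.rpow_mul_natCast hn.le, Nat.cast_ofNat, mul_comm _ (5 : ℝ), Real.rpow_neg hn.le,
      mul_right_comm, ← div_eq_mul_inv, div_le_one hna]
    exact hν
  · rw [hinv]
    linarith
  · rw [hinv, div_div, div_pow, ← Real.rpow_mul_natCast hn.le, mul_comm a,
      lt_div_iff₀ (by positivity)]
    rw [Real.rpow_one] at hcard
    norm_num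
    nlinarith [mul_pos hn (pow_pos (by norm_num : (0 : ℝ) < 32) b)]

theorem eventually_biGradingParams {r s ℓ K : ℕ} {a a' lam lam' : ℝ}
    (hlam : SmallLinkage r s ℓ K lam lam') (hr : r ≠ 0) (hs : s ≠ 0) (hra' : 5 * (r : ℝ)⁻¹ < a')
    (hra : a' + (r : ℝ)⁻¹ < a) (hsa' : 1 < s * a') :
    ∀ᶠ n : ℝ in atTop,
      BiGradingParams n r s ℓ K (n ^ (r : ℝ)⁻¹) (n ^ (-a)) (n ^ (-a')) lam lam' := by
  have hr0 : 0 < (r : ℝ)⁻¹ := by positivity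
  have ha' : 0 < a' := by linarith
  have ha : 0 < a := by linarith
  have hra5 : 5 * (r : ℝ)⁻¹ < a := by linarith
  have hsa : 1 < s * a := hsa'.trans_le (by gcongr; linarith)
  have hlam0 : 0 ≤ 2 * lam := by linarith [hlam.pos]
  have hκ := gradedRatio_pos (s := s) (ℓ := ℓ) (K := K) hr
  have hframe := frameRatio_pos (s := s) (ℓ := ℓ) (K := K) hr
  have hcovered (b) (hb : b ∈ Finset.Icc s ℓ) :=
    eventually_growthParams (r * K) hr (b := b) (by grind) (coveredRatio_pos hs)
      (coveredRatio_le_one hs) (div_nonneg hlam0 hframe.le) (hlam.mul_le_covered b hb) hra'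
      (hsa'.trans_le (by gcongr; exact (Finset.mem_Icc.1 hb).1))
  have hsize (b) (_ : b ∈ Finset.Icc s ℓ) := eventually_le_rpow_mul (8 * K * 4 ^ K) hr0
    (mul_pos (mul_pos one_half_pos hframe) (outputRatio_pos (b := b) hr hs))
  filter_upwards [eventually_gt_atTop 0,
    eventually_mul_rpow_neg_le 1 ha (by norm_num : (0 : ℝ) < 1 / 8),
    eventually_mul_rpow_neg_le (initialLength r s ℓ K + 1) ha one_half_pos,
    eventually_mul_rpow_neg_le 1 ha' (by norm_num : (0 : ℝ) < 1 / 8),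
    eventually_mul_rpow_neg_le (cleanLength r s ℓ K + 1) ha' one_half_pos,
    eventually_mul_rpow_le (32 * r * (cleanLength r s ℓ K + 1)
      / keptRatio (gradedRatio r s ℓ K) r (s + 1)) (by linarith : -a + (r : ℝ)⁻¹ < -a'),
    eventually_growthParams _ hr hs one_pos le_rfl hlam0 hlam.mul_le_initial hra5 hsa,
    eventually_growthParams _ hr hs hκ (gradedRatio_le_one hr) hlam0 hlam.mul_le_graded hra5 hsa,
    (eventually_all_finset _).2 hcovered, (eventually_all_finset _).2 hsize]
    with n hn hγ8 hγ hγ'8 hγ' hdiv hinitial hgraded hcovered hsize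
  refine ⟨hlam, by positivity, by linarith, hγ, by positivity, by linarith, hγ', ?_, hinitial,
    hgraded, hcovered, hsize⟩
  refine le_of_eq_of_le ?_ hdiv
  rw [Real.rpow_add hn]
  field_simp
  norm_num

end Parameters

section Construction

section Frame
variable {ι : Type*} [LinearOrder ι] [Finite V] {G : SimpleGraph V} {x₀ : ι} {X : ι → Set V}
  {J₀ : Finset ι} {r s ℓ K : ℕ} {Λ γ γ' lam lam' : ℝ}

theorem exists_descentFrame (P : BiGradingParams (Nat.card V) r s ℓ K Λ γ γ' lam lam')
    (hlt : ∀ t ∈ J₀, x₀ < t) (hcard : J₀.card = initialLength r s ℓ K)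
    (hne : ∀ t ∈ insert x₀ J₀, (X t).Nonempty) (hX : IsCleanFamily G γ (insert x₀ J₀) X)
    (hlink : ∀ q ∈ insert x₀ J₀, ∀ t ∈ insert x₀ J₀, q ≠ t →
      LinkedLE G (2 * lam) (X q) (X t)) :
    ∃ (z : V) (T : GradedGrowth G x₀ z X J₀ r s) (D : DescentFrame T (gradedRatio r s ℓ K)),
      D.rest.card = frameLength r ℓ K ∧ D.path (s + 1) ∈ D.block (D.index (s + 1)) ∧
      IsCleanFamily G γ' (insert (D.index (s + 1)) D.rest) D.block ∧
      ∀ t ∈ D.rest, frameRatio r s ℓ K * ♯(X (T.perm t)) ≤ ♯(D.block t) ∧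
        coveredRatio s * ♯(D.block t) ≤ ♯(D.coveredPart t) := by
  obtain ⟨z, hz⟩ := hne x₀ (Finset.mem_insert_self _ _)
  have hmem {t} (ht : t ∈ J₀) : t ∈ insert x₀ J₀ := Finset.mem_insert_of_mem ht
  obtain ⟨T, hTcard, hT⟩ := (hX.growthSetup P.initialGrowth hlt hcard.ge
    (fun t ht => hne t (hmem ht)) (fun t _ => ⟨subset_rfl, (one_mul _).le⟩)
    fun q hq t ht hqt => hlink q hq t (hmem ht) hqt.ne).exists_gradedGrowth hz P.grading_le
  have hperm {t} (ht : t ∈ T.rest) : T.perm t ∈ J₀ := T.rest_subset (T.perm_mem ht)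
  have hperm' : ∀ t ∈ insert x₀ T.rest, T.perm t ∈ insert x₀ J₀ := by
    rw [Finset.forall_mem_insert, T.perm_root]
    exact ⟨Finset.mem_insert_self _ _, fun t ht => hmem (hperm ht)⟩
  obtain ⟨D, hDcard, hpath, hclean, hD⟩ := T.exists_descentFrame
    (Nat.one_le_iff_ne_zero.2 P.initialGrowth.b_ne_zero) rfl
    ((hX.comp T.perm.injective hperm').growthSetup P.gradedGrowth
      (fun t ht => hlt t (T.rest_subset ht)) hTcard.ge (fun t ht => hne _ (hmem (hperm ht)))
      (fun t ht => ⟨T.graded_subset_block ht, hT t ht⟩) fun q hq t ht hqt =>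
        hlink _ (hperm' q hq) _ (hmem (hperm ht)) (T.perm.injective.ne hqt.ne))
    hz P.γ'_pos P.γ'_le P.mul_γ'_le P.γ_div_le
    fun q hq t ht hqt => (hX _ (hmem (hperm hq)) _ (hmem (hperm ht)) (T.perm.injective.ne hqt)).2
  have hs0 : s ≠ 0 := P.initialGrowth.b_ne_zero
  refine ⟨z, T, D, hDcard, hpath, hclean, fun t ht => ⟨(hD t ht).1, ?_⟩⟩
  rw [coveredRatio, div_mul_eq_mul_div, one_mul, div_le_iff₀' (by positivity)]
  exact (hD t ht).2

end Frame

lemma BiGradingParams.le_sq_mul {n : ℝ} {r s ℓ K b : ℕ} {Λ γ γ' lam lam' x y z : ℝ}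
    (P : BiGradingParams n r s ℓ K Λ γ γ' lam lam') (hb : b ∈ Finset.Icc s ℓ) (hz : 0 ≤ z)
    (hxy : 1 / 2 * frameRatio r s ℓ K * x ≤ y)
    (hyz : outputRatio r s b * y ≤ 8 * K * Λ * 4 ^ K * z) : x ≤ Λ ^ 2 * z := by
  have hr := P.initialGrowth.r_ne_zero
  have houtput : 0 < outputRatio r s b := outputRatio_pos hr P.initialGrowth.b_ne_zero
  have hρ : 0 < 1 / 2 * frameRatio r s ℓ K * outputRatio r s b :=
    mul_pos (mul_pos one_half_pos (frameRatio_pos hr)) houtput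
  have hΛ := P.initialGrowth.Λ_pos
  refine le_of_mul_le_mul_left ?_ hρ
  calc 1 / 2 * frameRatio r s ℓ K * outputRatio r s b * x
      = outputRatio r s b * (1 / 2 * frameRatio r s ℓ K * x) := by ring
    _ ≤ outputRatio r s b * y := by gcongr
    _ ≤ 8 * K * 4 ^ K * (Λ * z) := hyz.trans_eq (by ring)
    _ ≤ Λ * (1 / 2 * frameRatio r s ℓ K * outputRatio r s b) * (Λ * z) :=
        mul_le_mul_of_nonneg_right (P.size_le b hb) (mul_nonneg hΛ.le hz)
    _ = _ := by ring

namespace DescentFrame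
variable {ι : Type*} [LinearOrder ι] {G : SimpleGraph V} {x₀ : ι} {z : V} {X : ι → Set V}
  {J₀ : Finset ι} {r s ℓ K b : ℕ} {Λ γ γ' lam lam' : ℝ}
  {T : GradedGrowth G x₀ z X J₀ r s} (D : DescentFrame T (gradedRatio r s ℓ K))

theorem linkedLE_block [Finite V] (hr : r ≠ 0) (hlam : 0 ≤ lam)
    (hD : ∀ t ∈ D.rest, frameRatio r s ℓ K * ♯(X (T.perm t)) ≤ ♯(D.block t))
    (hlink : ∀ q ∈ insert x₀ J₀, ∀ t ∈ insert x₀ J₀, q ≠ t → LinkedLE G lam (X q) (X t)) :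
    ∀ q ∈ insert (D.index (s + 1)) D.rest, ∀ t ∈ D.rest, q ≠ t →
      LinkedLE G (lam / frameRatio r s ℓ K) (D.block q) (D.block t) := by
  have hperm {t} (ht : t ∈ T.rest) : T.perm t ∈ insert x₀ J₀ :=
    Finset.mem_insert_of_mem (T.rest_subset (T.perm_mem ht))
  have hrest {t} (ht : t ∈ D.rest) : D.block t ⊆ X (T.perm t) :=
    (D.block_subset_graded ht).trans (T.graded_subset_block (D.rest_subset ht))
  have hroot : D.index (s + 1) ∈ T.rest := D.index_mem_of_pos (Nat.le_add_left 1 s) le_rfl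
  have hblock : ∀ q ∈ insert (D.index (s + 1)) D.rest,
      D.block q ⊆ X (T.perm q) ∧ T.perm q ∈ insert x₀ J₀ := by
    rw [Finset.forall_mem_insert]
    exact ⟨⟨D.block_index_subset.trans (D.level_subset _ le_rfl), hperm hroot⟩,
      fun t ht => ⟨hrest ht, hperm (D.rest_subset ht)⟩⟩
  exact fun q hq t ht hqt => (hlink _ (hblock q hq).2 _ (hperm (D.rest_subset ht))
    (T.perm.injective.ne hqt)).sub hlam (frameRatio_pos hr) (hblock q hq).1 (hrest ht) (hD t ht)

theorem growthSetup (P : BiGradingParams (Nat.card V) r s ℓ K Λ γ γ' lam lam')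
    (hb : b ∈ Finset.Icc s ℓ) (hcard : D.rest.card = frameLength r ℓ K)
    (hclean : IsCleanFamily G γ' (insert (D.index (s + 1)) D.rest) D.block)
    (hne : ∀ t ∈ D.rest, (D.block t).Nonempty)
    (hcovered : ∀ t ∈ D.rest, coveredRatio s * ♯(D.block t) ≤ ♯(D.coveredPart t))
    (hlink : ∀ q ∈ insert (D.index (s + 1)) D.rest, ∀ t ∈ D.rest, q ≠ t →
      LinkedLE G (2 * lam / frameRatio r s ℓ K) (D.block q) (D.block t)) :
    GrowthSetup G (D.index (s + 1)) D.block D.coveredPart D.rest r b (r * K) Λ (coveredRatio s)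
      (1 / (16 * γ')) (2 * γ') (2 * lam / frameRatio r s ℓ K) :=
  hclean.growthSetup (P.coveredGrowth b hb) (fun t ht => D.index_lt t ht _ le_rfl)
    ((growthLength_mono P.initialGrowth.r_ne_zero _ (Finset.mem_Icc.1 hb).2).trans hcard.ge) hne
    (fun t ht => ⟨Set.inter_subset_right, hcovered t ht⟩)
    fun q hq t ht hqt => hlink q hq t ht hqt.ne

end DescentFrame

section Integers
variable [Finite V] {G : SimpleGraph V} {x₀ : ℤ} {z : V} {A X : ℤ → Set V} {J₀ : Finset ℤ}
  {r s ℓ K : ℕ} {Λ γ γ' lam lam' : ℝ}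

theorem DescentFrame.exists_isBiGrading {T : GradedGrowth G x₀ z X J₀ r s}
    (D : DescentFrame T (gradedRatio r s ℓ K))
    (P : BiGradingParams (Nat.card V) r s ℓ K Λ γ γ' lam lam') (hℓ : 3 * s + 1 ≤ ℓ)
    (hcard : D.rest.card = frameLength r ℓ K)
    (hpath : D.path (s + 1) ∈ D.block (D.index (s + 1)))
    (hclean : IsCleanFamily G γ' (insert (D.index (s + 1)) D.rest) D.block)
    (hD : ∀ t ∈ D.rest, frameRatio r s ℓ K * ♯(X (T.perm t)) ≤ ♯(D.block t) ∧
      coveredRatio s * ♯(D.block t) ≤ ♯(D.coveredPart t))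
    (hA : IsBlockade (insert x₀ J₀) A)
    (hX : ∀ t ∈ insert x₀ J₀, X t ⊆ A t ∧ 1 / 2 * ♯(A t) ≤ ♯(X t))
    (hlink : ∀ q ∈ insert x₀ J₀, ∀ t ∈ insert x₀ J₀, q ≠ t → LinkedLE G (2 * lam) (X q) (X t)) :
    ∃ (L : ℕ → Set V) (a : ℕ) (M : ℕ → Set V) (b : ℕ) (J : Finset ℤ) (B : ℤ → Set V),
      IsBiGrading G L a M b J B ∧ RainbowBiLevelling (insert x₀ J₀) A L a M b J B ∧
      a + b = ℓ ∧ J.card = K ∧ LinkageLE G J B lam' ∧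
      ∀ t ∈ J, ∃ i ∈ insert x₀ J₀, ♯(A i) ≤ Λ ^ 2 * ♯(B t) := by
  have hframe : 0 < frameRatio r s ℓ K := frameRatio_pos P.initialGrowth.r_ne_zero
  have hheight := Finset.mem_Icc.1 D.height_mem
  have hb : ℓ - D.height ∈ Finset.Icc s ℓ := Finset.mem_Icc.2 (by omega)
  have hb1 : 1 ≤ ℓ - D.height := by omega
  have hperm (t) (ht : t ∈ D.rest) : T.perm t ∈ insert x₀ J₀ :=
    Finset.mem_insert_of_mem (T.rest_subset (T.perm_mem (D.rest_subset ht)))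
  have hApos (t) (ht : t ∈ D.rest) : 0 < ♯(A (T.perm t)) :=
    cast_ncard_pos.2 (hA.1 _ (hperm t ht))
  have hsize (t) (ht : t ∈ D.rest) :
      1 / 2 * frameRatio r s ℓ K * ♯(A (T.perm t)) ≤ ♯(D.block t) := by
    nlinarith [(hX _ (hperm t ht)).2, (hD t ht).1]
  have hlink' := D.linkedLE_block P.initialGrowth.r_ne_zero P.initialGrowth.lam_nonneg
    (fun t ht => (hD t ht).1) hlink
  have hne (t) (ht : t ∈ D.rest) : (D.block t).Nonempty := cast_ncard_pos.1 <|
    (mul_pos (mul_pos one_half_pos hframe) (hApos t ht)).trans_le (hsize t ht)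
  have C := D.growthSetup P hb hcard hclean hne (fun t ht => (hD t ht).2) hlink'
  obtain ⟨S, J, hJ, hJcard, Z, B, hZ, hB, hBlink⟩ := C.exists_isGradedBy_lt hpath
    (fun q hq => hlink' q (Finset.mem_insert_of_mem hq))
    ((P.output_le _ hb).trans (min_le_left _ _))
  have hJD : J ⊆ D.rest := hJ.trans S.rest_subset
  have hAB (t) (ht : t ∈ J) : ♯(A (T.perm t)) ≤ Λ ^ 2 * ♯(B t) :=
    P.le_sq_mul hb (by positivity) (hsize t (hJD ht)) (hB t ht).2
  have hXA (t) (ht : t ∈ insert x₀ J₀) : X t ⊆ A t := (hX t ht).1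
  refine ⟨D.leftLevel J, D.height, S.level, ℓ - D.height, J, B,
    D.isBiGrading S hA hXA hb1 hJ (fun t ht => nonempty_of_mul_le (hApos t (hJD ht)) (hAB t ht))
      (fun t ht => (hB t ht).1) hZ,
    D.rainbowBiLevelling S hXA hJ fun t ht => (hB t ht).1.trans (S.part_subset t (hJ ht)),
    by omega, hJcard, fun q hq t ht hqt => (hBlink q hq t ht hqt).mono ?_ subset_rfl,
    fun t ht => ⟨T.perm t, hperm t (hJD ht), hAB t ht⟩⟩
  rw [mul_comm]
  exact (P.output_le _ hb).trans (min_le_right _ _)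

theorem exists_isBiGrading {I : Finset ℤ}
    (P : BiGradingParams (Nat.card V) r s ℓ K Λ γ γ' lam lam') (hℓ : 3 * s + 1 ≤ ℓ)
    (hA : IsBlockade I A) (hcard : I.card = initialLength r s ℓ K + 1)
    (hnd : ∀ q ∈ I, ∀ t ∈ I, q ≠ t → NonDivergentPair G γ (A q) (A t))
    (hlink : LinkageLE G I A lam) :
    ∃ (L : ℕ → Set V) (a : ℕ) (M : ℕ → Set V) (b : ℕ) (J : Finset ℤ) (B : ℤ → Set V),
      IsBiGrading G L a M b J B ∧ RainbowBiLevelling I A L a M b J B ∧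
      a + b = ℓ ∧ J.card = K ∧ LinkageLE G J B lam' ∧
      ∀ t ∈ J, ∃ i ∈ I, ♯(A i) ≤ Λ ^ 2 * ♯(B t) := by
  obtain ⟨X, hX, hclean⟩ := exists_isCleanFamily (Y := A) P.γ_pos P.γ_le
    (by rw [hcard, Nat.cast_add_one]; exact P.mul_γ_le) one_pos P.γ_pos.le (div_one γ).le hA.1 hnd
    fun t _ => ⟨subset_rfl, (one_mul _).le⟩
  have hXne (t) (ht : t ∈ I) : (X t).Nonempty :=
    cast_ncard_pos.1 <|
      (mul_pos one_half_pos (cast_ncard_pos.2 (hA.1 t ht))).trans_le (hX t ht).2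
  have hXlink (q) (hq : q ∈ I) (t) (ht : t ∈ I) (hqt : q ≠ t) :
      LinkedLE G (2 * lam) (X q) (X t) := by
    have hsub : LinkedLE G (lam / (1 / 2)) (X q) (X t) := LinkedLE.sub (hlink q hq t ht hqt)
      P.pos.le one_half_pos (hX q hq).1 (hX t ht).1 (hX t ht).2
    rwa [div_div_eq_mul_div, div_one, mul_comm] at hsub
  obtain ⟨x₀, hx₀, hmin⟩ := I.exists_minimal (Finset.card_pos.1 (by omega))
  obtain ⟨J₀, hx₀J₀, rfl⟩ : ∃ J₀, x₀ ∉ J₀ ∧ insert x₀ J₀ = I :=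
    ⟨I.erase x₀, I.notMem_erase x₀, I.insert_erase hx₀⟩
  obtain ⟨z, T, D, hDcard, hpath, hDclean, hD⟩ := exists_descentFrame P
    (fun t ht => lt_of_not_ge fun h => hx₀J₀ <|
      (hmin (Finset.mem_insert_of_mem ht) h).antisymm h ▸ ht)
    (by simpa [hx₀J₀] using hcard) hXne hclean hXlink
  exact D.exists_isBiGrading P hℓ hDcard hpath hDclean hD hA hX hXlink

end Integers
end Construction

section Conclusion

lemma nonDivergentPair_of_not_divergent {G : SimpleGraph V} {I : Finset ℤ} {A : ℤ → Set V} {γ : ℝ}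
    (h : ¬ Divergent G I A γ γ) :
    ∀ i ∈ I, ∀ j ∈ I, i ≠ j → NonDivergentPair G γ (A i) (A j) :=
  fun i hi j hj hij S hS hcard => lt_of_not_ge fun hge =>
    h ⟨i, hi, j, hj, hij, S, hS, A j \ nbhd G S, Set.sdiff_subset, hcard, hge,
      anticomplete_sdiff_nbhd S (A j)⟩

lemma rpow_one_sub_le_of_le_sq_mul {n e σ σ' x y : ℝ} (hn : 1 ≤ n) (he : 2 * e ≤ σ' - σ)
    (hx : n ^ (1 - σ) ≤ x) (hxy : x ≤ (n ^ e) ^ 2 * y) : n ^ (1 - σ') ≤ y := by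
  have hn0 : 0 < n := one_pos.trans_le hn
  refine le_of_mul_le_mul_left ?_ (pow_pos (Real.rpow_pos_of_pos hn0 e) 2)
  calc (n ^ e) ^ 2 * n ^ (1 - σ') = n ^ (2 * e + (1 - σ')) := by
        rw [← Real.rpow_mul_natCast hn0.le, ← Real.rpow_add hn0, Nat.cast_ofNat, mul_comm e]
    _ ≤ n ^ (1 - σ) := Real.rpow_le_rpow_of_exponent_le hn (by linarith)
    _ ≤ (n ^ e) ^ 2 * y := hx.trans hxy

lemma exists_exponents {s : ℕ} {c ε : ℝ} (hs : s ≠ 0) (hc : 1 / (s : ℝ) < c) (hε : 0 < ε) :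
    ∃ (a : ℝ) (r : ℕ), r ≠ 0 ∧ 5 * (r : ℝ)⁻¹ < a ∧ a + (r : ℝ)⁻¹ < c ∧ 2 * (r : ℝ)⁻¹ ≤ ε ∧
      1 < s * a := by
  obtain ⟨a, hsa, hac⟩ := exists_between hc
  have ha : 0 < a / 5 := by linarith [show (0 : ℝ) ≤ 1 / s by positivity]
  obtain ⟨m, hm⟩ := exists_nat_one_div_lt (lt_min (lt_min ha (sub_pos.2 hac)) (half_pos hε))
  rw [one_div, ← Nat.cast_add_one, lt_min_iff, lt_min_iff] at hm
  exact ⟨a, m + 1, m.succ_ne_zero, by linarith, by linarith, by linarith,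
    (div_lt_iff₀' (by positivity)).1 hsa⟩

end Conclusion

/-- obtaining a rainbow bi-grading of height `ℓ` whose blockade has
prescribed length, small linkage and small shrinkage. -/
theorem statement_18 (ℓ : ℕ) (hℓ3 : 1 ≤ (ℓ - 1) / 3)
    (c σ σ' : ℝ) (hc : 0 < c) (hσ0 : 0 < σ) (hσσ' : σ < σ')
    (hcℓ : 1 / ((((ℓ - 1) / 3 : ℕ)) : ℝ) < c)
    (K' : ℕ) (hK' : 0 < K') (lam' : ℝ) (hlam' : 0 < lam') :
    ∃ (lam : ℝ) (N K : ℕ), 0 < lam ∧ 0 < N ∧ 0 < K ∧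
      ∀ {V : Type} [Fintype V] (G : SimpleGraph V), N ≤ Fintype.card V →
        ∀ (I : Finset ℤ) (A : ℤ → Set V), IsBlockade I A → I.card = K →
          LinkageLE G I A lam → ShrinkageLE I A σ →
          ¬ Divergent G I A ((Fintype.card V : ℝ) ^ (-c))
              ((Fintype.card V : ℝ) ^ (-c)) →
          ∃ (L : ℕ → Set V) (a : ℕ) (M : ℕ → Set V) (b : ℕ)
            (J : Finset ℤ) (B : ℤ → Set V),
            IsBiGrading G L a M b J B ∧ RainbowBiLevelling I A L a M b J B ∧
            a + b = ℓ ∧ J.card = K' ∧ LinkageLE G J B lam' ∧ ShrinkageLE J B σ' := by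
  have hs : (ℓ - 1) / 3 ≠ 0 := by omega
  obtain ⟨a, r, hr, hra, hac, hrσ, hsa⟩ := exists_exponents hs hcℓ (sub_pos.2 hσσ')
  obtain ⟨lam, hlam⟩ := exists_smallLinkage ℓ K' hr hs hlam'
  obtain ⟨N, hN⟩ := Filter.eventually_atTop.1 <| tendsto_natCast_atTop_atTop.eventually <|
    eventually_biGradingParams hlam hr hs hra hac hsa
  refine ⟨lam, N + 1, initialLength r ((ℓ - 1) / 3) ℓ K' + 1, hlam.pos, N.succ_pos, Nat.succ_pos _,
    fun {V} _ G hcard I A hA hI hlink hshrink hdiv => ?_⟩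
  have P := hN (Fintype.card V) (by omega)
  rw [← Nat.card_eq_fintype_card] at P hdiv
  obtain ⟨L, k, M, m, J, B, hgrading, hrainbow, hheight, hJ, hBlink, hsize⟩ :=
    exists_isBiGrading P (by omega) hA hI (nonDivergentPair_of_not_divergent hdiv) hlink
  refine ⟨L, k, M, m, J, B, hgrading, hrainbow, hheight, hJ, hBlink, fun t ht => ?_⟩
  obtain ⟨i, hi, hle⟩ := hsize t ht
  rw [Nat.card_eq_fintype_card] at hle
  exact rpow_one_sub_le_of_le_sq_mul (Nat.one_le_cast.2 (by omega)) hrσ (hshrink i hi) hle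

end PurePairs
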